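/- arXiv:1905.11491 — 2 statements merged into one kernel-verified Lean document; each statement's English description precedes it below -/
import Mathlib

section
/- Let q > 1 and let u be a solution to Δ²u + u^{−q} = 0 in ℝ³ with u > 0, and assume β := (1/8π)∫_{ℝ³} u(x)^{−q} dx < +∞. Then there exist a rotation R ∈ O(3), a point x₀ ∈ ℝ³, two disjoint (possibly empty) subsets I₁, I₂ of {1,2,3}, real numbers a_i > 0 for i ∈ I₁, real numbers b_i with |b_i| < β for i ∈ I₂, and c > 0, such that the function ũ(x) := u(Rx + x₀) satisfies ũ(x) = (β + o(1))|x| + Σ_{i∈I₁} a_i x_i² + Σ_{i∈I₂} b_i x_i + c, where o(1) → 0 as |x| → ∞. -/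
open MeasureTheory Filter Topology Real

/-- The Laplacian of a function on ℝ³. -/
noncomputable def laplacian (u : EuclideanSpace ℝ (Fin 3) → ℝ) (x : EuclideanSpace ℝ (Fin 3)) : ℝ :=
  ∑ i : Fin 3, iteratedFDeriv ℝ 2 u x ![EuclideanSpace.single i 1, EuclideanSpace.single i 1]


abbrev E3 := EuclideanSpace ℝ (Fin 3)

noncomputable def ee (i : Fin 3) : E3 := EuclideanSpace.single i 1

lemma lap_def (g : E3 → ℝ) (x : E3) :
    laplacian g x = ∑ i : Fin 3, fderiv ℝ (fderiv ℝ g) x (ee i) (ee i) := by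
  unfold laplacian
  refine Finset.sum_congr rfl fun i _ => ?_
  rw [iteratedFDeriv_two_apply]
  rfl

lemma contDiff_fderiv_apply {n : WithTop ℕ∞} {g : E3 → ℝ} (hg : ContDiff ℝ (n + 1) g) (e : E3) :
    ContDiff ℝ n (fun x => fderiv ℝ g x e) :=
  (hg.fderiv_right le_rfl).clm_apply contDiff_const

lemma lap_eq {g : E3 → ℝ} (hg : ContDiff ℝ 2 g) (x : E3) :
    laplacian g x = ∑ i : Fin 3, fderiv ℝ (fun y => fderiv ℝ g y (ee i)) x (ee i) := by
  rw [lap_def]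
  refine Finset.sum_congr rfl fun i _ => ?_
  have h1 : ContDiff ℝ 1 (fderiv ℝ g) := hg.fderiv_right (by norm_num)
  have h2 : DifferentiableAt ℝ (fderiv ℝ g) x := (h1.differentiable (by norm_num)) x
  rw [fderiv_clm_apply h2 (differentiableAt_const _)]
  simp

lemma contDiff_lap {n : WithTop ℕ∞} {g : E3 → ℝ} (hg : ContDiff ℝ (n + 2) g) :
    ContDiff ℝ n (laplacian g) := by
  have : laplacian g = fun x => ∑ i : Fin 3, fderiv ℝ (fderiv ℝ g) x (ee i) (ee i) := by
    funext x; exact lap_def g x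
  rw [this]
  refine ContDiff.sum fun i _ => ?_
  have h1 : ContDiff ℝ (n + 1) (fderiv ℝ g) := hg.fderiv_right (by rw [add_assoc]; norm_num)
  have h2 : ContDiff ℝ n (fderiv ℝ (fderiv ℝ g)) := h1.fderiv_right le_rfl
  exact (h2.clm_apply contDiff_const).clm_apply contDiff_const

lemma compact_lap {g : E3 → ℝ} (hc : HasCompactSupport g) : HasCompactSupport (laplacian g) := by
  have h2 : HasCompactSupport (fderiv ℝ (fderiv ℝ g)) := (hc.fderiv ℝ).fderiv ℝ
  refine h2.mono' ?_
  intro x hx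
  apply subset_tsupport
  intro h0
  apply hx
  rw [lap_def]
  simp [h0]

lemma ibp1 {a φ : E3 → ℝ} (ha : ContDiff ℝ 1 a) (hφ : ContDiff ℝ 1 φ) (hc : HasCompactSupport φ)
    (e : E3) : ∫ x, a x * fderiv ℝ φ x e = - ∫ x, fderiv ℝ a x e * φ x := by
  have da : Continuous (fun x => fderiv ℝ a x e) := (contDiff_fderiv_apply (n := 0) (by simpa using ha) e).continuous
  have dφ : Continuous (fun x => fderiv ℝ φ x e) := (contDiff_fderiv_apply (n := 0) (by simpa using hφ) e).continuous
  have cφ : HasCompactSupport (fun x => fderiv ℝ φ x e) := hc.fderiv_apply ℝ e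
  apply integral_mul_fderiv_eq_neg_fderiv_mul_of_integrable
  · exact (da.mul hφ.continuous).integrable_of_hasCompactSupport (hc.mul_left)
  · exact (ha.continuous.mul dφ).integrable_of_hasCompactSupport (cφ.mul_left)
  · exact (ha.continuous.mul hφ.continuous).integrable_of_hasCompactSupport (hc.mul_left)
  · intro x _; exact (ha.differentiable (by norm_num)) x
  · intro x _; exact (hφ.differentiable (by norm_num)) x

lemma ibp2 {a φ : E3 → ℝ} (ha : ContDiff ℝ 2 a) (hφ : ContDiff ℝ 2 φ) (hc : HasCompactSupport φ) :
    ∫ x, a x * laplacian φ x = ∫ x, laplacian a x * φ x := by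
  have A : ∀ i, ContDiff ℝ 1 (fun y => fderiv ℝ a y (ee i)) := fun i =>
    contDiff_fderiv_apply (n := 1) (by norm_num; exact ha) _
  have P : ∀ i, ContDiff ℝ 1 (fun y => fderiv ℝ φ y (ee i)) := fun i =>
    contDiff_fderiv_apply (n := 1) (by norm_num; exact hφ) _
  have CP : ∀ i, HasCompactSupport (fun y => fderiv ℝ φ y (ee i)) := fun i => hc.fderiv_apply ℝ _
  have key : ∀ i, ∫ x, a x * fderiv ℝ (fun y => fderiv ℝ φ y (ee i)) x (ee i)
      = ∫ x, fderiv ℝ (fun y => fderiv ℝ a y (ee i)) x (ee i) * φ x := by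
    intro i
    have h1 := ibp1 (ha.of_le (by norm_num)) (P i) (CP i) (ee i)
    have h2 := ibp1 (A i) (hφ.of_le (by norm_num)) hc (ee i)
    rw [h1, h2]; simp
  simp_rw [lap_eq ha, lap_eq hφ, Finset.mul_sum, Finset.sum_mul]
  rw [integral_finsetSum, integral_finsetSum]
  · exact Finset.sum_congr rfl fun i _ => key i
  · intro i _
    have := (contDiff_fderiv_apply (n := 0) (by simpa using A i) (ee i)).continuous
    exact (this.mul hφ.continuous).integrable_of_hasCompactSupport hc.mul_left
  · intro i _
    have := (contDiff_fderiv_apply (n := 0) (by simpa using P i) (ee i)).continuous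
    exact (ha.continuous.mul this).integrable_of_hasCompactSupport
      ((CP i).fderiv_apply ℝ (ee i)).mul_left

lemma hasFDerivAt_radial {F : ℝ → ℝ} {F1 : ℝ} (x : E3) (h : HasDerivAt F F1 (‖x‖ ^ 2)) :
    HasFDerivAt (fun y : E3 => F (‖y‖ ^ 2)) ((2 * F1) • innerSL ℝ x) x := by
  have h1 : HasFDerivAt (fun y : E3 => ‖y‖ ^ 2) (2 • innerSL ℝ x) x := (hasStrictFDerivAt_norm_sq x).hasFDerivAt
  have := h.comp_hasFDerivAt x h1
  have e : (2 * F1) • innerSL ℝ x = F1 • (2 • innerSL ℝ x) := by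
    rw [mul_comm, mul_smul]
    congr 1
    rw [two_smul, two_smul]
  rw [e]
  exact this

noncomputable def ISL : E3 →L[ℝ] E3 →L[ℝ] ℝ := innerSL ℝ

lemma ISL_apply (x y : E3) : ISL x y = inner ℝ x y := rfl

lemma lap_radial {F F1 F2 : ℝ → ℝ} (h1 : ∀ s, 0 ≤ s → HasDerivAt F (F1 s) s)
    (h2 : ∀ s, 0 ≤ s → HasDerivAt F1 (F2 s) s) (x : E3) :
    laplacian (fun y : E3 => F (‖y‖ ^ 2)) x = 6 * F1 (‖x‖ ^ 2) + 4 * ‖x‖ ^ 2 * F2 (‖x‖ ^ 2) := by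
  have e1 : fderiv ℝ (fun y : E3 => F (‖y‖ ^ 2)) = fun y => (2 * F1 (‖y‖ ^ 2)) • innerSL ℝ y := by
    funext y
    exact (hasFDerivAt_radial y (h1 _ (by positivity))).fderiv
  have e2 : HasFDerivAt (fun y : E3 => (2 * F1 (‖y‖ ^ 2)) • innerSL ℝ y)
      ((2 * F1 (‖x‖ ^ 2)) • ISL
        + ((2:ℝ) • ((2 * F2 (‖x‖ ^ 2)) • innerSL ℝ x)).smulRight (innerSL ℝ x)) x := by
    have a1 := (hasFDerivAt_radial x (h2 (‖x‖ ^ 2) (by positivity))).const_mul 2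
    exact a1.smul ISL.hasFDerivAt
  rw [lap_def, e1, e2.fderiv]
  have hx : ‖x‖ ^ 2 = x 0 ^ 2 + x 1 ^ 2 + x 2 ^ 2 := by
    rw [EuclideanSpace.norm_sq_eq]; simp [Fin.sum_univ_three]
  have hi : ∀ i, inner ℝ x (ee i) = x i := by
    intro i; simp [ee, EuclideanSpace.inner_single_right]
  have hii : ∀ i, inner ℝ (ee i) (ee i) = (1:ℝ) := by
    intro i; simp [ee]
  simp only [Fin.sum_univ_three, add_apply, smul_apply,
    ContinuousLinearMap.smulRight_apply, innerSL_apply_apply, ISL_apply, hi, hii, smul_eq_mul]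
  generalize F1 (‖x‖ ^ 2) = A
  generalize F2 (‖x‖ ^ 2) = B
  rw [hx]
  ring

lemma lap_comp {g : E3 → ℝ} (hg : ContDiff ℝ 2 g) (c : ℝ) (a x : E3) :
    laplacian (fun y => g (c • (y - a))) x = c ^ 2 * laplacian g (c • (x - a)) := by
  have d1 : Differentiable ℝ g := hg.differentiable (by norm_num)
  have d2 : Differentiable ℝ (fderiv ℝ g) :=
    (hg.fderiv_right (m := 1) (by norm_num)).differentiable (by norm_num)
  have ha : ∀ y, HasFDerivAt (fun y : E3 => c • (y - a)) (c • ContinuousLinearMap.id ℝ E3) y := by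
    intro y
    exact ((hasFDerivAt_id y).sub_const a).const_smul c
  have e1 : fderiv ℝ (fun y => g (c • (y - a))) = fun y => c • fderiv ℝ g (c • (y - a)) := by
    funext y
    have := (d1 (c • (y - a))).hasFDerivAt.comp y (ha y)
    rw [show (fun y => g (c • (y - a))) = g ∘ (fun y : E3 => c • (y - a)) from rfl, this.fderiv]
    ext z; simp
  rw [lap_def, lap_def, e1]
  have e2 := ((d2 (c • (x - a))).hasFDerivAt.comp x (ha x)).const_smul c
  have e3 : fderiv ℝ (fun y => c • fderiv ℝ g (c • (y - a))) x = _ := e2.fderiv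
  rw [e3, Finset.mul_sum]
  refine Finset.sum_congr rfl fun i _ => ?_
  simp
  ring


lemma hasDerivAt_rp (d α s : ℝ) (hd : 0 < d) (hs : 0 ≤ s) :
    HasDerivAt (fun s : ℝ => (s + d) ^ α) (α * (s + d) ^ (α - 1)) s := by
  have h := ((hasDerivAt_id s).add_const d).rpow_const (p := α) (Or.inl (by simp; positivity))
  simpa using h

lemma contDiff_rp (d α : ℝ) (hd : 0 < d) {n : WithTop ℕ∞} :
    ContDiff ℝ n (fun x : E3 => (‖x‖ ^ 2 + d) ^ α) := by
  apply ContDiff.rpow_const_of_ne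
  · exact (contDiff_norm_sq ℝ).add contDiff_const
  · intro x; positivity

lemma lap_rp (d α : ℝ) (hd : 0 < d) (x : E3) :
    laplacian (fun y : E3 => (‖y‖ ^ 2 + d) ^ α) x =
      (6 * α + 4 * α * (α - 1)) * (‖x‖ ^ 2 + d) ^ (α - 1)
        - 4 * α * (α - 1) * d * (‖x‖ ^ 2 + d) ^ (α - 2) := by
  have h := lap_radial (F := fun s : ℝ => (s + d) ^ α) (F1 := fun s => α * (s + d) ^ (α - 1))
    (F2 := fun s => α * ((α - 1) * (s + d) ^ (α - 1 - 1)))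
    (fun s hs => hasDerivAt_rp d α s hd hs)
    (fun s hs => (hasDerivAt_rp d (α - 1) s hd hs).const_mul α) x
  rw [h]
  have hp : 0 < ‖x‖ ^ 2 + d := by positivity
  have e : (‖x‖ ^ 2 + d) ^ (α - 1) = (‖x‖ ^ 2 + d) * (‖x‖ ^ 2 + d) ^ (α - 2) := by
    nth_rewrite 2 [← Real.rpow_one (‖x‖ ^ 2 + d)]
    rw [← Real.rpow_add hp]; congr 1; ring
  rw [e, show α - 1 - 1 = α - 2 by ring]
  ring

lemma lap_add' {f g : E3 → ℝ} (hf : ContDiff ℝ 2 f) (hg : ContDiff ℝ 2 g) (x : E3) (a b : ℝ) :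
    laplacian (fun y => a * f y + b * g y) x = a * laplacian f x + b * laplacian g x := by
  have f1 := hf.differentiable (by norm_num)
  have g1 := hg.differentiable (by norm_num)
  have f2 : Differentiable ℝ (fderiv ℝ f) :=
    (hf.fderiv_right (m := 1) (by norm_num)).differentiable (by norm_num)
  have g2 : Differentiable ℝ (fderiv ℝ g) :=
    (hg.fderiv_right (m := 1) (by norm_num)).differentiable (by norm_num)
  have e1 : fderiv ℝ (fun y => a * f y + b * g y) = fun y => a • fderiv ℝ f y + b • fderiv ℝ g y := by
    funext y
    exact (((f1 y).hasFDerivAt.const_mul a).add ((g1 y).hasFDerivAt.const_mul b)).fderiv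
  have e2 : fderiv ℝ (fun y => a • fderiv ℝ f y + b • fderiv ℝ g y) x = _ :=
    (((f2 x).hasFDerivAt.const_smul a).add ((g2 x).hasFDerivAt.const_smul b)).fderiv
  simp only [lap_def, e1, e2, Finset.mul_sum, ← Finset.sum_add_distrib]
  rfl

lemma bilap_rp (d : ℝ) (hd : 0 < d) (x : E3) :
    laplacian (laplacian (fun y : E3 => (‖y‖ ^ 2 + d) ^ (1/2 : ℝ))) x =
      - 15 * d ^ 2 * (‖x‖ ^ 2 + d) ^ (-7/2 : ℝ) := by
  have e : laplacian (fun y : E3 => (‖y‖ ^ 2 + d) ^ (1/2 : ℝ)) =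
      fun y : E3 => 2 * (‖y‖ ^ 2 + d) ^ (-1/2 : ℝ) + d * (‖y‖ ^ 2 + d) ^ (-3/2 : ℝ) := by
    funext y
    rw [lap_rp d _ hd]
    norm_num
  rw [e, lap_add' (contDiff_rp d _ hd) (contDiff_rp d _ hd), lap_rp d _ hd, lap_rp d _ hd]
  norm_num
  ring

lemma bilap_int (d : ℝ) (hd : 0 < d) {φ : E3 → ℝ} (hφ : ContDiff ℝ 4 φ) (hc : HasCompactSupport φ) :
    ∫ x, (‖x‖ ^ 2 + d) ^ (1/2 : ℝ) * laplacian (laplacian φ) x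
      = ∫ x, (- 15 * d ^ 2 * (‖x‖ ^ 2 + d) ^ (-7/2 : ℝ)) * φ x := by
  have h1 : ContDiff ℝ 2 (laplacian φ) := contDiff_lap (by norm_num; exact hφ)
  rw [ibp2 (contDiff_rp d _ hd) h1 (compact_lap hc),
    ibp2 (contDiff_lap (contDiff_rp d _ hd)) (hφ.of_le (by norm_num)) hc]
  simp_rw [bilap_rp d hd]

lemma integrable_ker : Integrable (fun x : E3 => (‖x‖ ^ 2 + 1) ^ (-7/2 : ℝ)) := by
  have := integrable_rpow_neg_one_add_norm_sq (E := E3) (μ := volume) (r := 7) (by simp; norm_num)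
  refine this.congr (Eventually.of_forall fun x => ?_)
  simp only
  rw [add_comm, neg_div]

lemma integral_ker1 : ∫ r in Set.Ioi (0:ℝ), r ^ 2 * (r ^ 2 + 1) ^ (-7/2 : ℝ) = 2 / 15 := by
  have hd : ∀ r : ℝ, HasDerivAt
      (fun r : ℝ => r ^ 3 / 3 * (r ^ 2 + 1) ^ (-3/2 : ℝ) - r ^ 5 / 5 * (r ^ 2 + 1) ^ (-5/2 : ℝ))
      (r ^ 2 * (r ^ 2 + 1) ^ (-7/2 : ℝ)) r := by
    intro r
    have hp : 0 < r ^ 2 + 1 := by positivity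
    have hb : HasDerivAt (fun r : ℝ => r ^ 2 + 1) (2 * r) r := by
      simpa using (hasDerivAt_pow 2 r).add_const 1
    have k1 := hb.rpow_const (p := (-3/2 : ℝ)) (Or.inl hp.ne')
    have k2 := hb.rpow_const (p := (-5/2 : ℝ)) (Or.inl hp.ne')
    have m1 := ((hasDerivAt_pow 3 r).div_const 3).mul k1
    have m2 := ((hasDerivAt_pow 5 r).div_const 5).mul k2
    have := m1.sub m2
    refine this.congr_deriv ?_
    have e1 : (r ^ 2 + 1) ^ (-5/2 : ℝ) = (r ^ 2 + 1) * (r ^ 2 + 1) ^ (-7/2 : ℝ) := by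
      nth_rewrite 2 [← Real.rpow_one (r ^ 2 + 1)]
      rw [← Real.rpow_add hp]; norm_num
    have e2 : (r ^ 2 + 1) ^ (-3/2 : ℝ) = (r ^ 2 + 1) * ((r ^ 2 + 1) * (r ^ 2 + 1) ^ (-7/2 : ℝ)) := by
      rw [← e1]
      nth_rewrite 2 [← Real.rpow_one (r ^ 2 + 1)]
      rw [← Real.rpow_add hp]; norm_num
    rw [show (-3/2 - 1 : ℝ) = -5/2 by norm_num, show (-5/2 - 1 : ℝ) = -7/2 by norm_num, e2, e1]
    norm_num
    ring
  have hlim : Tendsto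
      (fun r : ℝ => r ^ 3 / 3 * (r ^ 2 + 1) ^ (-3/2 : ℝ) - r ^ 5 / 5 * (r ^ 2 + 1) ^ (-5/2 : ℝ))
      atTop (𝓝 (2 / 15)) := by
    have t1 : Tendsto (fun r : ℝ => 1 + (r ^ 2)⁻¹) atTop (𝓝 1) := by
      have : Tendsto (fun r : ℝ => (r ^ 2)⁻¹) atTop (𝓝 0) :=
        (tendsto_pow_atTop (by norm_num)).inv_tendsto_atTop
      simpa using this.const_add 1
    have t2 : Tendsto (fun r : ℝ => 1 / 3 * (1 + (r ^ 2)⁻¹) ^ (-3/2 : ℝ) - 1 / 5 * (1 + (r ^ 2)⁻¹) ^ (-5/2 : ℝ))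
      atTop (𝓝 (1 / 3 * 1 ^ (-3/2 : ℝ) - 1 / 5 * 1 ^ (-5/2 : ℝ))) :=
      ((t1.rpow_const (Or.inl one_ne_zero)).const_mul _).sub
        ((t1.rpow_const (Or.inl one_ne_zero)).const_mul _)
    have e0 : (1 / 3 * 1 ^ (-3/2 : ℝ) - 1 / 5 * 1 ^ (-5/2 : ℝ) : ℝ) = 2 / 15 := by norm_num
    rw [e0] at t2
    refine t2.congr' ?_
    filter_upwards [eventually_gt_atTop 0] with r hr
    have hx : (r ^ 2 + 1) = r ^ 2 * (1 + (r ^ 2)⁻¹) := by field_simp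
    have q1 : 0 ≤ 1 + (r ^ 2)⁻¹ := by positivity
    rw [hx, Real.mul_rpow (by positivity) q1, Real.mul_rpow (by positivity) q1,
      ← Real.rpow_natCast, ← Real.rpow_natCast, ← Real.rpow_natCast, ← Real.rpow_mul hr.le,
      ← Real.rpow_mul hr.le]
    have a1 : r ^ ((3:ℕ):ℝ) * r ^ (((2:ℕ):ℝ) * (-3/2)) = 1 := by
      rw [← Real.rpow_add hr]; norm_num
    have a2 : r ^ ((5:ℕ):ℝ) * r ^ (((2:ℕ):ℝ) * (-5/2)) = 1 := by
      rw [← Real.rpow_add hr]; norm_num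
    linear_combination (-(1/3) * (1 + (r ^ ((2:ℕ):ℝ))⁻¹) ^ (-3/2 : ℝ)) * a1
      + (1/5 * (1 + (r ^ ((2:ℕ):ℝ))⁻¹) ^ (-5/2 : ℝ)) * a2
  have := integral_Ioi_of_hasDerivAt_of_nonneg (a := 0) (hd 0).continuousAt.continuousWithinAt
    (fun r _ => hd r) (fun r _ => by positivity) hlim
  rw [this]; norm_num

lemma integral_ker : ∫ x : E3, (‖x‖ ^ 2 + 1) ^ (-7/2 : ℝ) = 8 * π / 15 := by
  have h := MeasureTheory.integral_fun_norm_addHaar (volume : Measure E3) (fun r : ℝ => (r ^ 2 + 1) ^ (-7/2 : ℝ))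
  simp only [finrank_euclideanSpace, Fintype.card_fin, smul_eq_mul, nsmul_eq_mul] at h
  rw [h, integral_ker1]
  have hv : (volume : Measure E3).real (Metric.ball 0 1) = 4 / 3 * π := by
    rw [Measure.real, EuclideanSpace.volume_ball_fin_three]
    simp
    rw [ENNReal.toReal_ofReal (by positivity)]
    ring
  rw [hv]; push_cast; ring

lemma bilap_cont {φ : E3 → ℝ} (hφ : ContDiff ℝ 4 φ) : Continuous (laplacian (laplacian φ)) :=
  (contDiff_lap (n := 0) (by norm_num; exact contDiff_lap (n := 2) (by norm_num; exact hφ))).continuous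

lemma fund0 {φ : E3 → ℝ} (hφ : ContDiff ℝ 4 φ) (hc : HasCompactSupport φ) :
    ∫ x, ‖x‖ * laplacian (laplacian φ) x = - (8 * π) * φ 0 := by
  set ε : ℕ → ℝ := fun n => 1 / ((n : ℝ) + 1) with hε
  have ε0 : ∀ n, 0 < ε n := fun n => by simp only [hε]; positivity
  have ε1 : ∀ n, ε n ≤ 1 := fun n => by
    simp only [hε]; rw [div_le_one (by positivity)]; linarith [(Nat.cast_nonneg n : (0:ℝ) ≤ n)]
  have εt : Tendsto ε atTop (𝓝 0) := tendsto_one_div_add_atTop_nhds_zero_nat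
  have cΔ := bilap_cont hφ
  have sΔ : HasCompactSupport (laplacian (laplacian φ)) := compact_lap (compact_lap hc)
  have L1 : Tendsto (fun n => ∫ x : E3, (‖x‖ ^ 2 + ε n ^ 2) ^ (1/2 : ℝ) * laplacian (laplacian φ) x) atTop
      (𝓝 (∫ x : E3, ‖x‖ * laplacian (laplacian φ) x)) := by
    apply tendsto_integral_of_dominated_convergence
      (fun x : E3 => ‖(‖x‖ ^ 2 + 1) ^ (1/2 : ℝ) * laplacian (laplacian φ) x‖)
    · intro n
      exact ((contDiff_rp (ε n ^ 2) _ (pow_pos (ε0 n) 2) (n := 0)).continuous.mul cΔ).aestronglyMeasurable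
    · exact (((contDiff_rp 1 _ one_pos (n := 0)).continuous.mul cΔ).integrable_of_hasCompactSupport
        sΔ.mul_left).norm
    · intro n
      refine Eventually.of_forall fun x => ?_
      rw [norm_mul, norm_mul]
      gcongr ?_ * _
      rw [Real.norm_of_nonneg (by positivity), Real.norm_of_nonneg (by positivity)]
      have : ε n ^ 2 ≤ 1 := pow_le_one₀ (ε0 n).le (ε1 n)
      gcongr
    · refine Eventually.of_forall fun x => ?_
      apply Tendsto.mul_const
      have h1 : Tendsto (fun n => ‖x‖ ^ 2 + ε n ^ 2) atTop (𝓝 (‖x‖ ^ 2)) := by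
        simpa using (εt.pow 2).const_add (‖x‖ ^ 2)
      have h2 := h1.rpow_const (p := (1/2 : ℝ)) (Or.inr (by norm_num))
      rwa [← Real.sqrt_eq_rpow, Real.sqrt_sq (norm_nonneg x)] at h2
  obtain ⟨M, hM⟩ := hc.exists_bound_of_continuous hφ.continuous
  have L2 : Tendsto (fun n => ∫ z : E3, (-15 * (‖z‖ ^ 2 + 1) ^ (-7/2 : ℝ)) * φ (ε n • z)) atTop
      (𝓝 (∫ z : E3, (-15 * (‖z‖ ^ 2 + 1) ^ (-7/2 : ℝ)) * φ 0)) := by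
    have ck := (contDiff_rp 1 (-7/2) one_pos (n := 0)).continuous
    apply tendsto_integral_of_dominated_convergence
      (fun z : E3 => (15 * M) * (‖z‖ ^ 2 + 1) ^ (-7/2 : ℝ))
    · intro n
      exact ((continuous_const.mul ck).mul
        (hφ.continuous.comp (continuous_const_smul (ε n)))).aestronglyMeasurable
    · exact integrable_ker.const_mul _
    · intro n
      refine Eventually.of_forall fun z => ?_
      rw [norm_mul, norm_mul, norm_neg, Real.norm_of_nonneg (by positivity : (0:ℝ) ≤ (‖z‖ ^ 2 + 1) ^ (-7/2 : ℝ))]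
      have := hM (ε n • z)
      have h15 : ‖(15:ℝ)‖ = 15 := by norm_num
      rw [h15]
      have hk : (0:ℝ) ≤ (‖z‖ ^ 2 + 1) ^ (-7/2 : ℝ) := by positivity
      nlinarith
    · refine Eventually.of_forall fun z => ?_
      apply Tendsto.const_mul
      have : Tendsto (fun n => ε n • z) atTop (𝓝 0) := by simpa using εt.smul_const z
      exact (hφ.continuous.tendsto 0).comp this
  have key : ∀ n, ∫ x : E3, (‖x‖ ^ 2 + ε n ^ 2) ^ (1/2 : ℝ) * laplacian (laplacian φ) x
      = ∫ z : E3, (-15 * (‖z‖ ^ 2 + 1) ^ (-7/2 : ℝ)) * φ (ε n • z) := by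
    intro n
    have hp := ε0 n
    rw [bilap_int _ (pow_pos hp 2) hφ hc]
    have h := Measure.integral_comp_smul (volume : Measure E3)
      (fun x => (- 15 * (ε n ^ 2) ^ 2 * (‖x‖ ^ 2 + ε n ^ 2) ^ (-7/2 : ℝ)) * φ x) (ε n)
    simp only [finrank_euclideanSpace, Fintype.card_fin, smul_eq_mul] at h
    rw [abs_of_pos (by positivity), eq_inv_mul_iff_mul_eq₀ (by positivity)] at h
    rw [← h, ← integral_const_mul]
    refine integral_congr_ae (Eventually.of_forall fun z => ?_)
    simp only
    have e : ‖ε n • z‖ ^ 2 + ε n ^ 2 = ε n ^ 2 * (‖z‖ ^ 2 + 1) := by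
      rw [norm_smul, Real.norm_of_nonneg hp.le]; ring
    have e2 : (ε n ^ 2 : ℝ) ^ (-7/2 : ℝ) = (ε n ^ 7)⁻¹ := by
      rw [← Real.rpow_natCast, ← Real.rpow_mul hp.le, ← Real.rpow_natCast, ← Real.rpow_neg hp.le]
      norm_num
    rw [e, Real.mul_rpow (by positivity) (by positivity), e2]
    field_simp
  rw [funext key] at L1
  have := tendsto_nhds_unique L1 L2
  rw [this, integral_mul_const, integral_const_mul, integral_ker]
  ring

lemma fund {φ : E3 → ℝ} (hφ : ContDiff ℝ 4 φ) (hc : HasCompactSupport φ) (y : E3) :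
    ∫ x, ‖x - y‖ * laplacian (laplacian φ) x = - (8 * π) * φ y := by
  have hφ2 : ContDiff ℝ 2 φ := hφ.of_le (by norm_num)
  set ψ : E3 → ℝ := fun x => φ ((1:ℝ) • (x - (-y))) with hψ
  have h1 : ContDiff ℝ 4 ψ := hφ.comp (by fun_prop)
  have h2 : HasCompactSupport ψ := by
    have := hc.comp_homeomorph (Homeomorph.addRight y)
    have e : ψ = φ ∘ (Homeomorph.addRight y) := by
      funext x; simp [hψ]
    rw [e]; exact this
  have e1 : laplacian ψ = fun x => laplacian φ ((1:ℝ) • (x - (-y))) := by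
    funext x; rw [hψ, lap_comp hφ2]; simp
  have e2 : ∀ x, laplacian (laplacian ψ) x = laplacian (laplacian φ) (x + y) := by
    intro x
    rw [e1, lap_comp (contDiff_lap (by norm_num; exact hφ))]; simp
  have h := fund0 h1 h2
  simp_rw [e2] at h
  rw [← integral_add_right_eq_self _ y]
  simpa [hψ] using h

lemma int_bilap_zero {φ : E3 → ℝ} (hφ : ContDiff ℝ 2 φ) (hc : HasCompactSupport φ) :
    ∫ x, laplacian φ x = 0 := by
  have h := ibp2 (a := fun _ => (1:ℝ)) contDiff_const hφ hc
  simp only [one_mul] at h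
  rw [h]
  have : ∀ x, laplacian (fun _ : E3 => (1:ℝ)) x = 0 := by
    intro x
    rw [lap_def]
    have : fderiv ℝ (fun _ : E3 => (1:ℝ)) = fun _ => 0 := by funext y; simp
    rw [this]; simp
  simp [this]


noncomputable def pp (n : ℕ) (s : ℝ) : ℝ := (max s 0) ^ n

lemma hasDerivAt_pp (n : ℕ) (s : ℝ) : HasDerivAt (pp (n + 2)) (((n : ℝ) + 2) * pp (n + 1) s) s := by
  have hpow : HasDerivAt (fun s : ℝ => s ^ (n + 2)) (((n : ℝ) + 2) * s ^ (n + 1)) s := by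
    simpa using hasDerivAt_pow (n + 2) s
  rcases lt_trichotomy s 0 with h | h | h
  · have e : pp (n + 2) =ᶠ[𝓝 s] fun _ => 0 := by
      filter_upwards [Iio_mem_nhds h] with t ht
      simp only [pp]; rw [max_eq_right (le_of_lt ht)]; simp
    have : pp (n + 1) s = 0 := by simp only [pp]; rw [max_eq_right h.le]; simp
    rw [this, mul_zero]
    exact (hasDerivAt_const s (0:ℝ)).congr_of_eventuallyEq e
  · subst h
    have h0 : pp (n + 1) 0 = 0 := by simp [pp]
    have l : HasDerivWithinAt (pp (n + 2)) 0 (Set.Iic 0) 0 := by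
      refine (hasDerivWithinAt_const (0:ℝ) (Set.Iic 0) (0:ℝ)).congr ?_ ?_
      · intro t ht; simp only [pp]; rw [max_eq_right ht]; simp
      · simp [pp]
    have r : HasDerivWithinAt (pp (n + 2)) 0 (Set.Ici 0) 0 := by
      have := hpow.hasDerivWithinAt (s := Set.Ici 0)
      rw [show ((n : ℝ) + 2) * 0 ^ (n + 1) = 0 by simp] at this
      refine this.congr ?_ ?_
      · intro t ht; simp only [pp]; rw [max_eq_left ht]
      · simp [pp]
    rw [h0, mul_zero]
    have := l.union r
    rwa [Set.Iic_union_Ici, hasDerivWithinAt_univ] at this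
  · have e : pp (n + 2) =ᶠ[𝓝 s] fun t => t ^ (n + 2) := by
      filter_upwards [Ioi_mem_nhds h] with t ht
      simp only [pp]; rw [max_eq_left (le_of_lt ht)]
    have : pp (n + 1) s = s ^ (n + 1) := by simp only [pp]; rw [max_eq_left h.le]
    rw [this]
    exact hpow.congr_of_eventuallyEq e

lemma continuous_pp (n : ℕ) : Continuous (pp n) := by unfold pp; fun_prop

lemma contDiff_pp (k : ℕ) : ∀ n, k < n → ContDiff ℝ k (pp n) := by
  induction k with
  | zero => intro n _; simpa using (continuous_pp n)
  | succ k ih =>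
    intro n hn
    obtain ⟨m, rfl⟩ : ∃ m, n = m + 2 := ⟨n - 2, by omega⟩
    push_cast
    rw [contDiff_succ_iff_deriv]
    refine ⟨fun s => (hasDerivAt_pp m s).differentiableAt, fun h => by simp at h, ?_⟩
    have : deriv (pp (m + 2)) = fun s => ((m : ℝ) + 2) * pp (m + 1) s := by
      funext s; exact (hasDerivAt_pp m s).deriv
    rw [this]
    exact contDiff_const.mul (ih _ (by omega))

noncomputable def bb (n : ℕ) (y : E3) : ℝ := pp n (1 - ‖y‖ ^ 2)

lemma contDiff_bb (k n : ℕ) (h : k < n) : ContDiff ℝ k (bb n) :=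
  (contDiff_pp k n h).comp (contDiff_const.sub (contDiff_norm_sq ℝ))

lemma continuous_bb (n : ℕ) : Continuous (bb n) :=
  (continuous_pp n).comp (by fun_prop)

lemma bb_nonneg (n : ℕ) (y : E3) : 0 ≤ bb n y := by
  unfold bb pp; positivity

lemma bb_le_one (n : ℕ) (y : E3) : bb n y ≤ 1 := by
  unfold bb pp
  apply pow_le_one₀ (by positivity)
  apply max_le _ zero_le_one
  nlinarith [norm_nonneg y]

lemma bb_zero (n : ℕ) {y : E3} (hy : 1 ≤ ‖y‖) : bb (n + 1) y = 0 := by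
  unfold bb pp
  rw [max_eq_right (by nlinarith)]; simp

lemma compact_bb (n : ℕ) : HasCompactSupport (bb (n + 1)) := by
  apply HasCompactSupport.intro (isCompact_closedBall (0 : E3) 1)
  intro x hx
  apply bb_zero
  simp at hx; exact hx.le

lemma lap_bb (n : ℕ) (y : E3) : laplacian (bb (n + 3)) y =
    4 * (n + 3) * (n + 2) * bb (n + 1) y - 2 * (n + 3) * (2 * n + 7) * bb (n + 2) y := by
  have h0 : ∀ s : ℝ, HasDerivAt (fun s : ℝ => 1 - s) (-1) s := fun s => by
    simpa using (hasDerivAt_id s).const_sub 1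
  have h := lap_radial (F := fun s => pp (n + 3) (1 - s))
    (F1 := fun s => (-((n:ℝ) + 3)) * pp (n + 2) (1 - s))
    (F2 := fun s => (-((n:ℝ) + 3)) * (-(((n:ℝ) + 2) * pp (n + 1) (1 - s))))
    (fun s _ => by
      have := (hasDerivAt_pp (n + 1) (1 - s)).comp s (h0 s)
      refine this.congr_deriv ?_
      push_cast; ring)
    (fun s _ => by
      have := ((hasDerivAt_pp n (1 - s)).comp s (h0 s)).const_mul (-((n:ℝ) + 3))
      refine this.congr_deriv ?_
      ring) y
  have e : bb (n + 3) = fun y : E3 => pp (n + 3) (1 - ‖y‖ ^ 2) := rfl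
  rw [e, h]
  have r : ‖y‖ ^ 2 * pp (n + 1) (1 - ‖y‖ ^ 2) = pp (n + 1) (1 - ‖y‖ ^ 2) - pp (n + 2) (1 - ‖y‖ ^ 2) := by
    unfold pp
    rcases le_total (1 - ‖y‖ ^ 2) 0 with hh | hh
    · rw [max_eq_right hh]; simp
    · rw [max_eq_left hh]; ring
  unfold bb
  linear_combination (4 * (n + 3) * (n + 2) : ℝ) * r

noncomputable def Aw (n : ℕ) (w : E3 → ℝ) (x : E3) (R : ℝ) : ℝ := ∫ y, w (x + R • y) * bb n y

lemma Aw_eq (n : ℕ) (w : E3 → ℝ) (x : E3) {R : ℝ} (hR : 0 < R) :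
    Aw n w x R = ∫ z, w z * (R⁻¹ ^ 3 * bb n (R⁻¹ • (z - x))) := by
  have h1 := integral_add_right_eq_self (μ := (volume : Measure E3))
    (fun z => w z * (R⁻¹ ^ 3 * bb n (R⁻¹ • (z - x)))) x
  have h := Measure.integral_comp_smul (volume : Measure E3)
      (fun z => w (z + x) * (R⁻¹ ^ 3 * bb n (R⁻¹ • z))) R
  simp only [finrank_euclideanSpace, Fintype.card_fin, smul_eq_mul] at h
  rw [abs_of_pos (by positivity), eq_inv_mul_iff_mul_eq₀ (by positivity)] at h
  simp only [add_sub_cancel_right] at h1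
  rw [← h1, ← h, ← integral_const_mul, Aw]
  refine integral_congr_ae (Eventually.of_forall fun z => ?_)
  simp only
  rw [smul_smul, inv_mul_cancel₀ hR.ne', one_smul, add_comm x]
  field_simp

lemma Aw_continuous (n : ℕ) {w : E3 → ℝ} (hw : Continuous w) (x : E3) : Continuous (Aw (n + 1) w x) := by
  have e : Aw (n + 1) w x = fun R => ∫ y in Metric.closedBall (0:E3) 1, w (x + R • y) * bb (n + 1) y := by
    funext R
    unfold Aw
    symm
    apply setIntegral_eq_integral_of_forall_compl_eq_zero
    intro y hy
    rw [bb_zero, mul_zero]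
    simp at hy; exact hy.le
  rw [e]
  apply continuous_parametric_integral_of_continuous
  · have := continuous_bb (n + 1)
    simp only [Function.uncurry_def]
    fun_prop
  · exact isCompact_closedBall _ _

lemma Aw_deriv (n : ℕ) {w : E3 → ℝ} (hw : Continuous w) (x : E3) {R : ℝ} (hR : 0 < R) :
    HasDerivAt (Aw (n + 2) w x)
      (∫ z, w z * (R⁻¹ ^ 4 / (2 * (n + 3)) * laplacian (bb (n + 3)) (R⁻¹ • (z - x)))) R := by
  set lb : E3 → ℝ := laplacian (bb (n + 3)) with hlb
  have lbc : Continuous lb := (contDiff_lap (n := 0) (by simpa using contDiff_bb 2 (n + 3) (by omega))).continuous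
  have lbs : HasCompactSupport lb := compact_lap (compact_bb (n + 2))
  obtain ⟨C, hC⟩ := lbs.exists_bound_of_continuous lbc
  have lb0 : ∀ y, 1 ≤ ‖y‖ → lb y = 0 := by
    intro y hy
    rw [hlb, lap_bb, bb_zero _ hy, bb_zero _ hy]; ring
  have hC0 : 0 ≤ C := (norm_nonneg _).trans (hC 0)
  have main := hasDerivAt_integral_of_dominated_loc_of_deriv_le (μ := (volume : Measure E3))
    (F := fun R z => w z * (R⁻¹ ^ 3 * bb (n + 2) (R⁻¹ • (z - x))))
    (F' := fun R z => w z * (R⁻¹ ^ 4 / (2 * (n + 3)) * lb (R⁻¹ • (z - x))))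
    (x₀ := R) (s := Set.Ioo (R / 2) (2 * R))
    (bound := (Metric.closedBall x (2 * R)).indicator
      (fun z => ‖w z‖ * ((R / 2)⁻¹ ^ 4 / (2 * (n + 3)) * C)))
    (Ioo_mem_nhds (by linarith) (by linarith)) ?_ ?_ ?_ ?_ ?_ ?_
  · refine main.2.congr_of_eventuallyEq ?_
    filter_upwards [Ioi_mem_nhds hR] with r hr
    exact Aw_eq _ _ _ hr
  · refine Eventually.of_forall fun r => ?_
    have := continuous_bb (n + 2)
    exact (by fun_prop : Continuous _).aestronglyMeasurable
  · have := continuous_bb (n + 2)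
    apply Continuous.integrable_of_hasCompactSupport (by fun_prop)
    apply HasCompactSupport.intro (isCompact_closedBall x R)
    intro z hz
    rw [bb_zero, mul_zero, mul_zero]
    rw [norm_smul, norm_inv, Real.norm_of_nonneg hR.le, inv_mul_eq_div, one_le_div hR]
    simp [dist_eq_norm] at hz; exact hz.le
  · exact (by fun_prop : Continuous _).aestronglyMeasurable
  · refine Eventually.of_forall fun z r hr => ?_
    have hr0 : 0 < r := by linarith [hr.1]
    by_cases hz : z ∈ Metric.closedBall x (2 * R)
    · rw [Set.indicator_of_mem hz, norm_mul, norm_mul,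
        Real.norm_of_nonneg (by positivity : 0 ≤ r⁻¹ ^ 4 / (2 * ((n:ℝ) + 3)))]
      have := hC (r⁻¹ • (z - x))
      have h2 := hr.1.le
      gcongr
    · rw [Set.indicator_of_notMem hz, lb0]
      · simp
      · rw [norm_smul, norm_inv, Real.norm_of_nonneg hr0.le, inv_mul_eq_div, one_le_div hr0]
        simp [dist_eq_norm] at hz; linarith [hr.2]
  · rw [integrable_indicator_iff measurableSet_closedBall]
    exact (by fun_prop : Continuous fun z => ‖w z‖ * ((R / 2)⁻¹ ^ 4 / (2 * (n + 3)) * C)).continuousOn.integrableOn_compact (isCompact_closedBall _ _)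
  · refine Eventually.of_forall fun z r hr => ?_
    have hr0 : 0 < r := by linarith [hr.1]
    apply HasDerivAt.const_mul
    rw [hlb, lap_bb]
    have i1 : HasDerivAt (fun r : ℝ => r⁻¹) (-(r ^ 2)⁻¹) r := hasDerivAt_inv hr0.ne'
    have i2 : HasDerivAt (fun r : ℝ => 1 - ‖r⁻¹ • (z - x)‖ ^ 2)
        (-(2 * r⁻¹ * (-(r ^ 2)⁻¹) * ‖z - x‖ ^ 2)) r := by
      have e : (fun r : ℝ => 1 - ‖r⁻¹ • (z - x)‖ ^ 2) = fun r : ℝ => 1 - (r⁻¹) ^ 2 * ‖z - x‖ ^ 2 := by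
        funext r; rw [norm_smul, mul_pow, Real.norm_eq_abs, sq_abs]
      rw [e]
      have := ((i1.pow 2).mul_const (‖z - x‖ ^ 2)).const_sub 1
      refine this.congr_deriv ?_
      simp
    have i3 := (i1.pow 3).mul ((hasDerivAt_pp n _).comp r i2)
    refine i3.congr_deriv ?_
    have rr : ∀ y : E3, ‖y‖ ^ 2 * bb (n + 1) y = bb (n + 1) y - bb (n + 2) y := by
      intro y
      unfold bb pp
      rcases le_total (1 - ‖y‖ ^ 2) 0 with hh | hh
      · rw [max_eq_right hh]; simp
      · rw [max_eq_left hh]; ring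
    have r2 := rr (r⁻¹ • (z - x))
    have e2 : ‖r⁻¹ • (z - x)‖ ^ 2 = (r⁻¹) ^ 2 * ‖z - x‖ ^ 2 := by
      rw [norm_smul, mul_pow, Real.norm_eq_abs, sq_abs]
    rw [e2] at r2
    have b1 : pp (n + 1) (1 - ‖r⁻¹ • (z - x)‖ ^ 2) = bb (n + 1) (r⁻¹ • (z - x)) := rfl
    have b2 : (pp (n + 2) ∘ fun r : ℝ => 1 - ‖r⁻¹ • (z - x)‖ ^ 2) r = bb (n + 2) (r⁻¹ • (z - x)) := rfl
    rw [b1, b2]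
    have r3 : ‖z - x‖ ^ 2 * bb (n + 1) (r⁻¹ • (z - x)) =
       r ^ 2 * (bb (n + 1) (r⁻¹ • (z - x)) - bb (n + 2) (r⁻¹ • (z - x))) := by
      rw [← r2]; field_simp
    generalize bb (n + 1) (r⁻¹ • (z - x)) = B1 at *
    generalize bb (n + 2) (r⁻¹ • (z - x)) = B2 at *
    simp only [Pi.pow_apply, show 3 - 1 = 2 from rfl]
    push_cast
    field_simp
    linear_combination (4 * ((n:ℝ) + 2) ) * r3

lemma Aw_deriv_lap (n : ℕ) {w : E3 → ℝ} (hw : ContDiff ℝ 2 w) (x : E3) {R : ℝ} (hR : 0 < R) :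
    HasDerivAt (Aw (n + 2) w x) (R / (2 * (n + 3)) * Aw (n + 3) (laplacian w) x R) R := by
  refine (Aw_deriv n hw.continuous x hR).congr_deriv ?_
  rw [Aw_eq _ _ _ hR]
  have hb : ContDiff ℝ 2 (bb (n + 3)) := contDiff_bb 2 (n + 3) (by omega)
  have hc2 : ContDiff ℝ 2 (fun z => bb (n + 3) (R⁻¹ • (z - x))) := hb.comp (by fun_prop)
  have hcs : HasCompactSupport (fun z => bb (n + 3) (R⁻¹ • (z - x))) := by
    apply HasCompactSupport.intro (isCompact_closedBall x R)
    intro z hz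
    rw [bb_zero]
    rw [norm_smul, norm_inv, Real.norm_of_nonneg hR.le, inv_mul_eq_div, one_le_div hR]
    simp [dist_eq_norm] at hz; exact hz.le
  have h := ibp2 hw hc2 hcs
  simp_rw [lap_comp hb] at h
  have e1 : ∫ z, w z * (R⁻¹ ^ 4 / (2 * (n + 3)) * laplacian (bb (n + 3)) (R⁻¹ • (z - x)))
      = R⁻¹ ^ 2 / (2 * (n + 3)) * ∫ z, w z * (R⁻¹ ^ 2 * laplacian (bb (n + 3)) (R⁻¹ • (z - x))) := by
    rw [← integral_const_mul]
    congr 1; funext z; ring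
  rw [e1, h, ← integral_const_mul, ← integral_const_mul]
  congr 1; funext z; field_simp


lemma integrable_Aw (n : ℕ) {w : E3 → ℝ} (hw : Continuous w) (x : E3) {R : ℝ} (hR : 0 < R) :
    Integrable (fun z => w z * (R⁻¹ ^ 3 * bb (n + 1) (R⁻¹ • (z - x)))) := by
  have := continuous_bb (n + 1)
  apply Continuous.integrable_of_hasCompactSupport (by fun_prop)
  apply HasCompactSupport.intro (isCompact_closedBall x R)
  intro z hz
  rw [bb_zero, mul_zero, mul_zero]
  rw [norm_smul, norm_inv, Real.norm_of_nonneg hR.le, inv_mul_eq_div, one_le_div hR]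
  simp [dist_eq_norm] at hz; exact hz.le

lemma growth {u : E3 → ℝ} (hu : ContDiff ℝ 4 u) (hpos : ∀ x, 0 < u x)
    (hs : ∀ x, laplacian (laplacian u) x ≤ 0) :
    ∃ C, ∀ R, 1 ≤ R → ∫ z in Metric.closedBall (0:E3) R, u z ≤ C * R ^ 5 := by
  have hΔ : ContDiff ℝ 2 (laplacian u) := contDiff_lap (by norm_num; exact hu)
  have hu2 : ContDiff ℝ 2 u := hu.of_le (by norm_num)
  set S := Aw 5 (laplacian u) 0 with hS
  set M := Aw 4 u 0 with hM
  have dS : ∀ R, 0 < R → HasDerivAt S (R / (2 * ((3:ℕ) + 3)) * Aw 6 (laplacian (laplacian u)) 0 R) R :=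
    fun R hR => Aw_deriv_lap 3 hΔ 0 hR
  have dM : ∀ R, 0 < R → HasDerivAt M (R / (2 * ((2:ℕ) + 3)) * S R) R :=
    fun R hR => Aw_deriv_lap 2 hu2 0 hR
  have aS : AntitoneOn S (Set.Ici 0) := by
    apply antitoneOn_of_deriv_nonpos (convex_Ici 0) (Aw_continuous 4 hΔ.continuous 0).continuousOn
    · intro R hR
      rw [interior_Ici] at hR
      exact (dS R hR).differentiableAt.differentiableWithinAt
    · intro R hR
      rw [interior_Ici] at hR
      have hR0 : 0 < R := hR
      rw [(dS R hR).deriv]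
      have : Aw 6 (laplacian (laplacian u)) 0 R ≤ 0 := by
        apply integral_nonpos
        intro y
        exact mul_nonpos_of_nonpos_of_nonneg (hs _) (bb_nonneg _ _)
      exact mul_nonpos_of_nonneg_of_nonpos (by positivity) this
  have dG : ∀ R, 0 < R → HasDerivAt (fun R => M R - R ^ 2 / 20 * S 0)
      (R / (2 * ((2:ℕ) + 3)) * S R - R / 10 * S 0) R := by
    intro R hR
    refine ((dM R hR).sub (((hasDerivAt_pow 2 R).div_const 20).mul_const (S 0))).congr_deriv ?_
    push_cast; ring
  have aG : AntitoneOn (fun R => M R - R ^ 2 / 20 * S 0) (Set.Ici 0) := by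
    have cM : Continuous M := Aw_continuous 3 hu.continuous 0
    apply antitoneOn_of_deriv_nonpos (convex_Ici 0) (by fun_prop)
    · intro R hR
      rw [interior_Ici] at hR
      exact (dG R hR).differentiableAt.differentiableWithinAt
    · intro R hR
      rw [interior_Ici] at hR
      have hR0 : 0 < R := hR
      rw [(dG R hR).deriv]
      have := aS (Set.mem_Ici.2 le_rfl) (Set.mem_Ici.2 hR0.le) hR0.le
      push_cast
      nlinarith
  refine ⟨(4/3) ^ 4 * 2 ^ 3 * (|M 0| + |S 0|), fun R hR => ?_⟩
  have hR0 : 0 < R := by linarith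
  have h2 : M (2 * R) ≤ (|M 0| + |S 0|) * R ^ 2 := by
    have := aG (Set.mem_Ici.2 le_rfl) (Set.mem_Ici.2 (by linarith : 0 ≤ 2 * R)) (by linarith)
    simp only at this
    have a1 := le_abs_self (M 0)
    have a2 := le_abs_self (S 0)
    have a3 := abs_nonneg (S 0)
    have a4 := abs_nonneg (M 0)
    have a5 : 1 ≤ R ^ 2 := by nlinarith
    nlinarith
  have h3 : ∫ z in Metric.closedBall (0:E3) R, u z ≤ (4/3) ^ 4 * (2 * R) ^ 3 * M (2 * R) := by
    rw [hM, Aw_eq _ _ _ (by linarith), ← integral_const_mul]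
    have int := (integrable_Aw 3 hu.continuous 0 (by linarith : 0 < 2 * R)).const_mul ((4/3) ^ 4 * (2 * R) ^ 3)
    refine le_trans ?_ (setIntegral_le_integral (s := Metric.closedBall (0:E3) R) int ?_)
    · apply setIntegral_mono_on _ int.integrableOn measurableSet_closedBall
      · intro z hz
        have hb : (3/4) ^ 4 ≤ bb 4 ((2 * R)⁻¹ • (z - 0)) := by
          unfold bb pp
          have hn : ‖(2 * R)⁻¹ • (z - 0)‖ ≤ 1 / 2 := by
            rw [norm_smul, norm_inv, Real.norm_of_nonneg (by positivity), inv_mul_eq_div, div_le_iff₀ (by positivity)]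
            simp at hz ⊢; linarith
          gcongr
          apply le_max_of_le_left
          nlinarith [norm_nonneg ((2 * R)⁻¹ • (z - 0))]
        have hu0 := hpos z
        have e : (4/3) ^ 4 * (2 * R) ^ 3 * (u z * ((2 * R)⁻¹ ^ 3 * bb (3 + 1) ((2 * R)⁻¹ • (z - 0))))
          = (4/3) ^ 4 * u z * bb 4 ((2 * R)⁻¹ • (z - 0)) := by
          field_simp
        rw [e]
        nlinarith
      · exact hu.continuous.continuousOn.integrableOn_compact (isCompact_closedBall _ _)
    · refine Eventually.of_forall fun z => ?_
      have := bb_nonneg (3 + 1) ((2 * R)⁻¹ • (z - 0))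
      have := (hpos z).le
      simp only [Pi.zero_apply]
      positivity
  calc _ ≤ _ := h3
    _ ≤ (4/3) ^ 4 * (2 * R) ^ 3 * ((|M 0| + |S 0|) * R ^ 2) := by gcongr
    _ = _ := by ring

lemma J_rel : 120 * ∫ y, bb 4 y = 156 * ∫ y, bb 5 y := by
  have h := int_bilap_zero (contDiff_bb 2 6 (by norm_num)) (compact_bb 5)
  have e := lap_bb 3
  simp only [Nat.reduceAdd] at e
  simp_rw [e] at h
  have i4 : Integrable (bb 4) := (continuous_bb 4).integrable_of_hasCompactSupport (compact_bb 3)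
  have i5 : Integrable (bb 5) := (continuous_bb 5).integrable_of_hasCompactSupport (compact_bb 4)
  rw [integral_sub (i4.const_mul _) (i5.const_mul _), integral_const_mul, integral_const_mul] at h
  push_cast at h
  linarith

lemma J_pos : 0 < ∫ y, bb 4 y := by
  refine (continuous_bb 4).integral_pos_of_hasCompactSupport_nonneg_nonzero (compact_bb 3) (bb_nonneg 4)
    (x := 0) ?_
  simp [bb, pp]

lemma repro {h : E3 → ℝ} (hc : Continuous h)
    (hw : ∀ φ : E3 → ℝ, ContDiff ℝ 4 φ → HasCompactSupport φ → ∫ x, h x * laplacian (laplacian φ) x = 0)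
    (x : E3) {R : ℝ} (hR : 0 < R) :
    2 * Aw 4 h x R - 3 * Aw 5 h x R = h x * (2 * (∫ y, bb 4 y) - 3 * ∫ y, bb 5 y) := by
  have hb5 : ContDiff ℝ 2 (bb 5) := contDiff_bb 2 5 (by norm_num)
  have hb6 : ContDiff ℝ 2 (bb 6) := contDiff_bb 2 6 (by norm_num)
  have hb7 : ContDiff ℝ 4 (bb 7) := contDiff_bb 4 7 (by norm_num)
  have bi : ∀ y, laplacian (laplacian (bb 7)) y = 168 * laplacian (bb 5) y + (-210) * laplacian (bb 6) y := by
    intro y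
    have e : laplacian (bb 7) = fun y => 168 * bb 5 y + (-210) * bb 6 y := by
      funext y
      have := lap_bb 4 y
      simp only [Nat.reduceAdd] at this
      rw [this]; push_cast; ring
    rw [e, lap_add' hb5 hb6]
  have dz : ∀ r, 0 < r → HasDerivAt (fun R => 2 * Aw 4 h x R - 3 * Aw 5 h x R) 0 r := by
    intro r hr
    refine (((Aw_deriv 2 hc x hr).const_mul 2).sub ((Aw_deriv 3 hc x hr).const_mul 3)).congr_deriv ?_
    set φ : E3 → ℝ := fun z => bb 7 (r⁻¹ • (z - x)) with hφ
    have h1 : ContDiff ℝ 4 φ := hb7.comp (by fun_prop)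
    have h2 : HasCompactSupport φ := by
      apply HasCompactSupport.intro (isCompact_closedBall x r)
      intro z hz
      rw [hφ]; simp only
      rw [bb_zero]
      rw [norm_smul, norm_inv, Real.norm_of_nonneg hr.le, inv_mul_eq_div, one_le_div hr]
      simp [dist_eq_norm] at hz; exact hz.le
    have h3 := hw φ h1 h2
    have e1 : laplacian φ = fun z => r⁻¹ ^ 2 * laplacian (bb 7) (r⁻¹ • (z - x)) + 0 * laplacian (bb 7) (r⁻¹ • (z - x)) := by
      funext z; rw [hφ, lap_comp (hb7.of_le (by norm_num))]; ring
    have hl : ContDiff ℝ 2 (laplacian (bb 7)) := contDiff_lap (by norm_num; exact hb7)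
    have hl' : ContDiff ℝ 2 (fun z => laplacian (bb 7) (r⁻¹ • (z - x))) := hl.comp (by fun_prop)
    have e2 : ∀ z, laplacian (laplacian φ) z = r⁻¹ ^ 4 * laplacian (laplacian (bb 7)) (r⁻¹ • (z - x)) := by
      intro z
      rw [e1, lap_add' hl' hl', lap_comp hl]; ring
    simp_rw [e2, bi] at h3
    have ii : ∀ m : ℕ, 2 < m → ∀ c : ℝ, Integrable (fun z => h z * (c * laplacian (bb m) (r⁻¹ • (z - x)))) := by
      intro m hm c
      obtain ⟨k, rfl⟩ : ∃ k, m = k + 3 := ⟨m - 3, by omega⟩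
      have : Continuous (laplacian (bb (k + 3))) :=
        (contDiff_lap (n := 0) (by simpa using contDiff_bb 2 (k + 3) (by omega))).continuous
      apply Continuous.integrable_of_hasCompactSupport (by fun_prop)
      apply HasCompactSupport.intro (isCompact_closedBall x r)
      intro z hz
      have : 1 ≤ ‖r⁻¹ • (z - x)‖ := by
        rw [norm_smul, norm_inv, Real.norm_of_nonneg hr.le, inv_mul_eq_div, one_le_div hr]
        simp [dist_eq_norm] at hz; exact hz.le
      rw [lap_bb, bb_zero _ this, bb_zero _ this]; ring
    rw [← integral_const_mul, ← integral_const_mul, ← integral_sub ((ii _ (by norm_num) _).const_mul 2)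
      ((ii _ (by norm_num) _).const_mul 3)]
    have : (0:ℝ) = 1 / 840 * 0 := by norm_num
    rw [this, ← h3, ← integral_const_mul]
    congr 1; funext z
    push_cast
    ring
  have cont : Continuous (fun R => 2 * Aw 4 h x R - 3 * Aw 5 h x R) :=
    ((Aw_continuous 3 hc x).const_mul 2).sub ((Aw_continuous 4 hc x).const_mul 3)
  have e0 : ∀ n, Aw n h x 0 = h x * ∫ y, bb n y := by
    intro n; unfold Aw; simp [integral_const_mul]
  have hconst : (2 * Aw 4 h x R - 3 * Aw 5 h x R) = 2 * Aw 4 h x 0 - 3 * Aw 5 h x 0 := by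
    have key : Convex ℝ (Set.Ici (0:ℝ)) := convex_Ici (0:ℝ)
    have m1 : AntitoneOn (fun R => 2 * Aw 4 h x R - 3 * Aw 5 h x R) (Set.Ici 0) := by
      apply antitoneOn_of_deriv_nonpos key cont.continuousOn
      · intro r hr; rw [interior_Ici] at hr
        exact (dz r hr).differentiableAt.differentiableWithinAt
      · intro r hr; rw [interior_Ici] at hr
        rw [(dz r hr).deriv]
    have m2 : MonotoneOn (fun R => 2 * Aw 4 h x R - 3 * Aw 5 h x R) (Set.Ici 0) := by
      apply monotoneOn_of_deriv_nonneg key cont.continuousOn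
      · intro r hr; rw [interior_Ici] at hr
        exact (dz r hr).differentiableAt.differentiableWithinAt
      · intro r hr; rw [interior_Ici] at hr
        rw [(dz r hr).deriv]
    exact le_antisymm (m1 (Set.mem_Ici.2 le_rfl) (Set.mem_Ici.2 hR.le) hR.le)
      (m2 (Set.mem_Ici.2 le_rfl) (Set.mem_Ici.2 hR.le) hR.le)
  rw [hconst, e0, e0]; ring


def dif {V F : Type*} [Add V] [Sub F] (a : V) (g : V → F) (x : V) : F := g (x + a) - g x

section difs
variable {V : Type*} [NormedAddCommGroup V] [NormedSpace ℝ V]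
variable {F : Type*} [NormedAddCommGroup F] [NormedSpace ℝ F]

lemma dif_bound {g : V → F} (hg : Differentiable ℝ g) {M : ℝ} (hM : ∀ y, ‖fderiv ℝ g y‖ ≤ M)
    (a y : V) : ‖dif a g y‖ ≤ M * ‖a‖ := by
  have := Convex.norm_image_sub_le_of_norm_fderiv_le (𝕜 := ℝ) (f := g) (s := Set.univ) (C := M)
    (x := y) (y := y + a) (fun x _ => hg x) (fun x _ => hM x) convex_univ trivial trivial
  simpa [dif] using this

lemma dif_diff {g : V → F} (hg : Differentiable ℝ g) (a : V) : Differentiable ℝ (dif a g) := by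
  unfold dif; fun_prop

lemma fderiv_dif {g : V → F} (hg : Differentiable ℝ g) (a : V) :
    fderiv ℝ (dif a g) = dif a (fderiv ℝ g) := by
  funext x
  have h1 : HasFDerivAt (fun x => g (x + a)) (fderiv ℝ g (x + a)) x := by
    have := (hg (x + a)).hasFDerivAt.comp x ((hasFDerivAt_id x).add_const a)
    simpa [Function.comp_def] using this
  exact (h1.sub (hg x).hasFDerivAt).fderiv

lemma dif1_bound {k : V → F} (hk : ContDiff ℝ 1 k) (hc : HasCompactSupport k) :
    ∃ M, 0 ≤ M ∧ ∀ c y : V, ‖dif c k y‖ ≤ M * ‖c‖ := by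
  have k1 : ContDiff ℝ 0 (fderiv ℝ k) := hk.fderiv_right (by norm_num)
  obtain ⟨M, hM⟩ := (hc.fderiv ℝ).exists_bound_of_continuous k1.continuous
  exact ⟨M, (norm_nonneg _).trans (hM 0), fun c y => dif_bound (hk.differentiable (by norm_num)) hM c y⟩

lemma dif2_bound {k : V → F} (hk : ContDiff ℝ 2 k) (hc : HasCompactSupport k) :
    ∃ M, 0 ≤ M ∧ ∀ b c y : V, ‖dif b (dif c k) y‖ ≤ M * ‖c‖ * ‖b‖ := by
  have k1 : ContDiff ℝ 1 (fderiv ℝ k) := hk.fderiv_right (by norm_num)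
  have d0 : Differentiable ℝ k := hk.differentiable (by norm_num)
  obtain ⟨M, hM0, hM⟩ := dif1_bound k1 (hc.fderiv ℝ)
  refine ⟨M, hM0, fun b c y => ?_⟩
  apply dif_bound (dif_diff d0 c)
  intro y
  rw [fderiv_dif d0]
  exact hM c y

lemma dif3_bound {k : V → F} (hk : ContDiff ℝ 3 k) (hc : HasCompactSupport k) :
    ∃ M, 0 ≤ M ∧ ∀ a b c y : V, ‖dif a (dif b (dif c k)) y‖ ≤ M * ‖c‖ * ‖b‖ * ‖a‖ := by
  have k1 : ContDiff ℝ 2 (fderiv ℝ k) := hk.fderiv_right (by norm_num)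
  have d0 : Differentiable ℝ k := hk.differentiable (by norm_num)
  obtain ⟨M, hM0, hM⟩ := dif2_bound k1 (hc.fderiv ℝ)
  refine ⟨M, hM0, fun a b c y => ?_⟩
  apply dif_bound (dif_diff (dif_diff d0 c) b)
  intro y
  rw [fderiv_dif (dif_diff d0 c), fderiv_dif d0]
  exact hM b c y

end difs

lemma dif_conv {h H : E3 → ℝ} (hc : Continuous h) {g : E3 → ℝ} (hg : Continuous g)
    (gs : HasCompactSupport g) {R : ℝ} (hR : 0 < R)
    (hH : ∀ x, H x = ∫ z, h z * (R⁻¹ ^ 3 * g (R⁻¹ • (z - x)))) (a : E3) :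
    Continuous (dif (-(R⁻¹ • a)) g) ∧ HasCompactSupport (dif (-(R⁻¹ • a)) g) ∧
    ∀ x, dif a H x = ∫ z, h z * (R⁻¹ ^ 3 * dif (-(R⁻¹ • a)) g (R⁻¹ • (z - x))) := by
  refine ⟨by unfold dif; fun_prop, ?_, fun x => ?_⟩
  · have e : HasCompactSupport (fun x => g (x + -(R⁻¹ • a))) :=
      gs.comp_homeomorph (Homeomorph.addRight (-(R⁻¹ • a)))
    exact e.sub gs
  · have ii : ∀ x, Integrable (fun z => h z * (R⁻¹ ^ 3 * g (R⁻¹ • (z - x)))) := by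
      intro x
      apply Continuous.integrable_of_hasCompactSupport (by fun_prop)
      apply HasCompactSupport.mul_left
      apply HasCompactSupport.mul_left
      have := gs.comp_homeomorph ((Homeomorph.addRight (-x)).trans
        (Homeomorph.smulOfNeZero (R⁻¹) (inv_ne_zero hR.ne')))
      have e : (fun z => g (R⁻¹ • (z - x))) = g ∘ ((Homeomorph.addRight (-x)).trans
        (Homeomorph.smulOfNeZero (R⁻¹) (inv_ne_zero hR.ne'))) := by
        funext z; simp [sub_eq_add_neg]
      rw [e]; exact this
    unfold dif
    rw [hH, hH, ← integral_sub (ii _) (ii _)]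
    congr 1; funext z
    have : R⁻¹ • (z - (x + a)) = R⁻¹ • (z - x) + -(R⁻¹ • a) := by
      rw [← smul_neg, ← smul_add]; congr 1; abel
    rw [this]; ring

lemma dif_zero_of_large {k : E3 → ℝ} {r : ℝ} (hk : ∀ y, r ≤ ‖y‖ → k y = 0) (a y : E3)
    (hy : r + ‖a‖ ≤ ‖y‖) : dif a k y = 0 := by
  unfold dif
  rw [hk y (by linarith [norm_nonneg a]), hk (y + a), sub_zero]
  have := norm_sub_norm_le y (-a)
  rw [sub_neg_eq_add, norm_neg] at this
  linarith

lemma third_dif_zero {h : E3 → ℝ} (hc : Continuous h)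
    (hw : ∀ φ : E3 → ℝ, ContDiff ℝ 4 φ → HasCompactSupport φ → ∫ x, h x * laplacian (laplacian φ) x = 0)
    (hgr : ∃ C, ∀ R, 1 ≤ R → ∫ z in Metric.closedBall (0:E3) R, ‖h z‖ ≤ C * R ^ 5)
    (a b c x : E3) : dif a (dif b (dif c h)) x = 0 := by
  obtain ⟨C, hC⟩ := hgr
  set k : E3 → ℝ := fun y => 2 * bb 4 y - 3 * bb 5 y with hk
  set c0 : ℝ := 2 * (∫ y, bb 4 y) - 3 * ∫ y, bb 5 y with hc0
  have c0ne : c0 ≠ 0 := by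
    have h1 := J_rel
    have h2 := J_pos
    rw [hc0]; intro h0; linarith
  have k3 : ContDiff ℝ 3 k := (contDiff_const.mul (contDiff_bb 3 4 (by norm_num))).sub
    (contDiff_const.mul (contDiff_bb 3 5 (by norm_num)))
  have kc : Continuous k := k3.continuous
  have k0 : ∀ y, 1 ≤ ‖y‖ → k y = 0 := by
    intro y hy; rw [hk]; simp only; rw [bb_zero 3 hy, bb_zero 4 hy]; ring
  have ks : HasCompactSupport k := by
    apply HasCompactSupport.intro (isCompact_closedBall (0 : E3) 1)
    intro y hy
    apply k0
    simp at hy; exact hy.le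
  obtain ⟨M, hM0, hM⟩ := dif3_bound k3 ks
  have rep : ∀ R, 0 < R → ∀ x, c0 * h x = ∫ z, h z * (R⁻¹ ^ 3 * k (R⁻¹ • (z - x))) := by
    intro R hR x
    rw [mul_comm, ← repro hc hw x hR, Aw_eq _ _ _ hR, Aw_eq _ _ _ hR, ← integral_const_mul, ← integral_const_mul,
      ← integral_sub ((integrable_Aw 3 hc x hR).const_mul 2) ((integrable_Aw 4 hc x hR).const_mul 3)]
    congr 1; funext z
    rw [hk]; simp only; ring
  have key : ∀ R, 1 ≤ R → ‖a‖ + ‖b‖ + ‖c‖ ≤ R → ‖x‖ ≤ R →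
      ‖c0 * dif a (dif b (dif c h)) x‖ ≤ (3 ^ 5 * C * M * ‖a‖ * ‖b‖ * ‖c‖) * R⁻¹ := by
    intro R hR1 hR2 hR3
    have hR : 0 < R := by linarith
    obtain ⟨g1c, g1s, g1⟩ := dif_conv hc kc ks hR (rep R hR) c
    obtain ⟨g2c, g2s, g2⟩ := dif_conv hc g1c g1s hR g1 b
    obtain ⟨g3c, g3s, g3⟩ := dif_conv hc g2c g2s hR g2 a
    set G := dif (-(R⁻¹ • a)) (dif (-(R⁻¹ • b)) (dif (-(R⁻¹ • c)) k)) with hG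
    have nrm : ∀ a : E3, ‖-(R⁻¹ • a)‖ = R⁻¹ * ‖a‖ := by
      intro a; rw [norm_neg, norm_smul, norm_inv, Real.norm_of_nonneg hR.le]
    have e : c0 * dif a (dif b (dif c h)) x = dif a (dif b (dif c (fun x => c0 * h x))) x := by
      simp only [dif]; ring
    have G0 : ∀ y, 2 ≤ ‖y‖ → G y = 0 := by
      intro y hy
      have s1 := fun y hy => dif_zero_of_large k0 (-(R⁻¹ • c)) y hy
      have s2 := fun y hy => dif_zero_of_large s1 (-(R⁻¹ • b)) y hy
      have s3 := fun y hy => dif_zero_of_large s2 (-(R⁻¹ • a)) y hy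
      apply s3
      rw [nrm, nrm, nrm]
      have : R⁻¹ * (‖a‖ + ‖b‖ + ‖c‖) ≤ 1 := by
        rw [inv_mul_eq_div, div_le_one hR]; exact hR2
      linarith
    have GB : ∀ y, ‖G y‖ ≤ M * ‖a‖ * ‖b‖ * ‖c‖ * R⁻¹ ^ 3 := by
      intro y
      have := hM (-(R⁻¹ • a)) (-(R⁻¹ • b)) (-(R⁻¹ • c)) y
      rw [nrm, nrm, nrm] at this
      refine this.trans (le_of_eq ?_)
      ring
    rw [e, g3]
    have e2 : ∫ z, h z * (R⁻¹ ^ 3 * G (R⁻¹ • (z - x)))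
        = ∫ z in Metric.closedBall (0:E3) (3 * R), h z * (R⁻¹ ^ 3 * G (R⁻¹ • (z - x))) := by
      symm
      apply setIntegral_eq_integral_of_forall_compl_eq_zero
      intro z hz
      rw [G0, mul_zero, mul_zero]
      rw [norm_smul, norm_inv, Real.norm_of_nonneg hR.le, inv_mul_eq_div, le_div_iff₀ hR]
      simp at hz
      have := norm_sub_norm_le z x
      linarith
    rw [e2]
    have i1 : IntegrableOn (fun z => ‖h z‖ * (R⁻¹ ^ 3 * (M * ‖a‖ * ‖b‖ * ‖c‖ * R⁻¹ ^ 3))) (Metric.closedBall (0:E3) (3 * R)) :=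
      (by fun_prop : Continuous fun z => ‖h z‖ * (R⁻¹ ^ 3 * (M * ‖a‖ * ‖b‖ * ‖c‖ * R⁻¹ ^ 3))).continuousOn.integrableOn_compact (isCompact_closedBall _ _)
    calc _ ≤ ∫ z in Metric.closedBall (0:E3) (3 * R), ‖h z‖ * (R⁻¹ ^ 3 * (M * ‖a‖ * ‖b‖ * ‖c‖ * R⁻¹ ^ 3)) := by
          apply norm_integral_le_of_norm_le i1
          refine Eventually.of_forall fun z => ?_
          rw [norm_mul, norm_mul, Real.norm_of_nonneg (by positivity : 0 ≤ R⁻¹ ^ 3)]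
          have := GB (R⁻¹ • (z - x))
          gcongr
      _ = (∫ z in Metric.closedBall (0:E3) (3 * R), ‖h z‖) * (R⁻¹ ^ 3 * (M * ‖a‖ * ‖b‖ * ‖c‖ * R⁻¹ ^ 3)) := by
          rw [integral_mul_const]
      _ ≤ (C * (3 * R) ^ 5) * (R⁻¹ ^ 3 * (M * ‖a‖ * ‖b‖ * ‖c‖ * R⁻¹ ^ 3)) := by
          gcongr
          exact hC _ (by linarith)
      _ = _ := by field_simp
  have lim : Tendsto (fun R : ℝ => (3 ^ 5 * C * M * ‖a‖ * ‖b‖ * ‖c‖) * R⁻¹) atTop (𝓝 0) := by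
    have := tendsto_inv_atTop_zero (𝕜 := ℝ) |>.const_mul (3 ^ 5 * C * M * ‖a‖ * ‖b‖ * ‖c‖)
    rwa [mul_zero] at this
  have le0 : ‖c0 * dif a (dif b (dif c h)) x‖ ≤ 0 := by
    apply ge_of_tendsto lim
    filter_upwards [eventually_ge_atTop 1, eventually_ge_atTop (‖a‖ + ‖b‖ + ‖c‖), eventually_ge_atTop ‖x‖] with R h1 h2 h3
    exact key R h1 h2 h3
  have := norm_le_zero_iff.1 le0
  exact (mul_eq_zero.1 this).resolve_left c0ne

noncomputable def vv (f : E3 → ℝ) (x : E3) : ℝ := (8 * π)⁻¹ * ∫ y, (‖x - y‖ - ‖y‖) * f y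

lemma abs_nsub (x y : E3) : |‖x - y‖ - ‖y‖| ≤ ‖x‖ := by
  have h := abs_norm_sub_norm_le (x - y) (-y)
  simpa using h

lemma vv_int {f : E3 → ℝ} (hi : Integrable f) (x : E3) :
    Integrable (fun y => (‖x - y‖ - ‖y‖) * f y) := by
  refine hi.bdd_mul (c := ‖x‖) (by fun_prop) (Eventually.of_forall fun y => ?_)
  exact abs_nsub x y

lemma vv_lip {f : E3 → ℝ} (hi : Integrable f) (h0 : ∀ x, 0 ≤ f x) (x x' : E3) :
    |vv f x - vv f x'| ≤ ((8 * π)⁻¹ * ∫ y, f y) * ‖x - x'‖ := by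
  unfold vv
  rw [← mul_sub, ← integral_sub (vv_int hi x) (vv_int hi x'), abs_mul, abs_of_pos (by positivity : 0 < (8 * π)⁻¹),
    mul_assoc]
  gcongr
  rw [← integral_mul_const, ← Real.norm_eq_abs]
  apply norm_integral_le_of_norm_le (hi.mul_const _)
  refine Eventually.of_forall fun y => ?_
  rw [← sub_mul, norm_mul, Real.norm_of_nonneg (h0 y), mul_comm]
  gcongr
  · exact h0 y
  have := abs_norm_sub_norm_le (x - y) (x' - y)
  simpa using this

lemma vv_zero (f : E3 → ℝ) : vv f 0 = 0 := by simp [vv]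

lemma vv_abs {f : E3 → ℝ} (hi : Integrable f) (h0 : ∀ x, 0 ≤ f x) (x : E3) :
    |vv f x| ≤ ((8 * π)⁻¹ * ∫ y, f y) * ‖x‖ := by
  have := vv_lip hi h0 x 0
  rwa [vv_zero, sub_zero, sub_zero] at this

lemma vv_cont {f : E3 → ℝ} (hi : Integrable f) (h0 : ∀ x, 0 ≤ f x) : Continuous (vv f) := by
  have : LipschitzWith (Real.toNNReal ((8 * π)⁻¹ * ∫ y, f y)) (vv f) := by
    apply LipschitzWith.of_dist_le_mul
    intro x y
    rw [Real.dist_eq, dist_eq_norm, Real.coe_toNNReal _ (by have := integral_nonneg (μ := volume) (f := f) h0; positivity)]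
    exact vv_lip hi h0 x y
  exact this.continuous

lemma vv_weak {f : E3 → ℝ} (hi : Integrable f) (hc : Continuous f) {φ : E3 → ℝ} (hφ : ContDiff ℝ 4 φ)
    (hs : HasCompactSupport φ) :
    ∫ x, vv f x * laplacian (laplacian φ) x = - ∫ y, f y * φ y := by
  set B := laplacian (laplacian φ) with hB
  have Bc : Continuous B := bilap_cont hφ
  have Bs : HasCompactSupport B := compact_lap (compact_lap hs)
  have B0 : ∫ x, B x = 0 := int_bilap_zero (contDiff_lap (by norm_num; exact hφ)) (compact_lap hs)
  have i1 : Integrable (fun x => ‖x‖ * B x) :=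
    (by fun_prop : Continuous fun x => ‖x‖ * B x).integrable_of_hasCompactSupport (Bs.mul_left)
  have key : ∀ y, ∫ x, (‖x - y‖ - ‖y‖) * B x = -(8 * π) * φ y := by
    intro y
    have i2 : Integrable (fun x => ‖x - y‖ * B x) :=
      (by fun_prop : Continuous fun x => ‖x - y‖ * B x).integrable_of_hasCompactSupport (Bs.mul_left)
    have i3 : Integrable (fun x => ‖y‖ * B x) :=
      (by fun_prop : Continuous fun x => ‖y‖ * B x).integrable_of_hasCompactSupport (Bs.mul_left)
    simp only [sub_mul]
    rw [integral_sub i2 i3, integral_const_mul, B0, mul_zero, sub_zero]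
    exact fund hφ hs y
  have ip : Integrable (Function.uncurry fun (x y : E3) => (‖x - y‖ - ‖y‖) * f y * B x) (volume.prod volume) := by
    have := i1.mul_prod hi
    refine this.mono ?_ ?_
    · apply Continuous.aestronglyMeasurable
      simp only [Function.uncurry_def]
      fun_prop
    · refine Eventually.of_forall fun p => ?_
      simp only [Function.uncurry_def, norm_mul, norm_norm]
      have := abs_nsub p.1 p.2
      rw [← Real.norm_eq_abs] at this
      calc _ ≤ ‖p.1‖ * ‖f p.2‖ * ‖B p.1‖ := by gcongr
        _ = _ := by ring
  have e1 : ∀ x, vv f x * B x = (8 * π)⁻¹ * ∫ y, (‖x - y‖ - ‖y‖) * f y * B x := by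
    intro x
    rw [integral_mul_const]
    unfold vv; ring
  simp only [e1]
  rw [integral_const_mul, integral_integral_swap ip]
  have e2 : ∀ y, ∫ x, (‖x - y‖ - ‖y‖) * f y * B x = -(8 * π) * (f y * φ y) := by
    intro y
    have : ∀ x, (‖x - y‖ - ‖y‖) * f y * B x = f y * ((‖x - y‖ - ‖y‖) * B x) := fun x => by ring
    simp only [this]
    rw [integral_const_mul, key]; ring
  simp only [e2]
  rw [integral_const_mul]
  have := Real.pi_ne_zero
  field_simp

lemma u_weak {u φ : E3 → ℝ} (hu : ContDiff ℝ 4 u) (hφ : ContDiff ℝ 4 φ) (hs : HasCompactSupport φ) :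
    ∫ x, u x * laplacian (laplacian φ) x = ∫ x, laplacian (laplacian u) x * φ x := by
  have a : ContDiff ℝ 2 (laplacian φ) := contDiff_lap (by norm_num; exact hφ)
  have b : ContDiff ℝ 2 (laplacian u) := contDiff_lap (by norm_num; exact hu)
  rw [ibp2 (hu.of_le (by norm_num)) a (compact_lap hs), ibp2 b (hφ.of_le (by norm_num)) hs]

lemma ball_norm_int (b R : ℝ) (hb : 0 ≤ b) (hR : 1 ≤ R) :
    ∫ z in Metric.closedBall (0:E3) R, b * ‖z‖ ≤ b * (volume (Metric.ball (0:E3) 1)).toReal * R ^ 5 := by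
  have hv : (volume (Metric.closedBall (0:E3) R)).toReal = R ^ 3 * (volume (Metric.ball (0:E3) 1)).toReal := by
    rw [Measure.addHaar_closedBall _ _ (by linarith)]
    rw [ENNReal.toReal_mul, ENNReal.toReal_ofReal (by positivity)]
    simp
  calc _ ≤ ∫ z in Metric.closedBall (0:E3) R, b * R := by
        apply setIntegral_mono_on
        · exact (by fun_prop : Continuous fun z : E3 => b * ‖z‖).continuousOn.integrableOn_compact (isCompact_closedBall _ _)
        · exact (by fun_prop : Continuous fun z : E3 => b * R).continuousOn.integrableOn_compact (isCompact_closedBall _ _)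
        · exact measurableSet_closedBall
        · intro z hz
          have : ‖z‖ ≤ R := by simpa using hz
          gcongr
    _ = (R ^ 3 * (volume (Metric.ball (0:E3) 1)).toReal) * (b * R) := by
        rw [setIntegral_const, smul_eq_mul, measureReal_def, hv]
    _ = b * (volume (Metric.ball (0:E3) 1)).toReal * R ^ 4 := by ring
    _ ≤ _ := by
        gcongr
        norm_num

lemma dif3 {u f : E3 → ℝ} (hu : ContDiff ℝ 4 u) (hpos : ∀ x, 0 < u x) (hi : Integrable f) (hc : Continuous f)
    (h0 : ∀ x, 0 ≤ f x) (hs : ∀ x, laplacian (laplacian u) x + f x = 0) (a b c x : E3) :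
    dif a (dif b (dif c (fun x => u x - vv f x))) x = 0 := by
  have vc := vv_cont hi h0
  have uc := hu.continuous
  have hl : ∀ x, laplacian (laplacian u) x = - f x := fun x => by linarith [hs x]
  refine third_dif_zero (h := fun x => u x - vv f x) (by fun_prop) ?_ ?_ a b c x
  · intro φ hφ hφs
    have Bc : Continuous (laplacian (laplacian φ)) := bilap_cont hφ
    have Bs : HasCompactSupport (laplacian (laplacian φ)) := compact_lap (compact_lap hφs)
    simp only [sub_mul]
    rw [integral_sub, vv_weak hi hc hφ hφs, u_weak hu hφ hφs]
    · simp only [hl, neg_mul]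
      rw [integral_neg]; ring
    · exact (by fun_prop : Continuous fun x => u x * laplacian (laplacian φ) x).integrable_of_hasCompactSupport Bs.mul_left
    · exact (by fun_prop : Continuous fun x => vv f x * laplacian (laplacian φ) x).integrable_of_hasCompactSupport Bs.mul_left
  · obtain ⟨C, hC⟩ := growth hu hpos (fun x => by rw [hl]; linarith [h0 x])
    set β := ((8 * π)⁻¹ * ∫ y, f y) with hβ
    have hb : 0 ≤ β := by have := integral_nonneg (μ := volume) (f := f) h0; positivity
    refine ⟨C + β * (volume (Metric.ball (0:E3) 1)).toReal, fun R hR => ?_⟩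
    have iu : IntegrableOn u (Metric.closedBall (0:E3) R) := uc.continuousOn.integrableOn_compact (isCompact_closedBall _ _)
    have iv : IntegrableOn (fun z => β * ‖z‖) (Metric.closedBall (0:E3) R) :=
      (by fun_prop : Continuous fun z : E3 => β * ‖z‖).continuousOn.integrableOn_compact (isCompact_closedBall _ _)
    have ih : IntegrableOn (fun z => ‖u z - vv f z‖) (Metric.closedBall (0:E3) R) :=
      (by fun_prop : Continuous fun z => ‖u z - vv f z‖).continuousOn.integrableOn_compact (isCompact_closedBall _ _)
    calc _ ≤ ∫ z in Metric.closedBall (0:E3) R, (u z + β * ‖z‖) := by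
          apply integral_mono ih (iu.add iv)
          intro z
          have h1 := vv_abs hi h0 z
          have h2 := abs_sub (u z) (vv f z)
          rw [abs_of_pos (hpos z)] at h2
          simp only [Real.norm_eq_abs, Pi.add_apply]
          linarith
      _ = (∫ z in Metric.closedBall (0:E3) R, u z) + ∫ z in Metric.closedBall (0:E3) R, β * ‖z‖ := integral_add iu iv
      _ ≤ C * R ^ 5 + β * (volume (Metric.ball (0:E3) 1)).toReal * R ^ 5 := add_le_add (hC R hR) (ball_norm_int _ _ hb hR)
      _ = _ := by ring

lemma poly_struct {h : E3 → ℝ} (hc : Continuous h)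
    (h3 : ∀ a b c x, dif a (dif b (dif c h)) x = 0) :
    ∃ (A : E3 →ₗ[ℝ] E3 →ₗ[ℝ] ℝ) (L : E3 →L[ℝ] ℝ), (∀ x y, A x y = A y x) ∧
      ∀ x, h x = h 0 + L x + 1 / 2 * A x x := by
  set B : E3 → E3 → ℝ := fun a b => h (a + b) - h a - h b + h 0 with hB
  have e3 : ∀ a b c, h (a + b + c) - h (b + c) - h (a + c) + h c - h (a + b) + h b + h a - h 0 = 0 := by
    intro a b c
    have := h3 a b c 0
    simp only [dif] at this
    simp only [zero_add] at this
    rw [← this]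
    ring
  have sym : ∀ a b, B a b = B b a := by
    intro a b; simp only [hB]; rw [add_comm a b]; ring
  have addl : ∀ a b c, B (a + b) c = B a c + B b c := by
    intro a b c
    have := e3 a b c
    simp only [hB]; linarith
  have addr : ∀ a b c, B a (b + c) = B a b + B a c := by
    intro a b c
    rw [sym, addl, sym b, sym c]
  have Bcont : ∀ a, Continuous (B a) := fun a => by simp only [hB]; fun_prop
  have smr : ∀ a (r : ℝ) b, B a (r • b) = r * B a b := by
    intro a r b
    have := map_real_smul (AddMonoidHom.mk' (B a) (addr a)) (Bcont a) r b
    simpa using this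
  have sml : ∀ a (r : ℝ) b, B (r • a) b = r * B a b := by
    intro a r b
    rw [sym, smr, sym]
  let A : E3 →ₗ[ℝ] E3 →ₗ[ℝ] ℝ := LinearMap.mk₂ ℝ B addl (fun r a b => sml a r b) addr (fun r a b => smr a r b)
  have hA : ∀ x y, A x y = B x y := fun x y => rfl
  have l_add : ∀ x y, h (x + y) - h 0 - 1 / 2 * B (x + y) (x + y) =
      (h x - h 0 - 1 / 2 * B x x) + (h y - h 0 - 1 / 2 * B y y) := by
    intro x y
    rw [addl, addr, addr, sym y x]
    have : B x y = h (x + y) - h x - h y + h 0 := rfl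
    linarith
  have lc : Continuous (fun x => h x - h 0 - 1 / 2 * B x x) := by
    simp only [hB]; fun_prop
  let L : E3 →L[ℝ] ℝ := (AddMonoidHom.mk' (fun x => h x - h 0 - 1 / 2 * B x x) l_add).toRealLinearMap lc
  have hL : ∀ x, L x = h x - h 0 - 1 / 2 * B x x := fun x => rfl
  refine ⟨A, L, fun x y => by rw [hA, hA, sym], fun x => ?_⟩
  rw [hA, hL]; ring

lemma vv_lim {f : E3 → ℝ} (hi : Integrable f) (h0 : ∀ x, 0 ≤ f x) (R : E3 ≃ₗᵢ[ℝ] E3) (x₀ : E3) :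
    Tendsto (fun x => vv f (R x + x₀) / ‖x‖) (cocompact E3) (𝓝 ((8 * π)⁻¹ * ∫ y, f y)) := by
  have hn : Tendsto (fun x : E3 => ‖x‖) (cocompact E3) atTop := tendsto_norm_cocompact_atTop
  have hcg : (cocompact E3).IsCountablyGenerated := by
    rw [← Metric.cobounded_eq_cocompact, ← comap_norm_atTop]
    infer_instance
  have e : ∀ x, vv f (R x + x₀) / ‖x‖ = (8 * π)⁻¹ * ∫ y, ((‖R x + x₀ - y‖ - ‖y‖) / ‖x‖) * f y := by
    intro x
    unfold vv
    rw [mul_div_assoc, ← integral_div]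
    congr 2
    funext y
    ring
  simp only [e]
  apply Tendsto.const_mul
  apply tendsto_integral_filter_of_dominated_convergence (fun y => 2 * f y)
  · refine Eventually.of_forall fun x => ?_
    exact (by fun_prop : Continuous fun y => (‖R x + x₀ - y‖ - ‖y‖) / ‖x‖).aestronglyMeasurable.mul hi.aestronglyMeasurable
  · filter_upwards [hn.eventually_ge_atTop (‖x₀‖ + 1)] with x hx
    refine Eventually.of_forall fun y => ?_
    have hp : 0 < ‖x‖ := by have := norm_nonneg x₀; linarith
    rw [norm_mul, Real.norm_of_nonneg (h0 y)]
    refine mul_le_mul_of_nonneg_right ?_ (h0 y)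
    rw [norm_div, norm_norm, div_le_iff₀ hp]
    have h1 := abs_nsub (R x + x₀) y
    have h2 := norm_add_le (R x) x₀
    rw [LinearIsometryEquiv.norm_map] at h2
    rw [Real.norm_eq_abs]
    linarith
  · exact hi.const_mul 2
  · refine Eventually.of_forall fun y => ?_
    have : Tendsto (fun x : E3 => (‖R x + x₀ - y‖ - ‖y‖) / ‖x‖) (cocompact E3) (𝓝 1) := by
      rw [← tendsto_sub_nhds_zero_iff]
      apply squeeze_zero_norm' (a := fun x : E3 => (‖x₀ - y‖ + ‖y‖) / ‖x‖)
      · filter_upwards [hn.eventually_ge_atTop 1] with x hx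
        have hp : 0 < ‖x‖ := by linarith
        rw [div_sub_one hp.ne', norm_div, norm_norm]
        gcongr
        have h1 := abs_norm_sub_norm_le (R x + x₀ - y) (R x)
        rw [LinearIsometryEquiv.norm_map, show R x + x₀ - y - R x = x₀ - y by abel] at h1
        rw [Real.norm_eq_abs, show ‖R x + x₀ - y‖ - ‖y‖ - ‖x‖ = (‖R x + x₀ - y‖ - ‖x‖) - ‖y‖ by ring]
        have h2 := abs_sub (‖R x + x₀ - y‖ - ‖x‖) ‖y‖
        rw [abs_norm] at h2
        linarith
      · exact hn.const_div_atTop _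
    simpa using this.mul_const (f y)

lemma quad_nonneg {a b c : ℝ} (h : ∀ t : ℝ, 0 < t → 0 < a + b * t + c * t ^ 2) : 0 ≤ c := by
  by_contra hc
  push Not at hc
  have hp : 0 ≤ |b| + |a| := by positivity
  set t := (|b| + |a|) / (-c) + 1 with ht
  have hc' : 0 < -c := by linarith
  have t1 : 1 ≤ t := by
    have : 0 ≤ (|b| + |a|) / (-c) := by positivity
    linarith
  have h1 : (-c) * t = |b| + |a| - c := by
    rw [ht, mul_add, mul_div_cancel₀ _ hc'.ne']; ring
  have := h t (by linarith)
  have h2 : c * t ^ 2 = -(|b| + |a| - c) * t := by rw [← h1]; ring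
  rw [h2] at this
  have := le_abs_self a
  have := le_abs_self b
  nlinarith [abs_nonneg a, abs_nonneg b]

lemma lin_lt {u f : E3 → ℝ} {q : ℝ} (hq : 1 < q) (hpos : ∀ x, 0 < u x) (huc : Continuous u) (hf : ∀ x, f x = u x ^ (-q))
    (hi : Integrable f) {A : E3 →ₗ[ℝ] E3 →ₗ[ℝ] ℝ} {L : E3 →L[ℝ] ℝ} {k : ℝ} (hsym : ∀ x y, A x y = A y x)
    (hh : ∀ x, u x - vv f x = k + L x + 1 / 2 * A x x) {e : E3} (he : ‖e‖ = 1) (hA : ∀ x, A e x = 0) :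
    - ((8 * π)⁻¹ * ∫ y, f y) < L e := by
  by_contra hcon
  push Not at hcon
  have h0 : ∀ x, 0 ≤ f x := fun x => by rw [hf]; exact Real.rpow_nonneg (hpos x).le _
  set β := (8 * π)⁻¹ * ∫ y, f y with hβ
  have hb : 0 ≤ β := by have := integral_nonneg (μ := volume) (f := f) h0; positivity
  have vc := vv_cont hi h0
  obtain ⟨K, hK⟩ := (isCompact_closedBall (0:E3) 1).exists_bound_of_continuousOn
    (f := fun x => u x - vv f x) (by fun_prop)
  have ub : ∀ t : ℝ, 0 ≤ t → ∀ z : E3, ‖z‖ ≤ 1 → u (t • e + z) ≤ β + K := by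
    intro t ht z hz
    have h1 := hh (t • e + z)
    have h2 := hh z
    have h3 := hK z (by simpa using hz)
    have h4 := vv_abs hi h0 (t • e + z)
    have h5 : ‖t • e + z‖ ≤ t + 1 := by
      have := norm_add_le (t • e) z
      rw [norm_smul, he, Real.norm_of_nonneg ht] at this
      linarith
    have h6 : β * ‖t • e + z‖ ≤ β * (t + 1) := by gcongr
    have h7 : A (t • e + z) (t • e + z) = A z z := by
      simp only [map_add, map_smul, LinearMap.add_apply, LinearMap.smul_apply, hA, hsym z e, smul_eq_mul]
      ring
    have h8 : L (t • e + z) = t * L e + L z := by simp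
    rw [h7, h8] at h1
    have h9 := le_abs_self (vv f (t • e + z))
    have h10 := le_abs_self (u z - vv f z)
    rw [Real.norm_eq_abs] at h3
    have h11 : t * L e ≤ t * (-β) := by gcongr
    nlinarith
  have Kp : 0 < β + K := lt_of_lt_of_le (hpos _) (ub 0 le_rfl 0 (by simp))
  have fb : ∀ n : ℕ, Metric.ball ((3 * (n:ℝ)) • e) 1 ⊆ {x | (β + K) ^ (-q) ≤ ‖f x‖} := by
    intro n x hx
    have hx' : ‖x - (3 * (n:ℝ)) • e‖ ≤ 1 := by
      have := Metric.mem_ball.1 hx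
      rw [dist_eq_norm] at this
      exact this.le
    have := ub (3 * n) (by positivity) (x - (3 * (n:ℝ)) • e) hx'
    rw [add_sub_cancel] at this
    simp only [Set.mem_setOf_eq]
    rw [Real.norm_of_nonneg (h0 x), hf]
    exact Real.rpow_le_rpow_of_nonpos (hpos x) this (by linarith)
  have fin := hi.measure_norm_ge_lt_top (Real.rpow_pos_of_pos Kp (-q))
  have disj : Pairwise (Function.onFun Disjoint fun n : ℕ => Metric.ball ((3 * (n:ℝ)) • e) 1) := by
    intro m n hmn
    apply Metric.ball_disjoint_ball
    rw [dist_eq_norm, ← sub_smul, norm_smul, he, mul_one, ← mul_sub, norm_mul, Real.norm_eq_abs, Real.norm_eq_abs]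
    have : (1:ℝ) ≤ |(m:ℝ) - n| := by
      have h : (1:ℤ) ≤ |(m:ℤ) - n| := Int.one_le_abs (by omega)
      exact_mod_cast h
    rw [abs_of_pos (by norm_num : (0:ℝ) < 3)]
    linarith
  have m1 := measure_iUnion (μ := (volume : Measure E3)) disj (fun n => Metric.isOpen_ball.measurableSet)
  have m2 : ∀ n : ℕ, volume (Metric.ball ((3 * (n:ℝ)) • e) 1) = volume (Metric.ball (0:E3) 1) :=
    fun n => Measure.addHaar_ball_center _ _ _
  simp only [m2] at m1
  rw [ENNReal.tsum_const_eq_top_of_ne_zero (Metric.measure_ball_pos _ _ one_pos).ne'] at m1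
  have := measure_mono (μ := (volume : Measure E3)) (Set.iUnion_subset fb)
  rw [m1] at this
  exact absurd fin (not_lt.2 (this))

lemma diagonalize (A : E3 →ₗ[ℝ] E3 →ₗ[ℝ] ℝ) (hsym : ∀ x y, A x y = A y x) :
    ∃ (R : E3 ≃ₗᵢ[ℝ] E3) (l : Fin 3 → ℝ), ∀ i y, A (R (ee i)) (R y) = l i * y i := by
  let T : E3 →ₗ[ℝ] E3 :=
    { toFun := fun x => (InnerProductSpace.toDual ℝ E3).symm (LinearMap.toContinuousLinearMap (A x))
      map_add' := fun x y => by simp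
      map_smul' := fun r x => by simp }
  have hT : ∀ x y, inner ℝ (T x) y = A x y := by
    intro x y
    show inner ℝ ((InnerProductSpace.toDual ℝ E3).symm (LinearMap.toContinuousLinearMap (A x))) y = _
    rw [InnerProductSpace.toDual_symm_apply]
    rfl
  have sT : T.IsSymmetric := by
    intro x y
    rw [hT, real_inner_comm, hT, hsym]
  have hn : Module.finrank ℝ E3 = 3 := by simp
  let b := sT.eigenvectorBasis hn
  refine ⟨b.repr.symm, sT.eigenvalues hn, fun i y => ?_⟩
  have h1 : b.repr.symm (ee i) = b i := by
    rw [ee]; exact b.repr_symm_single i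
  have h2 := sT.apply_eigenvectorBasis hn i
  rw [h1, ← hT]
  show inner ℝ (T (sT.eigenvectorBasis hn i)) _ = _
  rw [h2, inner_smul_left]
  have h3 : inner ℝ (b i) (b.repr.symm y) = y i := by
    rw [← b.repr_apply_apply]; simp
  simp only [RCLike.ofReal_real_eq_id, id, conj_trivial]
  congr 1

/-- **Theorem (classification).** If `u` is a positive `C⁴` solution of `Δ²u + u^{-q} = 0` on ℝ³
with `q > 1` and `β = (8π)⁻¹ ∫ u^{-q} < ∞`, then, up to a rotation `R` and a translation `x₀`,
`u(Rx + x₀) = (β + o(1))|x| + ∑_{i∈I₁} aᵢ xᵢ² + ∑_{i∈I₂} bᵢ xᵢ + c` with `I₁, I₂` disjoint,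
`aᵢ > 0`, `|bᵢ| < β` and `c > 0`. -/
theorem classification_of_finite_mass_solutions
    (q : ℝ) (hq : 1 < q) (u : EuclideanSpace ℝ (Fin 3) → ℝ)
    (hreg : ContDiff ℝ 4 u) (hpos : ∀ x, 0 < u x)
    (hsol : ∀ x, laplacian (laplacian u) x + (u x) ^ (-q) = 0)
    (hint : Integrable (fun x => (u x) ^ (-q))) :
    ∃ (R : EuclideanSpace ℝ (Fin 3) ≃ₗᵢ[ℝ] EuclideanSpace ℝ (Fin 3))
      (x₀ : EuclideanSpace ℝ (Fin 3)) (I₁ I₂ : Finset (Fin 3)) (a b : Fin 3 → ℝ) (c : ℝ),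
      Disjoint I₁ I₂ ∧
      (∀ i ∈ I₁, 0 < a i) ∧
      (∀ i ∈ I₂, |b i| < (8 * π)⁻¹ * ∫ x, (u x) ^ (-q)) ∧
      0 < c ∧
      Tendsto
        (fun x : EuclideanSpace ℝ (Fin 3) =>
          (u (R x + x₀) - (∑ i ∈ I₁, a i * (x i) ^ 2 + ∑ i ∈ I₂, b i * x i + c)) / ‖x‖)
        (cocompact (EuclideanSpace ℝ (Fin 3)))
        (𝓝 ((8 * π)⁻¹ * ∫ x, (u x) ^ (-q))) := by
  set f : E3 → ℝ := fun x => (u x) ^ (-q) with hf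
  have h0 : ∀ x, 0 ≤ f x := fun x => Real.rpow_nonneg (hpos x).le _
  have uc := hreg.continuous
  have fc : Continuous f := uc.rpow_const (fun x => Or.inl (hpos x).ne')
  have vc := vv_cont hint h0
  obtain ⟨A, L, hsym, hh⟩ := poly_struct (h := fun x => u x - vv f x) (by fun_prop)
    (dif3 hreg hpos hint fc h0 hsol)
  set k : ℝ := u 0 - vv f 0 with hk
  replace hh : ∀ x, u x - vv f x = k + L x + 1 / 2 * A x x := hh
  obtain ⟨R, l, hR⟩ := diagonalize A hsym
  set β := (8 * π)⁻¹ * ∫ y, f y with hβ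
  have nR : ∀ i, ‖R (ee i)‖ = 1 := fun i => by rw [LinearIsometryEquiv.norm_map]; simp [ee]
  have hl : ∀ i, 0 ≤ l i := by
    intro i
    have : 0 ≤ 1 / 2 * A (R (ee i)) (R (ee i)) := by
      apply quad_nonneg (a := k) (b := L (R (ee i)) + β)
      intro t ht
      have h1 := hh (t • R (ee i))
      have h2 := vv_abs hint h0 (t • R (ee i))
      have h3 := le_abs_self (vv f (t • R (ee i)))
      have h4 := hpos (t • R (ee i))
      rw [norm_smul, nR, Real.norm_of_nonneg ht.le] at h2
      simp only [map_smul, LinearMap.smul_apply, smul_eq_mul] at h1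
      nlinarith
    rw [hR] at this
    have e1 : (ee i) i = 1 := by simp [ee]
    rw [e1] at this
    linarith
  have dec : ∀ x : E3, R x = ∑ i, x i • R (ee i) := by
    intro x
    have : x = ∑ i, x i • ee i := by
      ext j
      simp [ee, Fin.sum_univ_three]
      fin_cases j <;> simp
    conv_lhs => rw [this]
    simp
  have hLR : ∀ x : E3, L (R x) = ∑ i, x i * L (R (ee i)) := by
    intro x
    rw [dec x]; simp
  have hAR : ∀ x y : E3, A (R x) (R y) = ∑ i, x i * (l i * y i) := by
    intro x y
    rw [dec x]
    simp only [map_sum, map_smul, LinearMap.sum_apply, LinearMap.smul_apply, smul_eq_mul, hR]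
  let y₀ : E3 := WithLp.toLp 2 (fun i => if l i = 0 then 0 else - L (R (ee i)) / l i)
  have hy : ∀ i, y₀ i = if l i = 0 then 0 else - L (R (ee i)) / l i := fun i => rfl
  refine ⟨R, R y₀, Finset.univ.filter (fun i => ¬ l i = 0), Finset.univ.filter (fun i => l i = 0),
    fun i => l i / 2, fun i => L (R (ee i)), 1, ?_, ?_, ?_, one_pos, ?_⟩
  · rw [Finset.disjoint_left]
    intro i h1 h2
    exact (Finset.mem_filter.1 h1).2 (Finset.mem_filter.1 h2).2
  · intro i h1
    have h2 := (Finset.mem_filter.1 h1).2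
    have := lt_of_le_of_ne (hl i) (Ne.symm h2)
    exact half_pos this
  · intro i h1
    have h2 := (Finset.mem_filter.1 h1).2
    have hz : ∀ x, A (R (ee i)) x = 0 := by
      intro x
      have := hR i (R.symm x)
      rw [R.apply_symm_apply, h2, zero_mul] at this
      exact this
    have g1 := lin_lt hq hpos uc (fun _ => rfl) hint hsym hh (nR i) hz
    have g2 := lin_lt hq hpos uc (fun _ => rfl) hint hsym hh (e := -R (ee i)) (by rw [norm_neg, nR]) (fun x => by rw [map_neg, LinearMap.neg_apply, hz, neg_zero])
    rw [map_neg] at g2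
    rw [abs_lt]
    exact ⟨g1, by linarith⟩
  · have key : ∀ x : E3, u (R x + R y₀) - (∑ i with ¬ l i = 0, l i / 2 * (x i) ^ 2 + ∑ i with l i = 0, L (R (ee i)) * x i + 1)
        = vv f (R x + R y₀) + (k + L (R y₀) + 1 / 2 * A (R y₀) (R y₀) - 1) := by
      intro x
      have h1 := hh (R x + R y₀)
      have h2 : A (R x + R y₀) (R x + R y₀) = A (R x) (R x) + 2 * A (R x) (R y₀) + A (R y₀) (R y₀) := by
        simp only [map_add, LinearMap.add_apply]
        rw [hsym (R y₀) (R x)]; ring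
      rw [h2, map_add] at h1
      have h3 : L (R x) + 1 / 2 * A (R x) (R x) + A (R x) (R y₀) =
          ∑ i with ¬ l i = 0, l i / 2 * (x i) ^ 2 + ∑ i with l i = 0, L (R (ee i)) * x i := by
        rw [hLR, hAR, hAR, Finset.mul_sum, Finset.sum_filter, Finset.sum_filter, ← Finset.sum_add_distrib,
          ← Finset.sum_add_distrib, ← Finset.sum_add_distrib]
        refine Finset.sum_congr rfl fun i _ => ?_
        rw [hy]
        by_cases hz : l i = 0
        · simp [hz]; ring
        · simp only [hz, if_false, not_false_eq_true, if_true]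
          field_simp
          ring
      linarith
    have t1 := vv_lim hint h0 R (R y₀)
    have t2 : Tendsto (fun x : E3 => (k + L (R y₀) + 1 / 2 * A (R y₀) (R y₀) - 1) / ‖x‖) (cocompact E3) (𝓝 0) :=
      (tendsto_norm_cocompact_atTop (E := E3)).const_div_atTop _
    have t3 := t1.add t2
    rw [add_zero] at t3
    refine t3.congr fun x => ?_
    rw [key x, add_div]
end

section
/- Let q > 1 and let 0 < κ₁ < κ₂ be real numbers. Then there exists a solution u to Δ²u + u^{−q} = 0 in ℝ³ with u > 0, such that u is not radially symmetric about any point, and liminf_{|x|→∞} u(x)/|x|² = κ₁ and limsup_{|x|→∞} u(x)/|x|² = κ₂. -/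
open MeasureTheory Filter Topology Real

local notation "E3" => EuclideanSpace ℝ (Fin 3)

/-- trace of a bilinear form -/
noncomputable def trL : (E3 →L[ℝ] E3 →L[ℝ] ℝ) →L[ℝ] ℝ :=
  ∑ i : Fin 3, (ContinuousLinearMap.apply ℝ ℝ (EuclideanSpace.single i (1:ℝ) : E3)).comp
    (ContinuousLinearMap.apply ℝ (E3 →L[ℝ] ℝ) (EuclideanSpace.single i (1:ℝ) : E3))

theorem trL_apply (B : E3 →L[ℝ] E3 →L[ℝ] ℝ) :
    trL B = ∑ i : Fin 3, B (EuclideanSpace.single i (1:ℝ)) (EuclideanSpace.single i (1:ℝ)) := by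
  simp [trL]

theorem laplacian_eq (u : E3 → ℝ) (x : E3) :
    laplacian u x = trL (fderiv ℝ (fderiv ℝ u) x) := by
  rw [trL_apply, laplacian]
  simp [iteratedFDeriv_two_apply]

theorem laplacian_eq_fun (u : E3 → ℝ) :
    laplacian u = fun x => trL (fderiv ℝ (fderiv ℝ u) x) := funext (laplacian_eq u)

theorem laplacian_congr {u v : E3 → ℝ} {x : E3} (h : u =ᶠ[𝓝 x] v) :
    laplacian u =ᶠ[𝓝 x] laplacian v := by
  have := (h.fderiv (𝕜 := ℝ)).fderiv (𝕜 := ℝ)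
  filter_upwards [this] with y hy
  rw [laplacian_eq, laplacian_eq, hy]

theorem contDiff_laplacian {u : E3 → ℝ} {n : ℕ} (hu : ContDiff ℝ (n + 2 : ℕ) u) :
    ContDiff ℝ n (laplacian u) := by
  rw [laplacian_eq_fun]
  have ht := ContinuousLinearMap.contDiff (𝕜 := ℝ) (E := E3 →L[ℝ] E3 →L[ℝ] ℝ) (F := ℝ) (n := n) trL
  suffices h : ContDiff ℝ n (fun x => fderiv ℝ (fderiv ℝ u) x) from ht.comp h
  refine ContDiff.fderiv_right (m := n) (n := (n+1 : ℕ)) ?_ (by norm_cast)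
  exact ContDiff.fderiv_right hu (by norm_cast)

theorem laplacian_add {u v : E3 → ℝ} (hu : ContDiff ℝ 2 u) (hv : ContDiff ℝ 2 v) :
    laplacian (fun x => u x + v x) = fun x => laplacian u x + laplacian v x := by
  ext x
  simp only [laplacian_eq]
  have h1 : fderiv ℝ (fun x => u x + v x) = fun x => fderiv ℝ u x + fderiv ℝ v x := by
    ext1 y
    exact fderiv_fun_add (hu.differentiable (by norm_num) y) (hv.differentiable (by norm_num) y)
  have du : ContDiff ℝ 1 (fderiv ℝ u) := ContDiff.fderiv_right hu (by norm_num)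
  have dv : ContDiff ℝ 1 (fderiv ℝ v) := ContDiff.fderiv_right hv (by norm_num)
  rw [h1, fderiv_fun_add (du.differentiable (by norm_num) x) (dv.differentiable (by norm_num) x),
    map_add]

theorem laplacian_const_mul {u : E3 → ℝ} (hu : ContDiff ℝ 2 u) (c : ℝ) :
    laplacian (fun x => c * u x) = fun x => c * laplacian u x := by
  ext x
  simp only [laplacian_eq]
  have h1 : fderiv ℝ (fun x => c * u x) = fun x => c • fderiv ℝ u x := by
    ext1 y
    exact fderiv_const_mul (hu.differentiable (by norm_num) y) c
  have du : ContDiff ℝ 1 (fderiv ℝ u) := ContDiff.fderiv_right hu (by norm_num)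
  rw [h1, fderiv_fun_const_smul (du.differentiable (by norm_num) x), map_smul, smul_eq_mul]

theorem laplacian_comp_sub (u : E3 → ℝ) (x : E3) :
    laplacian (fun z => u (x - z)) = fun z => laplacian u (x - z) := by
  ext z
  rw [laplacian_eq, laplacian_eq]
  have h1 : ∀ {G : Type} [NormedAddCommGroup G] [NormedSpace ℝ G] (w : E3 → G),
      fderiv ℝ (fun z => w (x - z)) = fun z => - fderiv ℝ w (x - z) := by
    intro G _ _ w
    ext1 y
    have := fderiv_comp_smul (𝕜 := ℝ) (f := fun t => w (x + t)) (x := y) (-1 : ℝ)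
    simp only [neg_smul, one_smul, ← sub_eq_add_neg] at this
    rw [this, fderiv_comp_add_left, sub_eq_add_neg]
  rw [h1, show (fun z => - fderiv ℝ u (x - z)) = (fun z => -((fun y => fderiv ℝ u (x - y)) z)) from rfl, fderiv_fun_neg, h1]
  simp

/-- one step of differentiation under the integral sign -/
theorem oneStep {G : Type} [NormedAddCommGroup G] [NormedSpace ℝ G]
    {F : E3 → E3 → G} {F' : E3 → E3 → (E3 →L[ℝ] G)}
    (hm : ∀ x, AEStronglyMeasurable (F x) volume) (hm' : ∀ x, AEStronglyMeasurable (F' x) volume)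
    (hd : ∀ x y, HasFDerivAt (fun x => F x y) (F' x y) x)
    (hi : ∀ x, Integrable (F x))
    (hb : ∀ R : ℝ, ∃ b : E3 → ℝ, Integrable b ∧ ∀ x y, ‖x‖ ≤ R → ‖F' x y‖ ≤ b y) (x : E3) :
    HasFDerivAt (fun x => ∫ y, F x y) (∫ y, F' x y) x := by
  obtain ⟨b, hbi, hb⟩ := hb (‖x‖ + 1)
  refine hasFDerivAt_integral_of_dominated_of_fderiv_le (s := Metric.ball x 1) (bound := b)
    (Metric.ball_mem_nhds x one_pos) (Eventually.of_forall hm) (hi x) (hm' x)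
    (Eventually.of_forall fun y z hz => hb z y ?_) hbi
    (Eventually.of_forall fun y z hz => hd z y)
  have : ‖z - x‖ < 1 := by simpa [dist_eq_norm] using hz
  have h2 : z = x + (z - x) := by abel
  have := norm_add_le x (z - x)
  rw [← h2] at this
  linarith

/-- local bounds from bounds of the derivative and integrability at the origin -/
theorem bound_lift {G : Type} [NormedAddCommGroup G] [NormedSpace ℝ G]
    {F : E3 → E3 → G} {F' : E3 → E3 → (E3 →L[ℝ] G)}
    (hd : ∀ x y, HasFDerivAt (fun x => F x y) (F' x y) x)
    (hi : Integrable (F 0))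
    (hb : ∀ R : ℝ, ∃ b : E3 → ℝ, Integrable b ∧ ∀ x y, ‖x‖ ≤ R → ‖F' x y‖ ≤ b y) :
    ∀ R : ℝ, ∃ b : E3 → ℝ, Integrable b ∧ ∀ x y, ‖x‖ ≤ R → ‖F x y‖ ≤ b y := by
  intro R
  obtain ⟨b, hbi, hb⟩ := hb R
  refine ⟨fun y => ‖F 0 y‖ + b y * R, hi.norm.add (hbi.mul_const R), fun x y hx => ?_⟩
  have hR : 0 ≤ R := (norm_nonneg x).trans hx
  have hb0 : 0 ≤ b y := (norm_nonneg _).trans (hb 0 y (by simpa using hR))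
  have := Convex.norm_image_sub_le_of_norm_hasFDerivWithin_le (𝕜 := ℝ) (f := fun x => F x y)
    (f' := fun x => F' x y) (s := Metric.closedBall 0 R) (C := b y) (x := 0) (y := x)
    (fun z _ => (hd z y).hasFDerivWithinAt) (fun z hz => hb z y (by simpa using hz))
    (convex_closedBall _ _) (by simpa using hR) (by simpa using hx)
  have h3 := norm_add_le (F x y - F 0 y) (F 0 y)
  rw [sub_add_cancel] at h3
  have h4 : b y * ‖x - 0‖ ≤ b y * R := by
    rw [sub_zero]; gcongr
  linarith

theorem integrable_of_lift {G : Type} [NormedAddCommGroup G] [NormedSpace ℝ G]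
    {F : E3 → E3 → G} (hm : ∀ x, AEStronglyMeasurable (F x) volume)
    (hb : ∀ R : ℝ, ∃ b : E3 → ℝ, Integrable b ∧ ∀ x y, ‖x‖ ≤ R → ‖F x y‖ ≤ b y) (x : E3) :
    Integrable (F x) := by
  obtain ⟨b, hbi, hb⟩ := hb ‖x‖
  exact hbi.mono' (hm x) (Eventually.of_forall fun y => hb x y le_rfl)

/-- boundedness hypothesis for convolution-type integrals -/
def CB {G : Type} [NormedAddCommGroup G] [NormedSpace ℝ G] (n : ℕ) (a : E3 → ℝ) (k : E3 → G) : Prop :=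
  ∀ j ≤ n, ∀ R : ℝ, ∃ b : E3 → ℝ, Integrable b ∧
    ∀ x y, ‖x‖ ≤ R → |a y| * ‖iteratedFDeriv ℝ j k (x - y)‖ ≤ b y

theorem CB.fderiv {G : Type} [NormedAddCommGroup G] [NormedSpace ℝ G] {n : ℕ} {a : E3 → ℝ}
    {k : E3 → G} (h : CB (n + 1) a k) : CB n a (fderiv ℝ k) := by
  intro j hj R
  obtain ⟨b, hb, h⟩ := h (j + 1) (by omega) R
  refine ⟨b, hb, fun x y hx => ?_⟩
  rw [norm_iteratedFDeriv_fderiv]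
  exact h x y hx

theorem CB.zero {G : Type} [NormedAddCommGroup G] [NormedSpace ℝ G] {n : ℕ} {a : E3 → ℝ}
    {k : E3 → G} (h : CB n a k) :
    ∀ R : ℝ, ∃ b : E3 → ℝ, Integrable b ∧ ∀ x y, ‖x‖ ≤ R → ‖a y • k (x - y)‖ ≤ b y := by
  intro R
  obtain ⟨b, hb, h⟩ := h 0 (by omega) R
  refine ⟨b, hb, fun x y hx => ?_⟩
  have := h x y hx
  rw [norm_iteratedFDeriv_zero] at this
  rwa [norm_smul]

theorem aesm_conv {G : Type} [NormedAddCommGroup G] [NormedSpace ℝ G] {a : E3 → ℝ}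
    (ha : AEStronglyMeasurable a volume) {k : E3 → G} (hk : Continuous k) (x : E3) :
    AEStronglyMeasurable (fun y => a y • k (x - y)) volume := by
  have : Continuous fun y => k (x - y) := by fun_prop
  exact ha.smul this.aestronglyMeasurable

theorem hasFDerivAt_conv {G : Type} [NormedAddCommGroup G] [NormedSpace ℝ G] {a : E3 → ℝ}
    (ha : AEStronglyMeasurable a volume) {k : E3 → G} (hk : ContDiff ℝ 1 k) (h : CB 1 a k) (x : E3) :
    HasFDerivAt (fun x => ∫ y, a y • k (x - y)) (∫ y, a y • fderiv ℝ k (x - y)) x := by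
  refine oneStep (F := fun x y => a y • k (x - y)) (F' := fun x y => a y • fderiv ℝ k (x - y))
    (aesm_conv ha hk.continuous) (aesm_conv ha (hk.continuous_fderiv (by norm_num))) ?_
    (integrable_of_lift (aesm_conv ha hk.continuous) h.zero) (CB.fderiv (n := 0) h).zero x
  intro x y
  have h1 : HasFDerivAt k (fderiv ℝ k (x - y)) (x - y) :=
    (hk.differentiable (by norm_num) _).hasFDerivAt
  have := h1.comp x ((hasFDerivAt_id x).sub_const y)
  rw [ContinuousLinearMap.comp_id] at this
  exact this.const_smul (a y)

theorem contDiff_conv {n : ℕ} : ∀ {G : Type} [NormedAddCommGroup G] [NormedSpace ℝ G] {a : E3 → ℝ}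
    (_ : AEStronglyMeasurable a volume) {k : E3 → G} (_ : ContDiff ℝ n k) (_ : CB n a k),
    ContDiff ℝ n (fun x => ∫ y, a y • k (x - y)) := by
  induction n with
  | zero =>
    intro G _ _ a ha k hk h
    refine contDiff_zero.2 (continuous_iff_continuousAt.2 fun x => ?_)
    obtain ⟨b, hbi, hb⟩ := h.zero (‖x‖ + 1)
    refine continuousAt_of_dominated (bound := b) (Eventually.of_forall (aesm_conv ha hk.continuous)) ?_
      hbi (Eventually.of_forall fun y => ?_)
    · have : ∀ᶠ z in 𝓝 x, ‖z‖ < ‖x‖ + 1 := 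
        (continuous_norm.tendsto x).eventually_lt_const (by linarith)
      filter_upwards [this] with z hz
      exact Eventually.of_forall fun y => hb z y hz.le
    · have := hk.continuous
      fun_prop
  | succ n ih =>
    intro G _ _ a ha k hk h
    have hk1 : ContDiff ℝ 1 k := hk.of_le (by norm_cast; omega)
    rw [show ((n + 1 : ℕ) : WithTop ℕ∞) = (n : WithTop ℕ∞) + 1 by norm_cast,
      contDiff_succ_iff_hasFDerivAt]
    refine ⟨fun x => ∫ y, a y • fderiv ℝ k (x - y), ih ha (hk.fderiv_right (by norm_cast)) h.fderiv,
      fun x => hasFDerivAt_conv ha hk1 (fun j hj => h j (by omega)) x⟩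

theorem laplacian_conv {a : E3 → ℝ}
    (ha : AEStronglyMeasurable a volume) {k : E3 → ℝ} (hk : ContDiff ℝ 2 k) (h : CB 2 a k) :
    laplacian (fun x => ∫ y, a y * k (x - y)) = fun x => ∫ y, a y * laplacian k (x - y) := by
  ext x
  have e1 : fderiv ℝ (fun x => ∫ y, a y * k (x - y)) = fun x => ∫ y, a y • fderiv ℝ k (x - y) := by
    ext1 x
    exact (hasFDerivAt_conv ha (hk.of_le (by norm_num)) (fun j hj => h j (by omega)) x).fderiv
  have hk' : ContDiff ℝ 1 (fderiv ℝ k) := hk.fderiv_right (by norm_num)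
  rw [laplacian_eq, e1, (hasFDerivAt_conv ha hk' h.fderiv x).fderiv,
    ← ContinuousLinearMap.integral_comp_comm (E := E3 →L[ℝ] E3 →L[ℝ] ℝ) (Fₗ := ℝ) (𝕜 := ℝ) trL]
  · simp [laplacian_eq]
  · exact integrable_of_lift (aesm_conv ha (hk'.continuous_fderiv (by norm_num)))
      h.fderiv.fderiv.zero x

theorem laplacian_lin_at {u v : E3 → ℝ} {x : E3} (hu : ContDiffAt ℝ 2 u x) (hv : ContDiffAt ℝ 2 v x)
    (c d : ℝ) :
    laplacian (fun y => c * u y + d * v y) x = c * laplacian u x + d * laplacian v x := by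
  simp only [laplacian_eq]
  have hu' : ∀ᶠ y in 𝓝 x, DifferentiableAt ℝ u y := by
    filter_upwards [hu.eventually (by norm_num)] with y hy using hy.differentiableAt (by norm_num)
  have hv' : ∀ᶠ y in 𝓝 x, DifferentiableAt ℝ v y := by
    filter_upwards [hv.eventually (by norm_num)] with y hy using hy.differentiableAt (by norm_num)
  have h1 : fderiv ℝ (fun y => c * u y + d * v y) =ᶠ[𝓝 x]
      fun y => c • fderiv ℝ u y + d • fderiv ℝ v y := by
    filter_upwards [hu', hv'] with y h1 h2
    rw [fderiv_fun_add (h1.const_mul c) (h2.const_mul d), fderiv_const_mul h1, fderiv_const_mul h2]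
  have du : DifferentiableAt ℝ (fderiv ℝ u) x :=
    (hu.fderiv_right (m := 1) (by norm_num)).differentiableAt (by norm_num)
  have dv : DifferentiableAt ℝ (fderiv ℝ v) x :=
    (hv.fderiv_right (m := 1) (by norm_num)).differentiableAt (by norm_num)
  rw [h1.fderiv_eq, fderiv_fun_add (du.fun_const_smul c) (dv.fun_const_smul d),
    fderiv_fun_const_smul du, fderiv_fun_const_smul dv, map_add, map_smul, map_smul]
  rfl

theorem hasFDerivAt_spow (a r : ℝ) {z : E3} (hz : 0 < ‖z‖ ^ 2 + a) :
    HasFDerivAt (fun z : E3 => (‖z‖ ^ 2 + a) ^ r)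
      ((2 * r * (‖z‖ ^ 2 + a) ^ (r - 1)) • innerSL ℝ z) z := by
  have h1 : HasFDerivAt (fun z : E3 => ‖z‖ ^ 2 + a) (2 • innerSL ℝ z) z :=
    (hasStrictFDerivAt_norm_sq z).hasFDerivAt.add_const a
  have h2 := h1.rpow_const (p := r) (Or.inl hz.ne')
  refine h2.congr_fderiv ?_
  rw [← Nat.cast_smul_eq_nsmul ℝ, smul_smul]
  congr 1
  push_cast
  ring

theorem contDiffAt_spow (a r : ℝ) {z : E3} (hz : 0 < ‖z‖ ^ 2 + a) {n : WithTop ℕ∞} :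
    ContDiffAt ℝ n (fun z : E3 => (‖z‖ ^ 2 + a) ^ r) z := by
  have : ContDiffAt ℝ n (fun z : E3 => ‖z‖ ^ 2 + a) z :=
    ((contDiff_norm_sq ℝ).contDiffAt).add contDiffAt_const
  exact this.rpow_const_of_ne hz.ne'

theorem eventually_pos_spow (a : ℝ) {z : E3} (hz : 0 < ‖z‖ ^ 2 + a) :
    ∀ᶠ y : E3 in 𝓝 z, 0 < ‖y‖ ^ 2 + a := by
  have : Continuous fun y : E3 => ‖y‖ ^ 2 + a := by fun_prop
  exact (this.tendsto z).eventually_const_lt hz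

theorem laplacian_spow (a r : ℝ) {z : E3} (hz : 0 < ‖z‖ ^ 2 + a) :
    laplacian (fun z : E3 => (‖z‖ ^ 2 + a) ^ r) z =
      2 * r * (2 * r + 1) * (‖z‖ ^ 2 + a) ^ (r - 1)
        + (-(4 * r * (r - 1) * a)) * (‖z‖ ^ 2 + a) ^ (r - 2) := by
  have h1 : fderiv ℝ (fun z : E3 => (‖z‖ ^ 2 + a) ^ r) =ᶠ[𝓝 z]
      fun z => (2 * r * (‖z‖ ^ 2 + a) ^ (r - 1)) • innerSL ℝ z := by
    filter_upwards [eventually_pos_spow a hz] with y hy using (hasFDerivAt_spow a r hy).fderiv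
  have h2 := ((hasFDerivAt_spow a (r - 1) hz).const_mul (2 * r)).fun_smul
    (innerSL ℝ (E := E3)).hasFDerivAt
  rw [laplacian_eq, h1.fderiv_eq, h2.fderiv, trL_apply]
  have e1 : (‖z‖ ^ 2 + a) ^ (r - 1) = (‖z‖ ^ 2 + a) * (‖z‖ ^ 2 + a) ^ (r - 2) := by
    rw [show r - 1 = 1 + (r - 2) by ring, rpow_add hz, rpow_one]
  have e2 : ‖z‖ ^ 2 = z 0 ^ 2 + z 1 ^ 2 + z 2 ^ 2 := by
    rw [EuclideanSpace.norm_sq_eq]; simp [Fin.sum_univ_three]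
  have hI : ∀ x y : E3, innerSL ℝ x y = inner ℝ x y := fun _ _ => rfl
  simp [hI, Fin.sum_univ_three, EuclideanSpace.inner_single_right, show r - 1 - 1 = r - 2 by ring]
  rw [e1]
  generalize (‖z‖ ^ 2 + a) ^ (r - 2) = T
  rw [e2]
  ring

theorem bilap_spow (a : ℝ) {z : E3} (hz : 0 < ‖z‖ ^ 2 + a) :
    laplacian (laplacian (fun z : E3 => (‖z‖ ^ 2 + a) ^ (1/2 : ℝ))) z =
      -(15 * a ^ 2 * (‖z‖ ^ 2 + a) ^ (-7/2 : ℝ)) := by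
  have h1 : laplacian (fun z : E3 => (‖z‖ ^ 2 + a) ^ (1/2 : ℝ)) =ᶠ[𝓝 z]
      fun z => 2 * (‖z‖ ^ 2 + a) ^ (-1/2 : ℝ) + a * (‖z‖ ^ 2 + a) ^ (-3/2 : ℝ) := by
    filter_upwards [eventually_pos_spow a hz] with y hy
    rw [laplacian_spow a _ hy]
    norm_num
  rw [(laplacian_congr h1).eq_of_nhds, laplacian_lin_at (contDiffAt_spow _ _ hz)
    (contDiffAt_spow _ _ hz), laplacian_spow a _ hz, laplacian_spow a _ hz]
  norm_num
  ring

theorem integral_lap_ibp {f v : E3 → ℝ} (hf : ContDiff ℝ 2 f) (hv : ContDiff ℝ 2 v)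
    (hc : HasCompactSupport v) : ∫ z, f z * laplacian v z = ∫ z, laplacian f z * v z := by
  have df : ContDiff ℝ 1 (fderiv ℝ f) := hf.fderiv_right (by norm_num)
  have dv : ContDiff ℝ 1 (fderiv ℝ v) := hv.fderiv_right (by norm_num)
  have dcf : ∀ w : E3, ContDiff ℝ 1 (fun x => fderiv ℝ f x w) := fun w => df.clm_apply contDiff_const
  have dcv : ∀ w : E3, ContDiff ℝ 1 (fun x => fderiv ℝ v x w) := fun w => dv.clm_apply contDiff_const
  have key : ∀ (g : E3 → ℝ) (_ : ContDiff ℝ 2 g) (x w : E3),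
      fderiv ℝ (fderiv ℝ g) x w w = fderiv ℝ (fun x => fderiv ℝ g x w) x w := by
    intro g hg x w
    have : ContDiff ℝ 1 (fderiv ℝ g) := hg.fderiv_right (by norm_num)
    rw [fderiv_clm_apply (this.differentiable (by norm_num) x) (differentiableAt_const w)]
    simp
  have hcv : ∀ w : E3, HasCompactSupport (fun x => fderiv ℝ v x w) := fun w => hc.fderiv_apply ℝ w
  have int : ∀ {g h : E3 → ℝ}, Continuous g → Continuous h → HasCompactSupport h →
      Integrable (fun x => g x * h x) := fun hg hh hch =>
    (hg.mul hh).integrable_of_hasCompactSupport hch.mul_left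
  have cd : ∀ {g : E3 → ℝ} (w : E3), ContDiff ℝ 1 g → Continuous (fun x => fderiv ℝ g x w) := fun w hg =>
    (hg.continuous_fderiv (by norm_num)).clm_apply continuous_const
  have step : ∀ w : E3, ∫ z, f z * fderiv ℝ (fderiv ℝ v) z w w = ∫ z, fderiv ℝ (fderiv ℝ f) z w w * v z := by
    intro w
    simp only [key f hf, key v hv]
    have hv1 : ContDiff ℝ 1 v := hv.of_le (by norm_num)
    have hf1 : ContDiff ℝ 1 f := hf.of_le (by norm_num)
    rw [integral_mul_fderiv_eq_neg_fderiv_mul_of_integrable (g := fun x => fderiv ℝ v x w)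
      (int (cd w hf1) (dcv w).continuous (hcv w))
      (int hf.continuous (cd w (dcv w)) ((hcv w).fderiv_apply ℝ w))
      (int hf.continuous (dcv w).continuous (hcv w))
      (fun x _ => hf.differentiable (by norm_num) x)
      (fun x _ => (dcv w).differentiable (by norm_num) x),
      integral_mul_fderiv_eq_neg_fderiv_mul_of_integrable (f := fun x => fderiv ℝ f x w) (g := v)
      (int (cd w (dcf w)) hv.continuous hc)
      (int (dcf w).continuous (cd w hv1) (hcv w))
      (int (dcf w).continuous hv.continuous hc)
      (fun x _ => (dcf w).differentiable (by norm_num) x)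
      (fun x _ => hv.differentiable (by norm_num) x), neg_neg]
  simp only [laplacian_eq, trL_apply, Finset.mul_sum, Finset.sum_mul]
  rw [integral_finsetSum, integral_finsetSum]
  · exact Finset.sum_congr rfl fun i _ => step _
  · intro i _
    simp only [key f hf]
    exact int (cd _ (dcf _)) hv.continuous hc
  · intro i _
    simp only [key v hv]
    exact int hf.continuous (cd _ (dcv _)) ((hcv _).fderiv_apply ℝ _)

theorem hasCompactSupport_laplacian {v : E3 → ℝ} (hc : HasCompactSupport v) :
    HasCompactSupport (laplacian v) := by
  rw [laplacian_eq_fun]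
  exact ((hc.fderiv ℝ).fderiv ℝ).comp_left (g := trL) (map_zero _)

theorem integral_bilap_ibp {f v : E3 → ℝ} (hf : ContDiff ℝ 4 f) (hv : ContDiff ℝ 4 v)
    (hc : HasCompactSupport v) :
    ∫ z, f z * laplacian (laplacian v) z = ∫ z, laplacian (laplacian f) z * v z := by
  rw [integral_lap_ibp (hf.of_le (by norm_num)) (contDiff_laplacian (n := 2) hv)
    (hasCompactSupport_laplacian hc), integral_lap_ibp (contDiff_laplacian (n := 2) hf)
    (hv.of_le (by norm_num)) hc]

/-- the mass of the mollifier -/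
noncomputable def c0 : ℝ := ∫ t : E3, 15 * (1 + ‖t‖ ^ 2) ^ (-7/2 : ℝ)

theorem c0_integrable : Integrable (fun t : E3 => 15 * (1 + ‖t‖ ^ 2) ^ (-7/2 : ℝ)) :=
  (integrable_rpow_neg_one_add_norm_sq (E := E3) (μ := volume) (r := 7) (by simp; norm_num)).const_mul 15

theorem c0_pos : 0 < c0 := by
  refine (integral_pos_iff_support_of_nonneg (fun t => by positivity) c0_integrable).2 ?_
  have : Function.support (fun t : E3 => 15 * (1 + ‖t‖ ^ 2) ^ (-7/2 : ℝ)) = Set.univ := by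
    ext t
    have : 0 < (1 + ‖t‖ ^ 2) ^ (-7/2 : ℝ) := by positivity
    simp [this.ne']
  rw [this]
  simp

theorem fundamental {v : E3 → ℝ} (hv : ContDiff ℝ 4 v) (hc : HasCompactSupport v) :
    ∫ z, ‖z‖ * laplacian (laplacian v) z = - (c0 * v 0) := by
  have hL : Continuous (laplacian (laplacian v)) :=
    (contDiff_laplacian (n := 0) (contDiff_laplacian (n := 2) hv)).continuous
  have hLc := hasCompactSupport_laplacian (hasCompactSupport_laplacian hc)
  have key : ∀ ε : ℝ, 0 < ε → ∫ z : E3, (‖z‖ ^ 2 + ε ^ 2) ^ (1/2 : ℝ) * laplacian (laplacian v) z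
      = - ∫ t : E3, 15 * (1 + ‖t‖ ^ 2) ^ (-7/2 : ℝ) * v (ε • t) := by
    intro ε hε
    have hpos : ∀ z : E3, 0 < ‖z‖ ^ 2 + ε ^ 2 := fun z => by positivity
    rw [integral_bilap_ibp (contDiff_iff_contDiffAt.2 fun z => contDiffAt_spow _ _ (hpos z)) hv hc]
    simp only [bilap_spow _ (hpos _)]
    have h1 := Measure.integral_comp_smul (volume : Measure E3)
      (fun z => -(15 * (ε ^ 2) ^ 2 * (‖z‖ ^ 2 + ε ^ 2) ^ (-7 / 2 : ℝ)) * v z) ε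
    have h2 : ∀ t : E3, -(15 * (ε ^ 2) ^ 2 * (‖ε • t‖ ^ 2 + ε ^ 2) ^ (-7 / 2 : ℝ)) * v (ε • t)
        = (ε ^ 3)⁻¹ * (-(15 * (1 + ‖t‖ ^ 2) ^ (-7/2 : ℝ) * v (ε • t))) := by
      intro t
      have e1 : ‖ε • t‖ ^ 2 + ε ^ 2 = ε ^ 2 * (1 + ‖t‖ ^ 2) := by
        rw [norm_smul, Real.norm_of_nonneg hε.le]; ring
      have e2 : (ε ^ 2) ^ (-7 / 2 : ℝ) = (ε ^ 7)⁻¹ := by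
        rw [← rpow_natCast, ← rpow_mul hε.le, ← rpow_natCast, ← rpow_neg hε.le]
        norm_num
      rw [e1, mul_rpow (by positivity) (by positivity), e2]
      field_simp
    simp only [h2] at h1
    rw [integral_const_mul, integral_neg] at h1
    simp only [finrank_euclideanSpace, Fintype.card_fin, smul_eq_mul] at h1
    rw [abs_of_pos (by positivity)] at h1
    exact (mul_left_cancel₀ (by positivity) h1).symm
  obtain ⟨B, hB⟩ := hc.exists_bound_of_continuous hv.continuous
  have T1 : Tendsto (fun ε : ℝ => ∫ z : E3, (‖z‖ ^ 2 + ε ^ 2) ^ (1/2 : ℝ) * laplacian (laplacian v) z)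
      (𝓝[>] 0) (𝓝 (∫ z, ‖z‖ * laplacian (laplacian v) z)) := by
    refine tendsto_integral_filter_of_dominated_convergence
      (fun z => ‖(‖z‖ + 1) * laplacian (laplacian v) z‖) ?_ ?_ ?_ ?_
    · refine Eventually.of_forall fun ε => Continuous.aestronglyMeasurable ?_
      refine Continuous.mul ?_ hL
      exact Continuous.rpow_const (by fun_prop) (fun _ => Or.inr (by norm_num))
    · have : ∀ᶠ ε : ℝ in 𝓝[>] 0, ε < 1 := (eventually_lt_nhds one_pos).filter_mono nhdsWithin_le_nhds
      filter_upwards [this, self_mem_nhdsWithin] with ε h1 h0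
      refine Eventually.of_forall fun z => ?_
      have h0 : 0 < ε := h0
      rw [norm_mul, norm_mul]
      gcongr
      rw [Real.norm_of_nonneg (by positivity), Real.norm_of_nonneg (by positivity), ← sqrt_eq_rpow,
        sqrt_le_left (by positivity)]
      nlinarith [norm_nonneg z]
    · refine (Continuous.integrable_of_hasCompactSupport (by fun_prop) hLc.mul_left).norm
    · refine Eventually.of_forall fun z => ?_
      have : Continuous fun ε : ℝ => (‖z‖ ^ 2 + ε ^ 2) ^ (1/2 : ℝ) * laplacian (laplacian v) z :=
        (Continuous.rpow_const (by fun_prop) (fun _ => Or.inr (by norm_num))).mul continuous_const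
      have h := this.tendsto 0
      simp only [ne_eq, OfNat.ofNat_ne_zero, not_false_eq_true, zero_pow, add_zero] at h
      rw [← sqrt_eq_rpow, sqrt_sq (norm_nonneg z)] at h
      exact h.mono_left nhdsWithin_le_nhds
  have T2 : Tendsto (fun ε : ℝ => - ∫ t : E3, 15 * (1 + ‖t‖ ^ 2) ^ (-7/2 : ℝ) * v (ε • t))
      (𝓝[>] 0) (𝓝 (-(c0 * v 0))) := by
    refine Tendsto.neg ?_
    rw [c0, ← integral_mul_const]
    have hvc := hv.continuous
    have hw : Continuous fun t : E3 => 15 * (1 + ‖t‖ ^ 2) ^ (-7/2 : ℝ) :=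
      continuous_const.mul (Continuous.rpow_const (by fun_prop) (fun _ => Or.inl (by positivity)))
    refine tendsto_integral_filter_of_dominated_convergence
      (fun t => 15 * (1 + ‖t‖ ^ 2) ^ (-7/2 : ℝ) * B) ?_ ?_ ?_ ?_
    · refine Eventually.of_forall fun ε => Continuous.aestronglyMeasurable ?_
      fun_prop
    · refine Eventually.of_forall fun ε => Eventually.of_forall fun t => ?_
      rw [norm_mul, Real.norm_of_nonneg (by positivity)]
      gcongr
      exact hB _
    · exact c0_integrable.mul_const B
    · refine Eventually.of_forall fun t => ?_
      have : Continuous fun ε : ℝ => 15 * (1 + ‖t‖ ^ 2) ^ (-7/2 : ℝ) * v (ε • t) := by fun_prop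
      have h := this.tendsto 0
      simp only [zero_smul] at h
      exact h.mono_left nhdsWithin_le_nhds
  refine tendsto_nhds_unique T1 (T2.congr' ?_)
  filter_upwards [self_mem_nhdsWithin] with ε hε using (key ε hε).symm

/-- a bump function -/
noncomputable def chi : ContDiffBump (0 : E3) := ⟨1/2, 1, by norm_num, by norm_num⟩

/-- a smooth modification of the norm -/
noncomputable def psi (z : E3) : ℝ := (1 - chi z) * ‖z‖

theorem psi_of_one_le {z : E3} (hz : 1 ≤ ‖z‖) : psi z = ‖z‖ := by
  have : chi z = 0 := chi.zero_of_le_dist (by simpa [chi] using hz)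
  simp [psi, this]

theorem psi_contDiff {n : ℕ} : ContDiff ℝ n psi := by
  refine contDiff_iff_contDiffAt.2 fun z => ?_
  by_cases hz : z = 0
  · subst hz
    have : psi =ᶠ[𝓝 0] fun _ => (0:ℝ) := by
      filter_upwards [chi.eventuallyEq_one] with y hy
      simp [psi, hy]
    exact contDiffAt_const.congr_of_eventuallyEq this
  · have h1 : ContDiffAt ℝ n (fun z => chi z) z := chi.contDiffAt.of_le (by exact_mod_cast le_top)
    exact (contDiffAt_const.sub h1).mul (contDiffAt_norm ℝ hz)

theorem eventually_lt_norm {z : E3} {r : ℝ} (hz : r < ‖z‖) : ∀ᶠ y : E3 in 𝓝 z, r < ‖y‖ :=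
  (continuous_norm.tendsto z).eventually_const_lt hz

theorem psi_ev {z : E3} (hz : 1 < ‖z‖) : psi =ᶠ[𝓝 z] fun z => ‖z‖ := by
  filter_upwards [eventually_lt_norm hz] with y hy using psi_of_one_le hy.le

theorem exists_bound_ball {G : Type} [NormedAddCommGroup G] {f : E3 → G} (hf : Continuous f) (R : ℝ) :
    ∃ C : ℝ, 0 ≤ C ∧ ∀ z, ‖z‖ ≤ R → ‖f z‖ ≤ C := by
  obtain ⟨C, hC⟩ := (isCompact_closedBall (0:E3) R).exists_bound_of_continuousOn hf.continuousOn
  exact ⟨max C 0, le_max_right _ _, fun z hz => (hC z (by simpa using hz)).trans (le_max_left _ _)⟩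

theorem psi_decay (j : ℕ) (hj : 2 ≤ j) :
    ∃ C : ℝ, 0 ≤ C ∧ ∀ z, ‖iteratedFDeriv ℝ j psi z‖ ≤ C * (1 + ‖z‖)⁻¹ := by
  obtain ⟨B, hB0, hB⟩ := exists_bound_ball
    ((psi_contDiff (n := j)).continuous_iteratedFDeriv (m := j) le_rfl) 2
  refine ⟨4 * B, by positivity, fun z => ?_⟩
  rw [← div_eq_mul_inv, le_div_iff₀ (by positivity)]
  by_cases hz : ‖z‖ ≤ 2
  · nlinarith [hB z hz, norm_nonneg (iteratedFDeriv ℝ j psi z)]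
  · push Not at hz
    set s := ‖z‖ / 2 with hs
    have hs1 : 1 < s := by rw [hs]; linarith
    have hs0 : 0 < s := by linarith
    have e1 : psi =ᶠ[𝓝 z] fun y => s • psi (s⁻¹ • y) := by
      filter_upwards [eventually_lt_norm (r := s) (by rw [hs]; linarith)] with y hy
      rw [psi_of_one_le (by linarith), psi_of_one_le]
      · rw [norm_smul, norm_inv, Real.norm_of_nonneg hs0.le, smul_eq_mul]
        field_simp
      · rw [norm_smul, norm_inv, Real.norm_of_nonneg hs0.le, inv_mul_eq_div, one_le_div hs0]
        exact hy.le
    have hc : ContDiff ℝ j (fun y => psi (s⁻¹ • y)) := psi_contDiff.comp (contDiff_const_smul _)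
    have hn : ‖s⁻¹ • z‖ = 2 := by
      rw [norm_smul, norm_inv, Real.norm_of_nonneg hs0.le, hs]
      field_simp
    rw [(e1.iteratedFDeriv ℝ j).eq_of_nhds, iteratedFDeriv_const_smul_apply' hc.contDiffAt,
      iteratedFDeriv_comp_const_smul _ psi_contDiff]
    simp only []
    rw [norm_smul, norm_smul, norm_pow, norm_inv, Real.norm_of_nonneg hs0.le]
    have h3 := hB _ hn.le
    obtain ⟨i, rfl⟩ : ∃ i, j = i + 2 := ⟨j - 2, by omega⟩
    have h4 : (s⁻¹) ^ i ≤ 1 := pow_le_one₀ (by positivity) (inv_le_one_of_one_le₀ hs1.le)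
    have h5 : s * (s⁻¹ ^ (i + 2) * ‖iteratedFDeriv ℝ (i + 2) psi (s⁻¹ • z)‖) ≤ s⁻¹ * B := by
      calc _ = s⁻¹ ^ i * s⁻¹ * ‖iteratedFDeriv ℝ (i + 2) psi (s⁻¹ • z)‖ := by
            rw [← one_mul (s⁻¹ ^ i * s⁻¹ * _), ← mul_inv_cancel₀ hs0.ne']
            ring
        _ ≤ 1 * s⁻¹ * B := by gcongr
        _ = _ := by ring
    have h6 : (1 + ‖z‖) = 1 + 2 * s := by rw [hs]; ring
    rw [h6]
    calc _ ≤ s⁻¹ * B * (1 + 2 * s) := by gcongr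
      _ = s⁻¹ * B + 2 * B := by field_simp
      _ ≤ 1 * B + 2 * B := by gcongr; exact inv_le_one_of_one_le₀ hs1.le
      _ ≤ 4 * B := by linarith

theorem psi_fderiv_bound : ∃ C : ℝ, 0 ≤ C ∧ ∀ z, ‖fderiv ℝ psi z‖ ≤ C := by
  obtain ⟨B, hB0, hB⟩ := exists_bound_ball ((psi_contDiff (n := 1)).continuous_fderiv (by norm_num)) 1
  refine ⟨max B 1, by positivity, fun z => ?_⟩
  by_cases hz : ‖z‖ ≤ 1
  · exact (hB z hz).trans (le_max_left _ _)
  · push Not at hz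
    rw [(psi_ev hz).fderiv_eq]
    refine le_trans ?_ (le_max_right _ _)
    simpa using norm_fderiv_le_of_lipschitz ℝ (x₀ := z) (lipschitzWith_one_norm (E := E3))

/-- the singular part of the norm -/
noncomputable def theta (z : E3) : ℝ := ‖z‖ - psi z

theorem theta_continuous : Continuous theta :=
  continuous_norm.sub (psi_contDiff (n := 0)).continuous

theorem theta_zero {z : E3} (hz : 1 ≤ ‖z‖) : theta z = 0 := by
  simp [theta, psi_of_one_le hz]

theorem theta_lip : ∃ C : ℝ, 0 ≤ C ∧ ∀ x y, |theta x - theta y| ≤ C * ‖x - y‖ := by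
  obtain ⟨C, hC0, hC⟩ := psi_fderiv_bound
  refine ⟨1 + C, by positivity, fun x y => ?_⟩
  have h1 := Convex.norm_image_sub_le_of_norm_fderiv_le (𝕜 := ℝ) (f := psi) (s := Set.univ) (C := C)
    (x := y) (y := x) (fun z _ => (psi_contDiff (n := 1)).differentiable (by norm_num) z)
    (fun z _ => hC z) convex_univ trivial trivial
  have h2 := abs_norm_sub_norm_le x y
  have h3 : theta x - theta y = (‖x‖ - ‖y‖) - (psi x - psi y) := by simp only [theta]; ring
  rw [h3]
  have := abs_sub (‖x‖ - ‖y‖) (psi x - psi y)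
  rw [Real.norm_eq_abs] at h1
  linarith

theorem theta_fderiv_zero {z : E3} (hz : 1 < ‖z‖) : fderiv ℝ theta z = 0 := by
  have : theta =ᶠ[𝓝 z] fun _ => (0:ℝ) := by
    filter_upwards [eventually_lt_norm hz] with y hy using theta_zero hy.le
  rw [this.fderiv_eq]; simp

theorem theta_fderiv_bound : ∃ C : ℝ, 0 ≤ C ∧ ∀ z, ‖fderiv ℝ theta z‖ ≤ C := by
  obtain ⟨C, hC0, hC⟩ := theta_lip
  refine ⟨C, hC0, fun z => ?_⟩
  have : LipschitzWith ⟨C, hC0⟩ theta := LipschitzWith.of_dist_le_mul fun x y => by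
    rw [dist_eq_norm, dist_eq_norm]; exact hC x y
  exact norm_fderiv_le_of_lipschitz ℝ (x₀ := z) this

theorem theta_diff {z : E3} (hz : z ≠ 0) : DifferentiableAt ℝ theta z :=
  ((contDiffAt_norm (n := 1) ℝ hz).differentiableAt (by norm_num)).sub
    ((psi_contDiff (n := 1)).differentiable (by norm_num) z)

theorem bilap_psi_zero {z : E3} (hz : 1 < ‖z‖) : laplacian (laplacian psi) z = 0 := by
  have h1 : psi =ᶠ[𝓝 z] fun z => (‖z‖ ^ 2 + 0) ^ (1/2 : ℝ) := by
    filter_upwards [psi_ev hz] with y hy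
    rw [hy, add_zero, ← sqrt_eq_rpow, sqrt_sq (norm_nonneg y)]
  rw [(laplacian_congr (laplacian_congr h1)).eq_of_nhds, bilap_spow 0 (by positivity)]
  simp

theorem fderiv_psi_far {z : E3} (hz : 1 < ‖z‖) : fderiv ℝ psi z = ‖z‖⁻¹ • innerSL ℝ z := by
  have h1 : psi =ᶠ[𝓝 z] fun z => (‖z‖ ^ 2 + 0) ^ (1/2 : ℝ) := by
    filter_upwards [psi_ev hz] with y hy
    rw [hy, add_zero, ← sqrt_eq_rpow, sqrt_sq (norm_nonneg y)]
  rw [h1.fderiv_eq, (hasFDerivAt_spow 0 (1/2) (by positivity)).fderiv, add_zero, ← rpow_natCast,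
    ← rpow_mul (norm_nonneg z)]
  norm_num [rpow_neg_one]

theorem parametrix {v : E3 → ℝ} (hv : ContDiff ℝ 4 v) :
    (∫ z, theta z * laplacian (laplacian v) z) + ∫ z, laplacian (laplacian psi) z * v z
      = - (c0 * v 0) := by
  let b : ContDiffBump (0 : E3) := ⟨2, 3, by norm_num, by norm_num⟩
  set w : E3 → ℝ := fun z => b z * v z with hw
  have hwc : ContDiff ℝ 4 w := by
    have hb : ContDiff ℝ 4 (fun z => b z) := contDiff_infty.1 b.contDiff 4
    exact hb.mul hv
  have hws : HasCompactSupport w := b.hasCompactSupport.mul_right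
  have hev : ∀ z : E3, ‖z‖ ≤ 1 → w =ᶠ[𝓝 z] v := by
    intro z hz
    filter_upwards [b.eventuallyEq_one_of_mem_ball (x := z) (by simp [b]; linarith)] with y hy
    simp [hw, hy]
  have hLw : Continuous (laplacian (laplacian w)) :=
    (contDiff_laplacian (n := 0) (contDiff_laplacian (n := 2) hwc)).continuous
  have hLc := hasCompactSupport_laplacian (hasCompactSupport_laplacian hws)
  have e1 : ∫ z, theta z * laplacian (laplacian v) z = ∫ z, theta z * laplacian (laplacian w) z := by
    congr 1; ext z
    by_cases hz : ‖z‖ ≤ 1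
    · rw [(laplacian_congr (laplacian_congr (hev z hz))).eq_of_nhds]
    · push Not at hz; rw [theta_zero hz.le]; simp
  have e2 : ∫ z, laplacian (laplacian psi) z * v z = ∫ z, laplacian (laplacian psi) z * w z := by
    congr 1; ext z
    by_cases hz : ‖z‖ ≤ 1
    · rw [(hev z hz).eq_of_nhds]
    · push Not at hz; rw [bilap_psi_zero hz]; simp
  rw [e1, e2, ← integral_bilap_ibp psi_contDiff hwc hws, ← integral_add]
  · simp only [theta, ← add_mul, sub_add_cancel]
    rw [fundamental hwc hws, (hev 0 (by simp)).eq_of_nhds]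
  · exact (theta_continuous.mul hLw).integrable_of_hasCompactSupport hLc.mul_left
  · exact ((psi_contDiff (n := 0)).continuous.mul hLw).integrable_of_hasCompactSupport hLc.mul_left

theorem CB_compact {G : Type} [NormedAddCommGroup G] [NormedSpace ℝ G] {n : ℕ} {a : E3 → ℝ} {C : ℝ}
    (hC : ∀ y, |a y| ≤ C) (h0 : ∀ y, 1 < ‖y‖ → a y = 0) {k : E3 → G} (hk : ContDiff ℝ n k) :
    CB n a k := by
  intro j hj R
  obtain ⟨B, hB0, hB⟩ := exists_bound_ball (hk.continuous_iteratedFDeriv (m := j) (by exact_mod_cast hj)) (R + 1)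
  refine ⟨(Metric.closedBall (0:E3) 1).indicator fun _ => C * B, ?_, fun x y hx => ?_⟩
  · rw [integrable_indicator_iff Metric.isClosed_closedBall.measurableSet]
    exact integrableOn_const (measure_closedBall_lt_top.ne)
  · by_cases hy : ‖y‖ ≤ 1
    · rw [Set.indicator_of_mem (by simpa using hy)]
      have := hB (x - y) ((norm_sub_le x y).trans (by linarith))
      have hC0 := (abs_nonneg _).trans (hC y)
      exact mul_le_mul (hC y) this (norm_nonneg _) hC0
    · rw [Set.indicator_of_notMem (by simpa using hy), h0 y (by linarith)]
      simp

theorem wt_integrable {q : ℝ} (hq : 1 < q) :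
    Integrable (fun y : E3 => (1 + ‖y‖ ^ 2) ^ (-q) * (1 + ‖y‖)⁻¹) := by
  have h := integrable_rpow_neg_one_add_norm_sq (E := E3) (μ := volume) (r := 2 * q + 1) (by simp; linarith)
  refine h.mono' ?_ (Eventually.of_forall fun y => ?_)
  · refine Continuous.aestronglyMeasurable ?_
    refine Continuous.mul (Continuous.rpow_const (by fun_prop) (fun _ => Or.inl (by positivity))) ?_
    exact Continuous.inv₀ (by fun_prop) (fun y => by positivity)
  · rw [Real.norm_of_nonneg (by positivity), show -(2 * q + 1) / 2 = -q + -(1/2) by ring,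
      rpow_add (by positivity)]
    gcongr
    rw [rpow_neg (by positivity), ← sqrt_eq_rpow]
    gcongr
    rw [sqrt_le_left (by positivity)]
    nlinarith [norm_nonneg y]

theorem shift_wt {x y : E3} {R : ℝ} (hx : ‖x‖ ≤ R) : (1 + ‖x - y‖)⁻¹ ≤ (1 + R) * (1 + ‖y‖)⁻¹ := by
  have hR : 0 ≤ R := (norm_nonneg x).trans hx
  have h : ‖y‖ ≤ ‖x‖ + ‖x - y‖ := by
    have := norm_sub_le x (x - y)
    rwa [sub_sub_cancel] at this
  rw [← div_eq_mul_inv, le_div_iff₀ (by positivity), inv_mul_le_iff₀ (by positivity)]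
  nlinarith [norm_nonneg (x - y)]

theorem CB_decay {G : Type} [NormedAddCommGroup G] [NormedSpace ℝ G] {n : ℕ} {a : E3 → ℝ} {A q : ℝ}
    (hq : 1 < q) (ha : ∀ y, |a y| ≤ A * (1 + ‖y‖ ^ 2) ^ (-q)) {k : E3 → G}
    (hk : ∀ j ≤ n, ∃ C : ℝ, 0 ≤ C ∧ ∀ z, ‖iteratedFDeriv ℝ j k z‖ ≤ C * (1 + ‖z‖)⁻¹) :
    CB n a k := by
  intro j hj R
  obtain ⟨C, hC0, hC⟩ := hk j hj
  refine ⟨fun y => A * C * (1 + R) * ((1 + ‖y‖ ^ 2) ^ (-q) * (1 + ‖y‖)⁻¹),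
    (wt_integrable hq).const_mul _, fun x y hx => ?_⟩
  calc _ ≤ (A * (1 + ‖y‖ ^ 2) ^ (-q)) * (C * (1 + ‖x - y‖)⁻¹) :=
        mul_le_mul (ha y) (hC _) (norm_nonneg _) ((abs_nonneg _).trans (ha y))
    _ ≤ (A * (1 + ‖y‖ ^ 2) ^ (-q)) * (C * ((1 + R) * (1 + ‖y‖)⁻¹)) := by
        refine mul_le_mul_of_nonneg_left ?_ ((abs_nonneg _).trans (ha y))
        exact mul_le_mul_of_nonneg_left (shift_wt hx) hC0
    _ = _ := by ring

theorem w2_int {G : Type} [NormedAddCommGroup G] [NormedSpace ℝ G] {f : E3 → ℝ} (hf : Continuous f)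
    {k : E3 → G} (hk : StronglyMeasurable k) {C : ℝ} (hC : ∀ z, ‖k z‖ ≤ C) (h0 : ∀ z, 1 < ‖z‖ → k z = 0)
    (x : E3) : Integrable fun y => f y • k (x - y) := by
  obtain ⟨B, hB0, hB⟩ := exists_bound_ball hf (‖x‖ + 1)
  have hm : AEStronglyMeasurable (fun y => f y • k (x - y)) volume :=
    (hf.stronglyMeasurable.smul (hk.comp_measurable (by fun_prop))).aestronglyMeasurable
  have hi : Integrable ((Metric.closedBall (0:E3) (‖x‖ + 1)).indicator fun _ => B * C) := by
    rw [integrable_indicator_iff Metric.isClosed_closedBall.measurableSet]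
    exact integrableOn_const (measure_closedBall_lt_top.ne)
  refine hi.mono' hm (Eventually.of_forall fun y => ?_)
  by_cases hy : ‖y‖ ≤ ‖x‖ + 1
  · rw [Set.indicator_of_mem (by simpa using hy), norm_smul]
    exact mul_le_mul (hB y hy) (hC _) (norm_nonneg _) hB0
  · rw [Set.indicator_of_notMem (by simpa using hy), h0, smul_zero, norm_zero]
    have := norm_sub_le x (x - y)
    rw [sub_sub_cancel] at this
    linarith

theorem w2_hasFDerivAt {f : E3 → ℝ} (hf : Continuous f) (x : E3) :
    HasFDerivAt (fun x => ∫ y, f y * theta (x - y)) (∫ y, f y • fderiv ℝ theta (x - y)) x := by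
  obtain ⟨C, hC0, hC⟩ := theta_lip
  obtain ⟨D, hD0, hD⟩ := theta_fderiv_bound
  obtain ⟨T, hT0, hT⟩ := exists_bound_ball theta_continuous 1
  have hT' : ∀ z, ‖theta z‖ ≤ T := fun z => by
    by_cases hz : ‖z‖ ≤ 1
    · exact hT z hz
    · rw [theta_zero (by linarith)]; simpa using hT0
  obtain ⟨B, hB0, hB⟩ := exists_bound_ball hf (‖x‖ + 2)
  have hi : Integrable ((Metric.closedBall (0:E3) (‖x‖ + 2)).indicator fun _ => B * C) := by
    rw [integrable_indicator_iff Metric.isClosed_closedBall.measurableSet]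
    exact integrableOn_const (measure_closedBall_lt_top.ne)
  have hm : ∀ x, Integrable (fun y => f y * theta (x - y)) := fun x => 
    w2_int hf theta_continuous.stronglyMeasurable hT' (fun z hz => theta_zero hz.le) x
  have hm' := w2_int hf (k := fderiv ℝ theta) (measurable_fderiv ℝ theta).stronglyMeasurable hD
    (fun z hz => theta_fderiv_zero hz) x
  refine (hasFDerivAt_integral_of_dominated_loc_of_lip' (F := fun x y => f y * theta (x - y))
    (s := Metric.ball x 1) (Metric.ball_mem_nhds x one_pos)
    (fun z _ => (hm z).aestronglyMeasurable) (hm x) hm'.aestronglyMeasurable ?_ hi ?_).2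
  · refine Eventually.of_forall fun y z hz => ?_
    have hz1 : ‖z - x‖ < 1 := by simpa [dist_eq_norm] using hz
    rw [← mul_sub, norm_mul]
    by_cases hy : ‖y‖ ≤ ‖x‖ + 2
    · rw [Set.indicator_of_mem (by simpa using hy), mul_assoc]
      refine mul_le_mul (hB y hy) ?_ (norm_nonneg _) hB0
      simpa using hC (z - y) (x - y)
    · rw [Set.indicator_of_notMem (by simpa using hy), theta_zero, theta_zero]
      · simp
      · have := norm_sub_le x (x - y)
        rw [sub_sub_cancel] at this
        linarith
      · have := norm_sub_le z (z - y)
        rw [sub_sub_cancel] at this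
        have h2 : z = x + (z - x) := by abel
        have h3 := norm_add_le x (z - x)
        rw [← h2] at h3
        linarith
  · have : ∀ᵐ y : E3, y ≠ x := by
      simp [ae_iff]
    filter_upwards [this] with y hy
    have h1 : HasFDerivAt theta (fderiv ℝ theta (x - y)) (x - y) :=
      (theta_diff (sub_ne_zero.2 hy.symm)).hasFDerivAt
    have := h1.comp x ((hasFDerivAt_id x).sub_const y)
    rw [ContinuousLinearMap.comp_id] at this
    exact this.const_smul (f y)

theorem conv_swap (a k : E3 → ℝ) (x : E3) : ∫ y, k y * a (x - y) = ∫ y, a y * k (x - y) := by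
  rw [← integral_sub_left_eq_self _ volume x]
  simp [mul_comm]

theorem w2_contDiff {n : ℕ} {f : E3 → ℝ} (hf : ContDiff ℝ n f) :
    ContDiff ℝ (n + 1 : ℕ) (fun x => ∫ y, f y * theta (x - y)) := by
  obtain ⟨D, hD0, hD⟩ := theta_fderiv_bound
  rw [show ((n + 1 : ℕ) : WithTop ℕ∞) = (n : WithTop ℕ∞) + 1 by norm_cast,
      contDiff_succ_iff_hasFDerivAt]
  refine ⟨_, ?_, w2_hasFDerivAt hf.continuous⟩
  rw [contDiff_clm_apply_iff]
  intro v
  have hm := w2_int hf.continuous (k := fderiv ℝ theta) (measurable_fderiv ℝ theta).stronglyMeasurable hD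
    (fun z hz => theta_fderiv_zero hz)
  have e : (fun x => (∫ y, f y • fderiv ℝ theta (x - y)) v) =
      fun x => ∫ y, (fderiv ℝ theta y v) • f (x - y) := by
    ext1 x
    rw [ContinuousLinearMap.integral_apply (hm x)]
    exact conv_swap (fun y => fderiv ℝ theta y v) f x
  rw [e]
  refine contDiff_conv (measurable_fderiv_apply_const ℝ theta v).aestronglyMeasurable hf
    (CB_compact (C := D * ‖v‖) (fun y => ?_) (fun y hy => ?_) hf)
  · refine ((fderiv ℝ theta y).le_opNorm v).trans ?_
    exact mul_le_mul_of_nonneg_right (hD y) (norm_nonneg v)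
  · rw [theta_fderiv_zero hy]; simp

theorem w2_bilap {f : E3 → ℝ} (hf : ContDiff ℝ 4 f) (x : E3) :
    laplacian (laplacian (fun x => ∫ y, f y * theta (x - y))) x =
      ∫ y, theta y * laplacian (laplacian f) (x - y) := by
  obtain ⟨T, hT0, hT⟩ := exists_bound_ball theta_continuous 1
  have hT' : ∀ z, |theta z| ≤ T := fun z => by
    by_cases hz : ‖z‖ ≤ 1
    · exact hT z hz
    · rw [theta_zero (by linarith)]; simpa using hT0
  have h0 : ∀ z : E3, 1 < ‖z‖ → theta z = 0 := fun z hz => theta_zero hz.le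
  have e : (fun x => ∫ y, f y * theta (x - y)) = fun x => ∫ y, theta y * f (x - y) := by
    ext1 x; exact conv_swap _ _ x
  have h2 : ContDiff ℝ 2 (laplacian f) := contDiff_laplacian (n := 2) hf
  have h3 : ContDiff ℝ 2 f := hf.of_le (by norm_num)
  have ht := theta_continuous.aestronglyMeasurable (μ := volume)
  rw [e, laplacian_conv ht h3 (CB_compact hT' h0 h3), laplacian_conv ht h2 (CB_compact hT' h0 h2)]

theorem D2psi_CB {n : ℕ} {f : E3 → ℝ} {A q : ℝ} (hq : 1 < q)
    (ha : ∀ y, |f y| ≤ A * (1 + ‖y‖ ^ 2) ^ (-q)) : CB n f (fderiv ℝ (fderiv ℝ psi)) := by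
  refine CB_decay hq ha fun j _ => ?_
  simp only [norm_iteratedFDeriv_fderiv]
  exact psi_decay (j + 1 + 1) (by omega)

theorem D2psi_contDiff {n : ℕ} : ContDiff ℝ n (fderiv ℝ (fderiv ℝ psi)) :=
  ((psi_contDiff (n := n + 2)).fderiv_right (m := (n + 1 : ℕ)) (by norm_cast)).fderiv_right (by norm_cast)

theorem lap_psi_contDiff {n : ℕ} : ContDiff ℝ n (laplacian psi) :=
  contDiff_laplacian psi_contDiff

theorem comp_left_bound {F : Type} [NormedAddCommGroup F] [NormedSpace ℝ F] {L : F → ℝ}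
    (hL : IsBoundedLinearMap ℝ L) (j : ℕ)
    {k : E3 → F} (hk : ContDiff ℝ j k) : ∃ N : ℝ, 0 ≤ N ∧ ∀ z,
      ‖iteratedFDeriv ℝ j (fun z => L (k z)) z‖ ≤ N * ‖iteratedFDeriv ℝ j k z‖ :=
  ⟨‖hL.toContinuousLinearMap‖, norm_nonneg _,
    fun _ => hL.toContinuousLinearMap.norm_iteratedFDeriv_comp_left hk.contDiffAt le_rfl⟩

theorem trB : IsBoundedLinearMap ℝ (fun B : E3 →L[ℝ] E3 →L[ℝ] ℝ =>
    ∑ i : Fin 3, B (EuclideanSpace.single i (1:ℝ)) (EuclideanSpace.single i (1:ℝ))) := by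
  refine IsLinearMap.with_bound ⟨fun B C => ?_, fun c B => ?_⟩ 3 fun B => ?_
  · simp [Finset.sum_add_distrib]
  · simp [Finset.mul_sum]
  · refine (norm_sum_le _ _).trans ?_
    have : ∀ i : Fin 3, ‖B (EuclideanSpace.single i (1:ℝ)) (EuclideanSpace.single i (1:ℝ))‖ ≤ ‖B‖ := by
      intro i
      have := B.le_opNorm₂ (EuclideanSpace.single i (1:ℝ)) (EuclideanSpace.single i (1:ℝ))
      simpa using this
    refine (Finset.sum_le_sum fun i _ => this i).trans ?_
    simp

theorem lap_psi_CB {n : ℕ} {f : E3 → ℝ} {A q : ℝ} (hq : 1 < q)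
    (ha : ∀ y, |f y| ≤ A * (1 + ‖y‖ ^ 2) ^ (-q)) : CB n f (laplacian psi) := by
  refine CB_decay hq ha fun j _ => ?_
  obtain ⟨C, hC0, hC⟩ := psi_decay (j + 1 + 1) (by omega)
  obtain ⟨N, hN0, hN⟩ : ∃ N : ℝ, 0 ≤ N ∧ ∀ z, ‖iteratedFDeriv ℝ j (laplacian psi) z‖ ≤
      N * ‖iteratedFDeriv ℝ j (fderiv ℝ (fderiv ℝ psi)) z‖ := by
    rw [laplacian_eq_fun]
    simp only [trL_apply]
    have h1 : ContDiff ℝ j (fderiv ℝ (fderiv ℝ psi)) := D2psi_contDiff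
    have h2 := comp_left_bound trB j h1
    exact h2
  refine ⟨N * C, mul_nonneg hN0 hC0, fun z => ?_⟩
  refine le_trans (hN z) ?_
  rw [mul_assoc]
  refine mul_le_mul_of_nonneg_left ?_ hN0
  rw [norm_iteratedFDeriv_fderiv, norm_iteratedFDeriv_fderiv]
  exact hC z

/-- the smooth part of the potential -/
noncomputable def W1 (f : E3 → ℝ) (x : E3) : ℝ :=
  ∫ y, f y • (psi (x - y) - ‖y‖ + ‖y‖⁻¹ * innerSL ℝ y x)

theorem hd_psi (x y : E3) : HasFDerivAt (fun x => psi (x - y)) (fderiv ℝ psi (x - y)) x := by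
  have h1 : HasFDerivAt psi (fderiv ℝ psi (x - y)) (x - y) :=
    ((psi_contDiff (n := 1)).differentiable (by norm_num) _).hasFDerivAt
  have := h1.comp x ((hasFDerivAt_id x).sub_const y)
  rwa [ContinuousLinearMap.comp_id] at this

theorem hd_Dpsi (x y : E3) :
    HasFDerivAt (fun x => fderiv ℝ psi (x - y)) (fderiv ℝ (fderiv ℝ psi) (x - y)) x := by
  have hc : ContDiff ℝ 1 (fderiv ℝ psi) := (psi_contDiff (n := 2)).fderiv_right (by norm_num)
  have h1 : HasFDerivAt (fderiv ℝ psi) (fderiv ℝ (fderiv ℝ psi) (x - y)) (x - y) :=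
    (hc.differentiable (by norm_num) _).hasFDerivAt
  have := h1.comp x ((hasFDerivAt_id x).sub_const y)
  rwa [ContinuousLinearMap.comp_id] at this

theorem nearint {G : Type} [NormedAddCommGroup G] [NormedSpace ℝ G] {f : E3 → ℝ} (hf : Continuous f)
    {k : E3 → G} (hk : AEStronglyMeasurable k volume) {C : ℝ} (hC : ∀ z, ‖z‖ ≤ 1 → ‖k z‖ ≤ C)
    (h0 : ∀ z, 1 < ‖z‖ → k z = 0) : Integrable fun y => f y • k y := by
  obtain ⟨B, hB0, hB⟩ := exists_bound_ball hf 1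
  have hi : Integrable ((Metric.closedBall (0:E3) 1).indicator fun _ => B * C) := by
    rw [integrable_indicator_iff Metric.isClosed_closedBall.measurableSet]
    exact integrableOn_const (measure_closedBall_lt_top.ne)
  refine hi.mono' (hf.aestronglyMeasurable.smul hk) (Eventually.of_forall fun y => ?_)
  by_cases hy : ‖y‖ ≤ 1
  · rw [Set.indicator_of_mem (by simpa using hy), norm_smul]
    exact mul_le_mul (hB y hy) (hC _ hy) (norm_nonneg _) hB0
  · rw [Set.indicator_of_notMem (by simpa using hy), h0 _ (by linarith), smul_zero, norm_zero]

theorem W1_main {f : E3 → ℝ} {A q : ℝ} (hf : Continuous f) (hq : 1 < q)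
    (ha : ∀ y, |f y| ≤ A * (1 + ‖y‖ ^ 2) ^ (-q)) :
    (∀ x, HasFDerivAt (W1 f) (∫ y, f y • (fderiv ℝ psi (x - y) + ‖y‖⁻¹ • innerSL ℝ y)) x) ∧
    (∀ x, HasFDerivAt (fun x => ∫ y, f y • (fderiv ℝ psi (x - y) + ‖y‖⁻¹ • innerSL ℝ y))
      (∫ y, f y • fderiv ℝ (fderiv ℝ psi) (x - y)) x) ∧
    (∀ x, Integrable fun y => f y • (psi (x - y) - ‖y‖ + ‖y‖⁻¹ * innerSL ℝ y x)) := by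
  have hfm := hf.aestronglyMeasurable (μ := volume)
  have hps : Continuous psi := (psi_contDiff (n := 0)).continuous
  have hps1 : Continuous (fderiv ℝ psi) := (psi_contDiff (n := 1)).continuous_fderiv (by norm_num)
  have hm0 : ∀ x : E3, AEStronglyMeasurable (fun y => f y • (psi (x - y) - ‖y‖ + ‖y‖⁻¹ * innerSL ℝ y x)) volume := by
    intro x
    refine hfm.smul (AEStronglyMeasurable.add ?_ (AEStronglyMeasurable.mul ?_ ?_))
    · exact Continuous.aestronglyMeasurable (by fun_prop)
    · exact (measurable_norm.inv).aestronglyMeasurable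
    · exact Continuous.aestronglyMeasurable (by fun_prop)
  have hm1 : ∀ x : E3, AEStronglyMeasurable (fun y => (fderiv ℝ psi (x - y) + ‖y‖⁻¹ • innerSL ℝ y)) volume := by
    intro x
    have i1 : AEStronglyMeasurable (fun y : E3 => ‖y‖⁻¹) volume :=
      (measurable_norm.inv).aestronglyMeasurable
    have i2 : AEStronglyMeasurable (fun y : E3 => innerSL ℝ y) volume :=
      (innerSL ℝ (E := E3)).continuous.aestronglyMeasurable
    have i3 : AEStronglyMeasurable (fun y : E3 => fderiv ℝ psi (x - y)) volume :=
      Continuous.aestronglyMeasurable (by fun_prop)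
    exact i3.add (i1.smul i2)
  have hm1' := fun x => hfm.smul (hm1 x)
  have hm2 := aesm_conv hfm (D2psi_contDiff (n := 0)).continuous
  have hd0 : ∀ x y : E3, HasFDerivAt (fun x => f y • (psi (x - y) - ‖y‖ + ‖y‖⁻¹ * innerSL ℝ y x))
      (f y • (fderiv ℝ psi (x - y) + ‖y‖⁻¹ • innerSL ℝ y)) x := by
    intro x y
    exact (((hd_psi x y).sub_const _).add ((innerSL ℝ y).hasFDerivAt.const_mul (‖y‖⁻¹))).const_smul (f y)
  have hd1 : ∀ x y : E3, HasFDerivAt (fun x => f y • (fderiv ℝ psi (x - y) + ‖y‖⁻¹ • innerSL ℝ y))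
      (f y • fderiv ℝ (fderiv ℝ psi) (x - y)) x := by
    intro x y
    exact ((hd_Dpsi x y).add_const _).const_smul (f y)
  have hb2 := (D2psi_CB (n := 0) hq ha).zero
  obtain ⟨D, hD0, hD⟩ := psi_fderiv_bound
  obtain ⟨T, hT0, hT⟩ := exists_bound_ball hps 1
  have hi1 : Integrable fun y : E3 => f y • (fderiv ℝ psi (0 - y) + ‖y‖⁻¹ • innerSL ℝ y) := by
    refine nearint hf (hm1 0) (C := D + 1) (fun y hy => ?_) (fun y hy => ?_)
    · refine (norm_add_le _ _).trans (add_le_add (hD _) ?_)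
      rw [norm_smul, innerSL_apply_norm, norm_inv, norm_norm]
      exact inv_mul_le_one
    · rw [zero_sub, fderiv_psi_far (by rwa [norm_neg]), norm_neg, map_neg, smul_neg]
      simp
  have hi0 : Integrable fun y : E3 => f y • (psi (0 - y) - ‖y‖ + ‖y‖⁻¹ * innerSL ℝ y 0) := by
    simp only [map_zero, mul_zero, add_zero, zero_sub]
    refine nearint hf (Continuous.aestronglyMeasurable (by fun_prop)) (C := T + 1) (fun y hy => ?_) (fun y hy => ?_)
    · refine (norm_sub_le _ _).trans (add_le_add (hT _ (by rwa [norm_neg])) ?_)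
      rwa [norm_norm]
    · rw [psi_of_one_le (by rw [norm_neg]; exact hy.le), norm_neg, sub_self]
  have hb1 := bound_lift hd1 hi1 hb2
  have hb0 := bound_lift hd0 hi0 hb1
  refine ⟨oneStep hm0 hm1' hd0 (integrable_of_lift hm0 hb0) hb1,
    oneStep hm1' hm2 hd1 (integrable_of_lift hm1' hb1) hb2, integrable_of_lift hm0 hb0⟩

theorem W1_contDiff {n : ℕ} {f : E3 → ℝ} {A q : ℝ} (hf : Continuous f) (hq : 1 < q)
    (ha : ∀ y, |f y| ≤ A * (1 + ‖y‖ ^ 2) ^ (-q)) : ContDiff ℝ (n + 2 : ℕ) (W1 f) := by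
  obtain ⟨h1, h2, -⟩ := W1_main hf hq ha
  rw [show ((n + 2 : ℕ) : WithTop ℕ∞) = ((n + 1 : ℕ) : WithTop ℕ∞) + 1 by norm_cast,
      contDiff_succ_iff_hasFDerivAt]
  refine ⟨_, ?_, h1⟩
  rw [show ((n + 1 : ℕ) : WithTop ℕ∞) = ((n : ℕ) : WithTop ℕ∞) + 1 by norm_cast,
      contDiff_succ_iff_hasFDerivAt]
  exact ⟨_, contDiff_conv hf.aestronglyMeasurable D2psi_contDiff (D2psi_CB hq ha), h2⟩

theorem W1_bilap {f : E3 → ℝ} {A q : ℝ} (hf : Continuous f) (hq : 1 < q)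
    (ha : ∀ y, |f y| ≤ A * (1 + ‖y‖ ^ 2) ^ (-q)) (x : E3) :
    laplacian (laplacian (W1 f)) x = ∫ y, f y * laplacian (laplacian psi) (x - y) := by
  obtain ⟨h1, h2, -⟩ := W1_main hf hq ha
  have e : laplacian (W1 f) = fun x => ∫ y, f y * laplacian psi (x - y) := by
    ext1 x
    have e1 := funext fun x => (h1 x).fderiv
    rw [laplacian_eq, e1, (h2 x).fderiv,
      ← ContinuousLinearMap.integral_comp_comm (E := E3 →L[ℝ] E3 →L[ℝ] ℝ) (Fₗ := ℝ) (𝕜 := ℝ) trL]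
    · simp [laplacian_eq]
    · exact integrable_of_lift (aesm_conv hf.aestronglyMeasurable (D2psi_contDiff (n := 0)).continuous)
        (D2psi_CB (n := 0) hq ha).zero x
  rw [e, laplacian_conv hf.aestronglyMeasurable lap_psi_contDiff (lap_psi_CB hq ha)]

/-- the kernel -/
noncomputable def KK (x y : E3) : ℝ := ‖x - y‖ - ‖y‖ + ‖y‖⁻¹ * innerSL ℝ y x

/-- the potential -/
noncomputable def WW (f : E3 → ℝ) (x : E3) : ℝ := ∫ y, f y * KK x y

theorem WW_split {f : E3 → ℝ} {A q : ℝ} (hf : Continuous f) (hq : 1 < q)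
    (ha : ∀ y, |f y| ≤ A * (1 + ‖y‖ ^ 2) ^ (-q)) :
    WW f = fun x => W1 f x + ∫ y, f y * theta (x - y) := by
  obtain ⟨-, -, h⟩ := W1_main hf hq ha
  obtain ⟨T, hT0, hT⟩ := exists_bound_ball theta_continuous 1
  have hT' : ∀ z, ‖theta z‖ ≤ T := fun z => by
    by_cases hz : ‖z‖ ≤ 1
    · exact hT z hz
    · rw [theta_zero (by linarith)]; simpa using hT0
  have h' := w2_int hf theta_continuous.stronglyMeasurable hT' (fun z hz => theta_zero hz.le)
  ext1 x
  refine Eq.trans ?_ (integral_add (h x) (h' x))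
  refine integral_congr_ae (Eventually.of_forall fun y => ?_)
  simp only [KK, theta, smul_eq_mul]
  ring

theorem WW_contDiff {n : ℕ} {f : E3 → ℝ} {A q : ℝ} (hf : ContDiff ℝ n f) (hq : 1 < q)
    (ha : ∀ y, |f y| ≤ A * (1 + ‖y‖ ^ 2) ^ (-q)) : ContDiff ℝ (n + 1 : ℕ) (WW f) := by
  rw [WW_split hf.continuous hq ha]
  exact ((W1_contDiff (n := n) hf.continuous hq ha).of_le (by norm_cast; omega)).add (w2_contDiff hf)

theorem WW_bilap {f : E3 → ℝ} {A q : ℝ} (hf : ContDiff ℝ 4 f) (hq : 1 < q)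
    (ha : ∀ y, |f y| ≤ A * (1 + ‖y‖ ^ 2) ^ (-q)) (x : E3) :
    laplacian (laplacian (WW f)) x = - (c0 * f x) := by
  have c1 : ContDiff ℝ 4 (W1 f) := W1_contDiff (n := 2) hf.continuous hq ha
  have c2 : ContDiff ℝ 4 (fun x => ∫ y, f y * theta (x - y)) :=
    (w2_contDiff (n := 4) hf).of_le (by norm_cast)
  rw [WW_split hf.continuous hq ha, laplacian_add (c1.of_le (by norm_num)) (c2.of_le (by norm_num)),
    laplacian_add (contDiff_laplacian (n := 2) c1) (contDiff_laplacian (n := 2) c2)]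
  simp only []
  rw [W1_bilap hf.continuous hq ha, w2_bilap hf]
  have hv : ContDiff ℝ 4 (fun z => f (x - z)) := hf.comp (contDiff_const.sub contDiff_id)
  have := parametrix hv
  rw [laplacian_comp_sub, laplacian_comp_sub, sub_zero] at this
  rw [← this, add_comm, conv_swap _ f]

theorem KK_formula (x : E3) {y : E3} (hy : y ≠ 0) :
    KK x y = (‖x‖ ^ 2 - (‖x - y‖ - ‖y‖) ^ 2) * (2 * ‖y‖)⁻¹ := by
  have hI : ∀ x y : E3, innerSL ℝ x y = inner ℝ x y := fun _ _ => rfl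
  have h1 := norm_sub_sq_real x y
  have h2 : inner ℝ y x = inner ℝ x y := real_inner_comm _ _
  have h3 : ‖y‖ ≠ 0 := norm_ne_zero_iff.2 hy
  rw [KK, hI, h2]
  field_simp
  linarith

theorem abs_sub_le_x (x y : E3) : (‖x - y‖ - ‖y‖) ^ 2 ≤ ‖x‖ ^ 2 := by
  have := abs_norm_sub_norm_le (x - y) (-y)
  rw [sub_neg_eq_add, sub_add_cancel, norm_neg] at this
  rw [← sq_abs]
  gcongr

theorem KK_nonneg (x y : E3) : 0 ≤ KK x y := by
  by_cases hy : y = 0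
  · simp [KK, hy]
  · rw [KK_formula x hy]
    have := abs_sub_le_x x y
    exact mul_nonneg (by linarith) (by positivity)

theorem KK_le (x : E3) {y : E3} (hy : y ≠ 0) : KK x y ≤ ‖x‖ ^ 2 / 2 * ‖y‖⁻¹ := by
  rw [KK_formula x hy, mul_inv]
  have h3 : 0 < ‖y‖⁻¹ := inv_pos.2 (norm_pos_iff.2 hy)
  nlinarith [sq_nonneg (‖x - y‖ - ‖y‖)]

theorem KK_le' (x y : E3) : KK x y ≤ 2 * ‖x‖ := by
  have hI : ∀ x y : E3, innerSL ℝ x y = inner ℝ x y := fun _ _ => rfl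
  have h1 : ‖x - y‖ ≤ ‖x‖ + ‖y‖ := norm_sub_le _ _
  have h2 : ‖y‖⁻¹ * innerSL ℝ y x ≤ ‖x‖ := by
    rw [hI]
    calc _ ≤ ‖y‖⁻¹ * (‖y‖ * ‖x‖) := by gcongr; exact real_inner_le_norm y x
      _ = (‖y‖⁻¹ * ‖y‖) * ‖x‖ := by ring
      _ ≤ 1 * ‖x‖ := by gcongr; exact inv_mul_le_one
      _ = _ := one_mul _
  rw [KK]; linarith

theorem KK_meas (x : E3) : AEStronglyMeasurable (KK x) volume := by
  have i1 : AEStronglyMeasurable (fun y : E3 => ‖y‖⁻¹) volume :=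
      (measurable_norm.inv).aestronglyMeasurable
  have i2 : AEStronglyMeasurable (fun y : E3 => innerSL ℝ y x) volume :=
    Continuous.aestronglyMeasurable (by fun_prop)
  have i3 : AEStronglyMeasurable (fun y : E3 => ‖x - y‖ - ‖y‖) volume :=
    Continuous.aestronglyMeasurable (by fun_prop)
  exact i3.add (i1.mul i2)

theorem ae_ne_zero : ∀ᵐ y : E3, y ≠ 0 := by simp [ae_iff]

theorem wt2_integrable {s : ℝ} (hs : 1 < s) :
    Integrable (fun y : E3 => (1 + ‖y‖ ^ 2) ^ (-s) * ‖y‖⁻¹) := by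
  have := integrable_fun_norm_addHaar (E := E3) volume (f := fun r : ℝ => (1 + r ^ 2) ^ (-s) * r⁻¹)
  rw [this]
  have h := integrable_rpow_neg_one_add_norm_sq (E := ℝ) (μ := volume) (r := 2 * s - 1) (by simp; linarith)
  refine (h.integrableOn (s := Set.Ioi 0)).mono' ?_ ?_
  · refine Measurable.aestronglyMeasurable ?_
    fun_prop
  · refine (ae_restrict_iff' measurableSet_Ioi).2 (Eventually.of_forall fun r hr => ?_)
    have hr : 0 < r := hr
    simp only [finrank_euclideanSpace, Fintype.card_fin, smul_eq_mul]
    rw [Real.norm_of_nonneg (by positivity), Real.norm_of_nonneg hr.le,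
      show -(2 * s - 1) / 2 = -s + 1/2 by ring, rpow_add (by positivity), ← sqrt_eq_rpow]
    calc _ = (1 + r ^ 2) ^ (-s) * r := by
          have : r * r⁻¹ = 1 := mul_inv_cancel₀ hr.ne'
          rw [show (3 - 1 : ℕ) = 2 from rfl]
          linear_combination (r * (1 + r ^ 2) ^ (-s)) * this
      _ ≤ _ := by
          gcongr
          exact le_sqrt_of_sq_le (by linarith)

theorem fint {f : E3 → ℝ} {A q : ℝ} (hf : Continuous f) (hq : 1 < q)
    (ha : ∀ y, |f y| ≤ A * (1 + ‖y‖ ^ 2) ^ (-q)) : Integrable (fun y => |f y| * ‖y‖⁻¹) := by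
  refine ((wt2_integrable hq).const_mul A).mono' ?_ (Eventually.of_forall fun y => ?_)
  · exact hf.abs.aestronglyMeasurable.mul (measurable_norm.inv).aestronglyMeasurable
  · rw [Real.norm_of_nonneg (by positivity), ← mul_assoc]
    have := ha y
    gcongr

theorem fKint {f : E3 → ℝ} {A q : ℝ} (hf : Continuous f) (hq : 1 < q)
    (ha : ∀ y, |f y| ≤ A * (1 + ‖y‖ ^ 2) ^ (-q)) (x : E3) : Integrable (fun y => f y * KK x y) := by
  refine ((fint hf hq ha).const_mul (‖x‖ ^ 2 / 2)).mono' (hf.aestronglyMeasurable.mul (KK_meas x)) ?_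
  filter_upwards [ae_ne_zero] with y hy
  rw [norm_mul, Real.norm_of_nonneg (KK_nonneg x y), Real.norm_eq_abs]
  have := mul_le_mul_of_nonneg_left (KK_le x hy) (abs_nonneg (f y))
  linarith

theorem WW_sub_bound {f g b : E3 → ℝ} {A q : ℝ} (hf : Continuous f) (hg : Continuous g) (hq : 1 < q)
    (ha : ∀ y, |f y| ≤ A * (1 + ‖y‖ ^ 2) ^ (-q)) (ha' : ∀ y, |g y| ≤ A * (1 + ‖y‖ ^ 2) ^ (-q))
    (hb : ∀ y, |f y - g y| ≤ b y) (hbi : Integrable fun y => b y * ‖y‖⁻¹) (x : E3) :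
    |WW f x - WW g x| ≤ ‖x‖ ^ 2 / 2 * ∫ y, b y * ‖y‖⁻¹ := by
  rw [WW, WW, ← integral_sub (fKint hf hq ha x) (fKint hg hq ha' x), ← integral_const_mul, ← Real.norm_eq_abs]
  refine norm_integral_le_of_norm_le (hbi.const_mul _) ?_
  filter_upwards [ae_ne_zero] with y hy
  rw [← sub_mul, norm_mul, Real.norm_of_nonneg (KK_nonneg x y), Real.norm_eq_abs]
  have := mul_le_mul (hb y) (KK_le x hy) (KK_nonneg x y) ((abs_nonneg _).trans (hb y))
  linarith

theorem rpow_lip {q p a b : ℝ} (hq : 0 < q) (hp : 0 < p) (ha : p ≤ a) (hb : p ≤ b) :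
    |a ^ (-q) - b ^ (-q)| ≤ q * p ^ (-q - 1) * |a - b| := by
  have := Convex.norm_image_sub_le_of_norm_hasDerivWithin_le (f := fun t : ℝ => t ^ (-q))
    (f' := fun t => -q * t ^ (-q - 1)) (s := Set.Ici p) (C := q * p ^ (-q - 1)) (x := b) (y := a)
    (fun t ht => (hasDerivAt_rpow_const (Or.inl (hp.trans_le ht).ne')).hasDerivWithinAt)
    (fun t ht => ?_) (convex_Ici p) hb ha
  · simpa using this
  · have ht : p ≤ t := ht
    rw [norm_mul, norm_neg, Real.norm_of_nonneg hq.le, Real.norm_of_nonneg (rpow_nonneg (hp.le.trans ht) _)]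
    gcongr q * ?_
    exact rpow_le_rpow_of_nonpos hp ht (by linarith)

theorem exists_fix {q m M : ℝ} (hq : 1 < q) (hm : 0 < m) (hM : 0 < M) {P : E3 → ℝ} (hPc : Continuous P)
    (hP : ∀ y, m * (1 + ‖y‖ ^ 2) ≤ P y) (hPM : ∀ y, M ≤ P y)
    (hs : c0⁻¹ * (q * (M ^ (-((q - 1) / 2)) * m ^ (-((q + 3) / 2)))
        * ∫ y : E3, (1 + ‖y‖ ^ 2) ^ (-((q + 1) / 2)) * ‖y‖⁻¹) ≤ 1) :
    ∃ u : E3 → ℝ, Continuous u ∧ ∀ x, P x ≤ u x ∧ u x = P x + c0⁻¹ * WW (fun y => u y ^ (-q)) x := by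
  have hc0 := c0_pos
  have hpos : ∀ y, 0 < P y := fun y => hM.trans_le (hPM y)
  let U : BoundedContinuousFunction E3 ℝ → E3 → ℝ := fun v y => P y + (1 + ‖y‖ ^ 2) * max (v y) 0
  have hU : ∀ v y, P y ≤ U v y := fun v y => by
    have : 0 ≤ (1 + ‖y‖ ^ 2) * max (v y) 0 := by positivity
    simp only [U]; linarith
  have hUc : ∀ v, Continuous (U v) := fun v => by
    have := v.continuous
    simp only [U]; fun_prop
  let f : BoundedContinuousFunction E3 ℝ → E3 → ℝ := fun v y => U v y ^ (-q)
  have hfc : ∀ v, Continuous (f v) := fun v =>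
    (hUc v).rpow_const fun y => Or.inl ((hpos y).trans_le (hU v y)).ne'
  have hfn : ∀ v y, 0 ≤ f v y := fun v y => rpow_nonneg ((hpos y).le.trans (hU v y)) _
  have hfa : ∀ v y, |f v y| ≤ m ^ (-q) * (1 + ‖y‖ ^ 2) ^ (-q) := fun v y => by
    rw [abs_of_nonneg (hfn v y), ← mul_rpow hm.le (by positivity)]
    exact rpow_le_rpow_of_nonpos (by positivity) ((hP y).trans (hU v y)) (by linarith)
  have hWc : ∀ v, Continuous (WW (f v)) := fun v =>
    (WW_contDiff (n := 0) (contDiff_zero.2 (hfc v)) hq (hfa v)).continuous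
  have hWn : ∀ v x, 0 ≤ WW (f v) x := fun v x =>
    integral_nonneg fun y => mul_nonneg (hfn v y) (KK_nonneg x y)
  have hWb : ∀ v x, WW (f v) x ≤ ‖x‖ ^ 2 / 2 * ∫ y, |f v y| * ‖y‖⁻¹ := fun v x => by
    have := WW_sub_bound (g := fun _ => 0) (b := fun y => |f v y|) (hfc v) continuous_const hq (hfa v)
      (fun y => by rw [abs_zero]; positivity) (fun y => by simp) (fint (hfc v) hq (hfa v)) x
    have h0 : WW (fun _ => 0) x = 0 := by simp [WW]
    rw [h0, sub_zero, abs_of_nonneg (hWn v x)] at this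
    exact this
  have hI0 : ∀ v, 0 ≤ ∫ y, |f v y| * ‖y‖⁻¹ := fun v => integral_nonneg fun y => by positivity
  let Φ : BoundedContinuousFunction E3 ℝ → BoundedContinuousFunction E3 ℝ := fun v =>
    BoundedContinuousFunction.ofNormedAddCommGroup (fun x => c0⁻¹ * WW (f v) x * (1 + ‖x‖ ^ 2)⁻¹)
      (by
        have := hWc v
        have h2 : Continuous fun x : E3 => (1 + ‖x‖ ^ 2)⁻¹ :=
          Continuous.inv₀ (by fun_prop) fun x => by positivity
        fun_prop)
      (c0⁻¹ * ∫ y, |f v y| * ‖y‖⁻¹)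
      (fun x => by
        rw [Real.norm_of_nonneg (mul_nonneg (mul_nonneg (by positivity) (hWn v x)) (by positivity)), mul_assoc]
        refine mul_le_mul_of_nonneg_left ?_ (by positivity)
        rw [← div_eq_mul_inv, div_le_iff₀ (by positivity)]
        refine (hWb v x).trans ?_
        rw [mul_comm]
        refine mul_le_mul_of_nonneg_left ?_ (hI0 v)
        nlinarith [sq_nonneg ‖x‖])
  have hΦ : ∀ v x, Φ v x = c0⁻¹ * WW (f v) x * (1 + ‖x‖ ^ 2)⁻¹ := fun v x => rfl
  set J := ∫ y : E3, (1 + ‖y‖ ^ 2) ^ (-((q + 1) / 2)) * ‖y‖⁻¹ with hJ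
  set H := q * (M ^ (-((q - 1) / 2)) * m ^ (-((q + 3) / 2))) with hH
  have hlip : ∀ v w, dist (Φ v) (Φ w) ≤ (1/2) * dist v w := by
    intro v w
    rw [BoundedContinuousFunction.dist_le (by positivity)]
    intro x
    have hd : ∀ y, |f v y - f w y| ≤ H * dist v w * (1 + ‖y‖ ^ 2) ^ (-((q + 1) / 2)) := by
      intro y
      refine (rpow_lip (by linarith) (hpos y) (hU v y) (hU w y)).trans ?_
      have h1 : |U v y - U w y| ≤ (1 + ‖y‖ ^ 2) * dist v w := by
        simp only [U]
        rw [add_sub_add_left_eq_sub, ← mul_sub, abs_mul, abs_of_pos (by positivity)]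
        gcongr
        refine (abs_max_sub_max_le_abs _ _ _).trans ?_
        exact BoundedContinuousFunction.dist_coe_le_dist (f := v) (g := w) y
      have h2 : P y ^ (-q - 1) ≤ M ^ (-((q - 1) / 2)) * (m ^ (-((q + 3) / 2)) * (1 + ‖y‖ ^ 2) ^ (-((q + 3) / 2))) := by
        rw [show -q - 1 = -((q - 1) / 2) + -((q + 3) / 2) by ring, rpow_add (hpos y),
          ← mul_rpow hm.le (by positivity)]
        have i1 := rpow_le_rpow_of_nonpos hM (hPM y) (z := -((q - 1) / 2)) (by linarith)
        have i2 := rpow_le_rpow_of_nonpos (by positivity) (hP y) (z := -((q + 3) / 2)) (by linarith)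
        exact mul_le_mul i1 i2 (rpow_nonneg (hpos y).le _) (rpow_nonneg hM.le _)
      have h3 : (1 + ‖y‖ ^ 2) ^ (-((q + 1) / 2)) = (1 + ‖y‖ ^ 2) ^ (-((q + 3) / 2)) * (1 + ‖y‖ ^ 2) := by
        rw [show -((q + 1) / 2) = -((q + 3) / 2) + 1 by ring, rpow_add (by positivity), rpow_one]
      rw [h3]
      have hq0 : 0 < q := by linarith
      calc _ ≤ q * (M ^ (-((q - 1) / 2)) * (m ^ (-((q + 3) / 2)) * (1 + ‖y‖ ^ 2) ^ (-((q + 3) / 2)))) *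
            ((1 + ‖y‖ ^ 2) * dist v w) := by
            refine mul_le_mul (mul_le_mul_of_nonneg_left h2 hq0.le) h1 (abs_nonneg _) ?_
            positivity
        _ = _ := by rw [hH]; ring
    have hb := WW_sub_bound (hfc v) (hfc w) hq (hfa v) (hfa w) hd
      (by
        simp only [mul_assoc]
        exact ((wt2_integrable (s := (q + 1) / 2) (by linarith)).const_mul _).const_mul _) x
    simp only [mul_assoc (H * dist v w)] at hb
    rw [integral_const_mul, ← hJ] at hb
    have habs : |(1 + ‖x‖ ^ 2)⁻¹| = (1 + ‖x‖ ^ 2)⁻¹ := abs_of_pos (by positivity)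
    rw [Real.dist_eq, hΦ, hΦ, ← sub_mul, ← mul_sub, abs_mul, abs_mul, abs_of_pos (inv_pos.2 hc0),
      habs, ← div_eq_mul_inv, div_le_iff₀ (by positivity)]
    calc _ ≤ c0⁻¹ * (‖x‖ ^ 2 / 2 * (H * dist v w * J)) := by gcongr
      _ = (c0⁻¹ * (H * J)) * (‖x‖ ^ 2 / 2 * dist v w) := by ring
      _ ≤ 1 * (‖x‖ ^ 2 / 2 * dist v w) := by gcongr
      _ ≤ _ := by nlinarith [dist_nonneg (x := v) (y := w)]
  have hcon : ContractingWith (1/2 : NNReal) Φ := by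
    refine ⟨by rw [← NNReal.coe_lt_coe]; norm_num, LipschitzWith.of_dist_le_mul fun v w => ?_⟩
    simpa using hlip v w
  set v := hcon.fixedPoint with hv
  have hfix : Φ v = v := hcon.fixedPoint_isFixedPt
  have hvx : ∀ x, v x = c0⁻¹ * WW (f v) x * (1 + ‖x‖ ^ 2)⁻¹ := fun x => by rw [← hΦ, hfix]
  refine ⟨U v, hUc v, fun x => ⟨hU v x, ?_⟩⟩
  have hvn : 0 ≤ v x := by
    rw [hvx]
    exact mul_nonneg (mul_nonneg (by positivity) (hWn v x)) (by positivity)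
  have : U v x = P x + (1 + ‖x‖ ^ 2) * v x := by simp only [U]; rw [max_eq_left hvn]
  rw [this, hvx]
  have h1 : (1 + ‖x‖ ^ 2) ≠ 0 := by positivity
  change _ = P x + c0⁻¹ * WW (f v) x
  field_simp

theorem laplacian_quad (M : ℝ) (c : Fin 3 → ℝ) :
    laplacian (laplacian (fun x : E3 => M + ∑ i, c i * (x i) ^ 2)) = 0 := by
  have hd : ∀ x : E3, HasFDerivAt (fun x : E3 => M + ∑ i, c i * (x i) ^ 2)
      (∑ i, (2 * c i * x i) • (EuclideanSpace.proj (𝕜 := ℝ) i : E3 →L[ℝ] ℝ)) x := by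
    intro x
    refine HasFDerivAt.const_add _ (HasFDerivAt.fun_sum fun i _ => ?_)
    have h1 : HasFDerivAt (fun x : E3 => x i) (EuclideanSpace.proj (𝕜 := ℝ) i : E3 →L[ℝ] ℝ) x :=
      (EuclideanSpace.proj (𝕜 := ℝ) i : E3 →L[ℝ] ℝ).hasFDerivAt
    refine ((h1.pow 2).const_mul (c i)).congr_fderiv ?_
    ext v
    simp
    ring
  have hd2 : ∀ x : E3, HasFDerivAt (fun x : E3 => ∑ i, (2 * c i * x i) • (EuclideanSpace.proj (𝕜 := ℝ) i : E3 →L[ℝ] ℝ))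
      (∑ i, ((2 * c i) • (EuclideanSpace.proj (𝕜 := ℝ) i : E3 →L[ℝ] ℝ)).smulRight
        (EuclideanSpace.proj (𝕜 := ℝ) i : E3 →L[ℝ] ℝ)) x := by
    intro x
    refine (HasFDerivAt.fun_sum fun i _ => ?_)
    have h1 : HasFDerivAt (fun x : E3 => x i) (EuclideanSpace.proj (𝕜 := ℝ) i : E3 →L[ℝ] ℝ) x :=
      (EuclideanSpace.proj (𝕜 := ℝ) i : E3 →L[ℝ] ℝ).hasFDerivAt
    have h2 : HasFDerivAt (fun x : E3 => 2 * c i * x i)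
      ((2 * c i) • (EuclideanSpace.proj (𝕜 := ℝ) i : E3 →L[ℝ] ℝ)) x := h1.const_mul (2 * c i)
    exact h2.smul_const (EuclideanSpace.proj (𝕜 := ℝ) i : E3 →L[ℝ] ℝ)
  have e1 := funext fun x => (hd x).fderiv
  have e2 : laplacian (fun x : E3 => M + ∑ i, c i * (x i) ^ 2) = fun _ => trL (∑ i, ((2 * c i) • (EuclideanSpace.proj (𝕜 := ℝ) i : E3 →L[ℝ] ℝ)).smulRight
        (EuclideanSpace.proj (𝕜 := ℝ) i : E3 →L[ℝ] ℝ)) := by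
    ext1 x
    rw [laplacian_eq, e1, (hd2 x).fderiv]
  rw [e2]
  ext1 x
  rw [laplacian_eq]
  simp

theorem contDiff_quad (M : ℝ) (c : Fin 3 → ℝ) {n : ℕ} :
    ContDiff ℝ n (fun x : E3 => M + ∑ i, c i * (x i) ^ 2) := by
  fun_prop

instance cocompact_cg : (cocompact E3).IsCountablyGenerated := by
  rw [← Metric.cobounded_eq_cocompact, ← comap_norm_atTop]
  infer_instance

theorem WW_o {f : E3 → ℝ} {A q : ℝ} (hf : Continuous f) (hq : 1 < q)
    (ha : ∀ y, |f y| ≤ A * (1 + ‖y‖ ^ 2) ^ (-q)) :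
    Tendsto (fun x => WW f x * (‖x‖ ^ 2)⁻¹) (cocompact E3) (𝓝 0) := by
  have e : (fun x => WW f x * (‖x‖ ^ 2)⁻¹) = fun x => ∫ y, f y * KK x y * (‖x‖ ^ 2)⁻¹ := by
    ext1 x; rw [integral_mul_const]; rfl
  have hz : (0:ℝ) = ∫ y : E3, (0:ℝ) := by simp
  rw [e, hz]
  refine tendsto_integral_filter_of_dominated_convergence (fun y => |f y| * ‖y‖⁻¹)
    (Eventually.of_forall fun x => (fKint hf hq ha x).aestronglyMeasurable.mul_const _) ?_
    (fint hf hq ha) (Eventually.of_forall fun y => ?_)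
  · refine Eventually.of_forall fun x => ?_
    filter_upwards [ae_ne_zero] with y hy
    rw [norm_mul, norm_mul, Real.norm_of_nonneg (KK_nonneg x y), Real.norm_eq_abs,
      Real.norm_of_nonneg (by positivity), mul_assoc]
    refine mul_le_mul_of_nonneg_left ?_ (abs_nonneg _)
    have h1 : ‖x‖ ^ 2 * (‖x‖ ^ 2)⁻¹ ≤ 1 := mul_inv_le_one
    have h2 : 0 ≤ ‖y‖⁻¹ := by positivity
    calc _ ≤ (‖x‖ ^ 2 / 2 * ‖y‖⁻¹) * (‖x‖ ^ 2)⁻¹ := by gcongr; exact KK_le x hy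
      _ = (‖x‖ ^ 2 * (‖x‖ ^ 2)⁻¹) * (‖y‖⁻¹ / 2) := by ring
      _ ≤ 1 * (‖y‖⁻¹ / 2) := by gcongr
      _ ≤ _ := by linarith
  · have hn : Tendsto (fun x : E3 => ‖x‖⁻¹) (cocompact E3) (𝓝 0) :=
      tendsto_inv_atTop_zero.comp (tendsto_norm_cocompact_atTop)
    have hn2 : Tendsto (fun x : E3 => |f y| * 2 * ‖x‖⁻¹) (cocompact E3) (𝓝 0) := by
      simpa using hn.const_mul (|f y| * 2)
    refine squeeze_zero_norm (fun x => ?_) hn2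
    rw [norm_mul, norm_mul, Real.norm_of_nonneg (KK_nonneg x y), Real.norm_eq_abs,
      Real.norm_of_nonneg (by positivity), mul_assoc, mul_assoc]
    refine mul_le_mul_of_nonneg_left ?_ (abs_nonneg _)
    by_cases hx : x = 0
    · simp [hx]
    · have : 0 < ‖x‖ := norm_pos_iff.2 hx
      calc _ ≤ (2 * ‖x‖) * (‖x‖ ^ 2)⁻¹ := by gcongr; exact KK_le' x y
        _ = _ := by field_simp

theorem liminf_aux {R e : E3 → ℝ} {a b : ℝ} {γ δ : ℝ → E3}
    (he : Tendsto e (cocompact E3) (𝓝 0))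
    (h1 : ∀ᶠ x in cocompact E3, a + e x ≤ R x) (h2 : ∀ᶠ x in cocompact E3, R x ≤ b + e x)
    (hγ : Tendsto γ atTop (cocompact E3)) (hδ : Tendsto δ atTop (cocompact E3))
    (hRγ : Tendsto (fun t => R (γ t)) atTop (𝓝 a)) (hRδ : Tendsto (fun t => R (δ t)) atTop (𝓝 b)) :
    liminf R (cocompact E3) = a ∧ limsup R (cocompact E3) = b := by
  have ea : Tendsto (fun x => a + e x) (cocompact E3) (𝓝 a) := by simpa using he.const_add a
  have eb : Tendsto (fun x => b + e x) (cocompact E3) (𝓝 b) := by simpa using he.const_add b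
  have bA : IsBoundedUnder (· ≤ ·) (cocompact E3) R :=
    eb.isBoundedUnder_le.mono_le h2
  have bB : IsBoundedUnder (· ≥ ·) (cocompact E3) R :=
    ea.isBoundedUnder_ge.mono_ge h1
  constructor
  · refine le_antisymm ?_ ?_
    · refine le_of_forall_gt_imp_ge_of_dense fun c hc => ?_
      refine liminf_le_of_frequently_le ?_ bB
      have : ∃ᶠ t in atTop, R (γ t) ≤ c :=
        ((hRγ.eventually_lt_const hc).mono fun t ht => ht.le).frequently
      exact hγ.frequently this
    · rw [← ea.liminf_eq]
      exact liminf_le_liminf h1 ea.isBoundedUnder_ge bA.isCoboundedUnder_ge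
  · refine le_antisymm ?_ ?_
    · rw [← eb.limsup_eq]
      exact limsup_le_limsup h2 bB.isCoboundedUnder_le eb.isBoundedUnder_le
    · refine le_of_forall_lt_imp_le_of_dense fun c hc => ?_
      refine le_limsup_of_frequently_le ?_ bA
      have : ∃ᶠ t in atTop, c ≤ R (δ t) :=
        ((hRδ.eventually_const_lt hc).mono fun t ht => ht.le).frequently
      exact hδ.frequently this

theorem line_tendsto (p : E3) {d : E3} (hd : d ≠ 0) :
    Tendsto (fun t : ℝ => p + t • d) atTop (cocompact E3) := by
  rw [← Metric.cobounded_eq_cocompact, ← tendsto_norm_atTop_iff_cobounded]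
  have h1 : Tendsto (fun t : ℝ => t * ‖d‖ - ‖p‖) atTop atTop :=
    tendsto_atTop_add_const_right _ _ (tendsto_id.atTop_mul_const (norm_pos_iff.2 hd))
  refine tendsto_atTop_mono' _ ?_ h1
  filter_upwards [eventually_ge_atTop 0] with t ht
  have := norm_sub_le (p + t • d) p
  rw [add_sub_cancel_left, norm_smul, Real.norm_of_nonneg ht] at this
  linarith

theorem exists_M {q L : ℝ} (hq : 1 < q) : ∃ M : ℝ, 1 ≤ M ∧ M ^ (-((q - 1) / 2)) * L ≤ 1 := by
  have h := (tendsto_rpow_neg_atTop (y := (q - 1) / 2) (by linarith)).mul_const L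
  rw [zero_mul] at h
  obtain ⟨M, h1, h2⟩ := ((h.eventually_le_const one_pos).and (eventually_ge_atTop 1)).exists
  exact ⟨M, h2, h1⟩

theorem main_aux
    (q κ₁ κ₂ : ℝ) (hq : 1 < q) (hκ₁ : 0 < κ₁) (hκ : κ₁ < κ₂) :
    ∃ u : EuclideanSpace ℝ (Fin 3) → ℝ,
      ContDiff ℝ 4 u ∧ (∀ x, 0 < u x) ∧
      (∀ x, laplacian (laplacian u) x + (u x) ^ (-q) = 0) ∧
      (¬ ∃ p : EuclideanSpace ℝ (Fin 3), ∀ x y, ‖x - p‖ = ‖y - p‖ → u x = u y) ∧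
      liminf (fun x => u x / ‖x‖ ^ 2) (cocompact (EuclideanSpace ℝ (Fin 3))) = κ₁ ∧
      limsup (fun x => u x / ‖x‖ ^ 2) (cocompact (EuclideanSpace ℝ (Fin 3))) = κ₂ := by
  set m := min 1 κ₁ with hm
  have hm0 : 0 < m := lt_min one_pos hκ₁
  set J := ∫ y : E3, (1 + ‖y‖ ^ 2) ^ (-((q + 1) / 2)) * ‖y‖⁻¹ with hJ
  obtain ⟨M, hM1, hML⟩ := exists_M (q := q) (L := c0⁻¹ * q * m ^ (-((q + 3) / 2)) * J) hq
  let c : Fin 3 → ℝ := ![κ₂, κ₁, κ₁]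
  let Q : E3 → ℝ := fun x => ∑ i, c i * (x i) ^ 2
  let P : E3 → ℝ := fun x => M + ∑ i, c i * (x i) ^ 2
  have hPQ : ∀ x, P x = M + Q x := fun x => rfl
  have hnorm : ∀ x : E3, ‖x‖ ^ 2 = (x 0) ^ 2 + (x 1) ^ 2 + (x 2) ^ 2 := fun x => by
    rw [EuclideanSpace.real_norm_sq_eq, Fin.sum_univ_three]
  have hQe : ∀ x, Q x = κ₂ * (x 0) ^ 2 + κ₁ * (x 1) ^ 2 + κ₁ * (x 2) ^ 2 := fun x => by
    simp [Q, c, Fin.sum_univ_three]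
  have hQ1 : ∀ x, κ₁ * ‖x‖ ^ 2 ≤ Q x := fun x => by
    rw [hnorm, hQe]; nlinarith [sq_nonneg (x 0)]
  have hQ2 : ∀ x, Q x ≤ κ₂ * ‖x‖ ^ 2 := fun x => by
    rw [hnorm, hQe]; nlinarith [sq_nonneg (x 1), sq_nonneg (x 2)]
  have hQc : Continuous Q := by simp only [Q]; fun_prop
  have hQs : ∀ (t : ℝ) x, Q (t • x) = t ^ 2 * Q x := fun t x => by
    simp only [hQe, PiLp.smul_apply, smul_eq_mul]; ring
  have hPc : ∀ {n : ℕ}, ContDiff ℝ n P := contDiff_quad M c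
  have hPM : ∀ y, M ≤ P y := fun y => by
    have := hQ1 y
    rw [hPQ]; nlinarith [sq_nonneg ‖y‖]
  have hP : ∀ y, m * (1 + ‖y‖ ^ 2) ≤ P y := fun y => by
    have h1 := hQ1 y
    have h2 : m ≤ 1 := min_le_left _ _
    have h3 : m ≤ κ₁ := min_le_right _ _
    rw [hPQ]; nlinarith [sq_nonneg ‖y‖]
  obtain ⟨u, huc, hu⟩ := exists_fix hq hm0 (by linarith) (hPc (n := 0)).continuous hP hPM (by
    rw [← hJ]
    refine le_trans (le_of_eq ?_) hML
    ring)
  set f : E3 → ℝ := fun y => u y ^ (-q) with hf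
  have hupos : ∀ x, 0 < u x := fun x => by linarith [hPM x, (hu x).1]
  have hfc : ∀ {n : ℕ}, ContDiff ℝ n u → ContDiff ℝ n f := fun h =>
    h.rpow_const_of_ne fun x => (hupos x).ne'
  have hfa : ∀ y, |f y| ≤ m ^ (-q) * (1 + ‖y‖ ^ 2) ^ (-q) := fun y => by
    rw [abs_of_nonneg (rpow_nonneg (hupos y).le _), ← mul_rpow hm0.le (by positivity)]
    exact rpow_le_rpow_of_nonpos (by positivity) ((hP y).trans (hu y).1) (by linarith)
  have hue : u = fun x => P x + c0⁻¹ * WW f x := funext fun x => (hu x).2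
  have hreg : ∀ n : ℕ, ContDiff ℝ n u := by
    intro n
    induction n with
    | zero => exact contDiff_zero.2 huc
    | succ n ih =>
      rw [hue]
      exact hPc.add (contDiff_const.mul (WW_contDiff (hfc ih) hq hfa))
  have hf4 : ContDiff ℝ 4 f := hfc (hreg 4)
  have hfcont : Continuous f := hf4.continuous
  have hW4 : ContDiff ℝ 4 (WW f) := (WW_contDiff (n := 4) hf4 hq hfa).of_le (by norm_cast)
  have hW2 : ContDiff ℝ 2 (WW f) := hW4.of_le (by norm_num)
  have hLW : ContDiff ℝ 2 (laplacian (WW f)) := contDiff_laplacian (n := 2) hW4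
  have hLP : ContDiff ℝ 2 (laplacian P) := contDiff_laplacian (n := 2) hPc
  have hpde : ∀ x, laplacian (laplacian u) x + (u x) ^ (-q) = 0 := by
    intro x
    have e : laplacian (laplacian u) x = laplacian (laplacian P) x + c0⁻¹ * laplacian (laplacian (WW f)) x := by
      rw [hue, laplacian_add (hPc (n := 2)) (contDiff_const.mul hW2), laplacian_const_mul hW2,
        laplacian_add hLP (contDiff_const.mul hLW), laplacian_const_mul hLW]
    rw [e, WW_bilap hf4 hq hfa, show laplacian (laplacian P) = 0 from laplacian_quad M c]
    have := c0_pos.ne'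
    simp only [Pi.zero_apply, hf]
    field_simp
    ring
  let er : E3 → ℝ := fun x => M * (‖x‖ ^ 2)⁻¹ + c0⁻¹ * (WW f x * (‖x‖ ^ 2)⁻¹)
  have her : Tendsto er (cocompact E3) (𝓝 0) := by
    have hn : Tendsto (fun x : E3 => (‖x‖ ^ 2)⁻¹) (cocompact E3) (𝓝 0) :=
      tendsto_inv_atTop_zero.comp ((tendsto_pow_atTop two_ne_zero).comp tendsto_norm_cocompact_atTop)
    simpa using (hn.const_mul M).add ((WW_o hfcont hq hfa).const_mul c0⁻¹)
  have hur : ∀ x, x ≠ 0 → u x = Q x + er x * ‖x‖ ^ 2 := fun x hx => by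
    have : ‖x‖ ≠ 0 := norm_ne_zero_iff.2 hx
    rw [(hu x).2, hPQ]
    simp only [er]
    field_simp
    ring
  have hne : ∀ᶠ x in cocompact E3, x ≠ 0 := by
    have := (tendsto_norm_cocompact_atTop (E := E3)).eventually_gt_atTop 0
    exact this.mono fun x hx => norm_pos_iff.1 hx
  have hline : ∀ (p d : E3), d ≠ 0 → Tendsto (fun t : ℝ => u (p + t • d) / t ^ 2) atTop (𝓝 (Q d)) := by
    intro p d hd
    have hl := line_tendsto p hd
    have hz : Tendsto (fun t : ℝ => t⁻¹ • p + d) atTop (𝓝 d) := by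
      have := (tendsto_inv_atTop_zero (𝕜 := ℝ)).smul_const p
      simpa using this.add_const d
    have hQz := (hQc.tendsto d).comp hz
    have hnz := (((continuous_norm.pow 2).tendsto d).comp hz)
    have hsum := hQz.add ((her.comp hl).mul hnz)
    rw [zero_mul, add_zero] at hsum
    refine hsum.congr' ?_
    filter_upwards [hl.eventually hne, eventually_gt_atTop 0] with t h1 h2
    have e : p + t • d = t • (t⁻¹ • p + d) := by
      rw [smul_add, smul_smul, mul_inv_cancel₀ h2.ne', one_smul]
    simp only [Function.comp, Pi.pow_apply]
    rw [hur _ h1]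
    have e2 : Q (p + t • d) = t ^ 2 * Q (t⁻¹ • p + d) := by rw [e, hQs]
    have e3 : ‖p + t • d‖ ^ 2 = t ^ 2 * ‖t⁻¹ • p + d‖ ^ 2 := by
      rw [e, norm_smul, mul_pow, Real.norm_of_nonneg h2.le]
    rw [e2, e3]
    field_simp
  let e0 : E3 := EuclideanSpace.single 0 1
  let e1 : E3 := EuclideanSpace.single 1 1
  have n0 : ‖e0‖ = 1 := by simp [e0]
  have n1 : ‖e1‖ = 1 := by simp [e1]
  have z0 : e0 ≠ 0 := by rw [← norm_ne_zero_iff, n0]; exact one_ne_zero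
  have z1 : e1 ≠ 0 := by rw [← norm_ne_zero_iff, n1]; exact one_ne_zero
  have q0 : Q e0 = κ₂ := by rw [hQe]; simp [e0]
  have q1 : Q e1 = κ₁ := by rw [hQe]; simp [e1]
  refine ⟨u, hreg 4, hupos, hpde, ?_, ?_⟩
  · rintro ⟨p, hp⟩
    have h0 := hline p e0 z0
    have h1 := hline p e1 z1
    have he : (fun t : ℝ => u (p + t • e0) / t ^ 2) = fun t : ℝ => u (p + t • e1) / t ^ 2 := by
      ext1 t
      rw [hp (p + t • e0) (p + t • e1) (by simp [norm_smul, n0, n1])]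
    rw [he] at h0
    have := tendsto_nhds_unique h0 h1
    rw [q0, q1] at this
    linarith
  · have hR : ∀ d : E3, ‖d‖ = 1 → d ≠ 0 → Tendsto (fun t : ℝ => u (0 + t • d) / ‖0 + t • d‖ ^ 2) atTop (𝓝 (Q d)) := by
      intro d hd hd0
      refine (hline 0 d hd0).congr fun t => ?_
      rw [zero_add, norm_smul, hd, mul_one, Real.norm_eq_abs, sq_abs]
    refine liminf_aux (R := fun x => u x / ‖x‖ ^ 2) her ?_ ?_ (line_tendsto 0 z1) (line_tendsto 0 z0)
      (by rw [← q1]; exact hR e1 n1 z1) (by rw [← q0]; exact hR e0 n0 z0)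
    · filter_upwards [hne] with x hx
      have : 0 < ‖x‖ := norm_pos_iff.2 hx
      rw [le_div_iff₀ (by positivity), hur x hx]
      linarith [hQ1 x]
    · filter_upwards [hne] with x hx
      have : 0 < ‖x‖ := norm_pos_iff.2 hx
      rw [div_le_iff₀ (by positivity), hur x hx]
      linarith [hQ2 x]

/-- **Theorem.** For `q > 1` and `0 < κ₁ < κ₂` there exists a positive `C⁴` solution of
`Δ²u + u^{-q} = 0` on ℝ³ which is not radially symmetric about any point, and with
`liminf_{|x|→∞} u(x)/|x|² = κ₁` and `limsup_{|x|→∞} u(x)/|x|² = κ₂`. -/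
theorem exists_nonradial_solution_quadratic_growth
    (q κ₁ κ₂ : ℝ) (hq : 1 < q) (hκ₁ : 0 < κ₁) (hκ : κ₁ < κ₂) :
    ∃ u : EuclideanSpace ℝ (Fin 3) → ℝ,
      ContDiff ℝ 4 u ∧ (∀ x, 0 < u x) ∧
      (∀ x, laplacian (laplacian u) x + (u x) ^ (-q) = 0) ∧
      (¬ ∃ p : EuclideanSpace ℝ (Fin 3), ∀ x y, ‖x - p‖ = ‖y - p‖ → u x = u y) ∧
      liminf (fun x => u x / ‖x‖ ^ 2) (cocompact (EuclideanSpace ℝ (Fin 3))) = κ₁ ∧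
      limsup (fun x => u x / ‖x‖ ^ 2) (cocompact (EuclideanSpace ℝ (Fin 3))) = κ₂ :=
  main_aux q κ₁ κ₂ hq hκ₁ hκ
end
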